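/- arXiv:1409.2340 — 3 statements merged into one kernel-verified Lean document; each statement's English description precedes it below -/
import Mathlib

section
/- Fix c₀>0 and set s₀=4√(8+c₀²). There exists a constant C>0 depending only on c₀ (independent of α) with the following property: for every α∈[0,1] and β=√(1−α²), if m,n,b:ℝ→ℝ³ solve the self-similar profile system, then there exist a unit vector A⁺=(A₁⁺,A₂⁺,A₃⁺)∈ℝ³ and constants a₁,a₂,a₃∈[0,2π) such that, setting B_j=√(1−(A_j⁺)²) and φ_j(s)=a_j+β∫_{s₀²/4}^{s²/4}√(1+c₀²e^{−2ασ}/σ)dσ for j=1,2,3, for every s≥s₀ and each j∈{1,2,3}: |m_j(s) − A_j⁺ + (2c₀/s)B_j e^{−αs²/4}(α·sin φ_j(s)+β·cos φ_j(s)) + (2c₀²/s²)A_j⁺ e^{−αs²/2}| ≤ C·e^{−αs²/4}/s³; |n_j(s) − B_j sin φ_j(s) − (2c₀α/s)A_j⁺ e^{−αs²/4}| ≤ C·e^{−αs²/4}/s²; and |b_j(s) − B_j cos φ_j(s) − (2c₀β/s)A_j⁺ e^{−αs²/4}| ≤ C·e^{−αs²/4}/s². -/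
/-!
Each coordinate `j` of the frame gives a real row `(m_j, n_j, b_j)` of an orthogonal matrix
(`Row`), so all estimates are scalar. Write `e = exp (-α s²/4)`, `u = 1/s`, `γ = α + iβ` with
`|γ| = 1`, and `w = n + ib`, so that `w' = -i(βs/2) w - c₀ e m` and `m' = c₀ e n`.

A quantity whose derivative is `O(α e uᵏ + e uᵏ⁺²)` has a limit, which it approaches at rate
`e uᵏ⁺¹`: the bound is, up to a factor, the derivative of `-e uᵏ⁺¹`
(`exists_limit_of_gs_bound`). The factor `α` is harmless precisely because it comes from
differentiating `e`, and this is what makes the constant uniform down to `α = 0`.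

*Transverse part* (`Row.exists_transverse`). Put `v = w - 2c₀γ e u m` and
`z = v + 4c₀γ² e u³ m - c₀²γ² (e u)² v̄`. Each correction is the resonance-free primitive of an
oscillating term, obtained by integrating by parts against `e^{-(α ± iβ)s²/4}`; since `|γ| = 1`,
the coefficients stay bounded. What is left is a shift of the angular velocity from
`βs/2` to `βs/2 + βc₀²e²u`, which is the expansion of
`ψ' = (βs/2) √(1 + 4c₀²e²u²)`, the derivative of the phase (`frequency_bounds`). Hence
`(e^{iψ} z)' = O(α e u + e u³)` and `e^{iψ} z` converges to some `Z`, so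
`w = e^{-iψ} Z + 2c₀γ e u m + O(e u²)`.

*Longitudinal part* (`Row.exists_longitudinal`). Integrating `m' = c₀ e n` by parts twice gives
`m` up to `O(e u³)` in terms of `n`, `b` and the limit `A` of `m`; inserting the transverse
expansion produces the claim for `m` (`Row.longitudinal_of_transverse`).

Letting `s → ∞` in `m² + |w|² = 1` gives `|Z| = √(1 - A²)`, and the argument of `Z` is the phase
constant `a`. The transverse equation is handled linearly in `w`, so no lower bound on `|Z|` is
needed. Finally `A` is a unit vector because the orthonormality of the rows of the frame matrix
implies that of its columns.
-/

open Real Filter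

/-- The Serret–Frenet system with curvature `c` and torsion `τ` for
functions `m n b : ℝ → ℝ³`. -/
def SerretFrenet (c τ : ℝ → ℝ) (m n b : ℝ → Fin 3 → ℝ) : Prop :=
  ∀ s : ℝ,
    HasDerivAt m (c s • n s) s ∧
    HasDerivAt n ((-c s) • m s + τ s • b s) s ∧
    HasDerivAt b ((-τ s) • n s) s

/-- The self-similar profile system: Serret–Frenet with curvature
`c₀ e^{-αs²/4}`, torsion `βs/2` where `β = √(1-α²)`, and the canonical
initial conditions. -/
def ProfileSystem (c₀ α : ℝ) (m n b : ℝ → Fin 3 → ℝ) : Prop :=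
  SerretFrenet (fun s => c₀ * Real.exp (-α * s ^ 2 / 4))
    (fun s => Real.sqrt (1 - α ^ 2) * s / 2) m n b ∧
  m 0 = ![1, 0, 0] ∧ n 0 = ![0, 1, 0] ∧ b 0 = ![0, 0, 1]


open intervalIntegral in
/-- The phase function `φ_j(s) = a_j + β ∫_{s₀²/4}^{s²/4} √(1 + c₀² e^{-2ασ}/σ) dσ`. -/
noncomputable def phase (c₀ α aj s : ℝ) : ℝ :=
  aj + Real.sqrt (1 - α ^ 2) *
    ∫ σ in ((4 * Real.sqrt (8 + c₀ ^ 2)) ^ 2 / 4)..(s ^ 2 / 4),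
      Real.sqrt (1 + c₀ ^ 2 * Real.exp (-2 * α * σ) / σ)

/-! ### Limits and rates from weighted derivative bounds -/

/-- The Gaussian weight `e^{-αs²/4}`; the curvature of the profile is `c₀ * gs α s`. -/
noncomputable def gs (α s : ℝ) : ℝ := Real.exp (-α * s ^ 2 / 4)

lemma gs_pos (α s : ℝ) : 0 < gs α s := Real.exp_pos _

lemma gs_le_one {α : ℝ} (hα : 0 ≤ α) (s : ℝ) : gs α s ≤ 1 := by
  unfold gs
  rw [Real.exp_le_one_iff]
  have : 0 ≤ α * s ^ 2 := by positivity
  linarith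

lemma hasDerivAt_gs (α s : ℝ) : HasDerivAt (gs α) (-(α * s / 2) * gs α s) s := by
  unfold gs
  have h : HasDerivAt (fun s : ℝ => -α * s ^ 2 / 4) (-α * (2 * s) / 4) s := by
    simpa using ((hasDerivAt_pow 2 s).const_mul (-α)).div_const 4
  convert h.exp using 1
  ring

lemma hasDerivAt_gs_mul_inv_pow (α : ℝ) {s : ℝ} (hs : 0 < s) (k : ℕ) :
    HasDerivAt (fun t => gs α t * t⁻¹ ^ (k + 1))
      (-(α / 2 * (gs α s * s⁻¹ ^ k) + (k + 1) * (gs α s * s⁻¹ ^ (k + 2)))) s := by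
  have hu : s * s⁻¹ = 1 := mul_inv_cancel₀ hs.ne'
  have h1 : HasDerivAt (fun t : ℝ => t⁻¹) (-(s⁻¹ ^ 2)) s := by
    simpa [inv_pow] using hasDerivAt_inv hs.ne'
  have h := (hasDerivAt_gs α s).mul (h1.pow (k + 1))
  refine h.congr_deriv ?_
  simp only [Pi.pow_apply, Nat.add_sub_cancel, Nat.cast_add, Nat.cast_one]
  linear_combination (-(α / 2) * gs α s * s⁻¹ ^ k) * hu

/-- A function whose derivative is dominated by `-G'`, with `G ≥ 0` and `G → 0`, has a limit, which
it approaches at rate `G`. -/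
lemma exists_limit_of_norm_deriv_le {F : Type*} [NormedAddCommGroup F] [NormedSpace ℝ F]
    [CompleteSpace F] {z z' : ℝ → F} {G g : ℝ → ℝ} {a : ℝ}
    (hz : ∀ s, a ≤ s → HasDerivAt z (z' s) s) (hG : ∀ s, a ≤ s → HasDerivAt G (-g s) s)
    (hle : ∀ s, a ≤ s → ‖z' s‖ ≤ g s) (hG0 : ∀ s, a ≤ s → 0 ≤ G s)
    (hlim : Tendsto G atTop (nhds 0)) :
    ∃ L : F, Tendsto z atTop (nhds L) ∧ ∀ s, a ≤ s → ‖z s - L‖ ≤ G s := by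
  have key : ∀ s t, a ≤ s → s ≤ t → ‖z t - z s‖ ≤ G s - G t := by
    intro s t has hst
    refine image_norm_le_of_norm_deriv_right_le_deriv_boundary'
      (f := fun x => z x - z s) (f' := z') (B := fun x => G s - G x) (B' := g) (a := s) (b := t)
      ?_ ?_ (by simp) ?_ ?_ ?_ ⟨hst, le_rfl⟩
    · intro x hx
      exact ((hz x (has.trans hx.1)).continuousAt.sub continuousAt_const).continuousWithinAt
    · intro x hx
      exact ((hz x (has.trans hx.1)).sub_const _).hasDerivWithinAt
    · intro x hx
      exact (continuousAt_const.sub (hG x (has.trans hx.1)).continuousAt).continuousWithinAt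
    · intro x hx
      simpa using ((hG x (has.trans hx.1)).const_sub (G s)).hasDerivWithinAt
    · intro x hx
      exact hle x (has.trans hx.1)
  have hc : CauchySeq z := by
    rw [Metric.cauchySeq_iff']
    intro ε hε
    obtain ⟨N, hN, hNa⟩ :=
      ((hlim.eventually (gt_mem_nhds hε)).and (eventually_ge_atTop a)).exists
    refine ⟨N, fun t ht => ?_⟩
    rw [dist_eq_norm]
    have := key N t hNa ht
    have := hG0 t (hNa.trans ht)
    linarith
  obtain ⟨L, hL⟩ := cauchySeq_tendsto_of_complete hc
  refine ⟨L, hL, fun s hs => ?_⟩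
  rw [norm_sub_rev]
  refine le_of_tendsto ((hL.sub_const (z s)).norm) ?_
  filter_upwards [eventually_ge_atTop s] with t ht
  have := key s t hs ht
  have := hG0 t (hs.trans ht)
  linarith

/-- The tail estimate behind all convergence statements. The derivative of `e^{-αs²/4} s^{-(k+1)}`
is `-(α/2) e^{-αs²/4} s^{-k} - (k+1) e^{-αs²/4} s^{-(k+2)}`, so a derivative bound weighted in this way
yields a rate whose constant does not depend on `α`. -/
lemma exists_limit_of_gs_bound {F : Type*} [NormedAddCommGroup F] [NormedSpace ℝ F]
    [CompleteSpace F] {z z' : ℝ → F} {α K : ℝ} (hα : 0 ≤ α) (hK : 0 ≤ K) (k : ℕ)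
    (hz : ∀ s, 1 ≤ s → HasDerivAt z (z' s) s)
    (hle : ∀ s, 1 ≤ s → ‖z' s‖ ≤ K * (α * gs α s * s⁻¹ ^ k + gs α s * s⁻¹ ^ (k + 2))) :
    ∃ L : F, Tendsto z atTop (nhds L) ∧
      ∀ s, 1 ≤ s → ‖z s - L‖ ≤ 2 * K * (gs α s * s⁻¹ ^ (k + 1)) := by
  refine exists_limit_of_norm_deriv_le
    (G := fun t => 2 * K * (gs α t * t⁻¹ ^ (k + 1)))
    (g := fun s => 2 * K * (α / 2 * (gs α s * s⁻¹ ^ k) + (k + 1) * (gs α s * s⁻¹ ^ (k + 2))))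
    hz ?_ ?_ ?_ ?_
  · intro s hs
    refine ((hasDerivAt_gs_mul_inv_pow α (by linarith : 0 < s) k).const_mul (2 * K)).congr_deriv ?_
    ring
  · intro s hs
    refine (hle s hs).trans ?_
    have h0 : 0 ≤ gs α s * s⁻¹ ^ (k + 2) := by have := gs_pos α s; positivity
    have h1 : 0 ≤ K * (gs α s * s⁻¹ ^ (k + 2)) := by positivity
    have h2 : 0 ≤ (k : ℝ) * (K * (gs α s * s⁻¹ ^ (k + 2))) := by positivity
    nlinarith
  · intro s hs
    have := gs_pos α s
    positivity
  · have h : Tendsto (fun t : ℝ => 2 * K * t⁻¹ ^ (k + 1)) atTop (nhds 0) := by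
      have := (tendsto_inv_atTop_zero (𝕜 := ℝ)).pow (k + 1)
      simpa using this.const_mul (2 * K)
    refine squeeze_zero' ?_ ?_ h
    · filter_upwards [eventually_ge_atTop (1 : ℝ)] with t ht
      have := gs_pos α t
      positivity
    · filter_upwards [eventually_ge_atTop (1 : ℝ)] with t ht
      have h1 := gs_le_one hα t
      have : 0 ≤ t⁻¹ ^ (k + 1) := by positivity
      gcongr
      exact mul_le_of_le_one_left this h1

/-! ### Rows of the frame -/

/-- One coordinate of the frame `(m, n, b)`: a scalar solution of the Serret–Frenet equations with
curvature `c₀ e^{-αs²/4}` and torsion `βs/2`, lying on the unit sphere. Here `α` and `β` are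
independent parameters; `α² + β² = 1` is assumed where needed. -/
structure Row (c₀ α β : ℝ) (m n b : ℝ → ℝ) : Prop where
  dm : ∀ s, HasDerivAt m (c₀ * gs α s * n s) s
  dn : ∀ s, HasDerivAt n (-(c₀ * gs α s * m s) + β * s / 2 * b s) s
  db : ∀ s, HasDerivAt b (-(β * s / 2 * n s)) s
  sq : ∀ s, m s ^ 2 + n s ^ 2 + b s ^ 2 = 1

namespace Row

variable {c₀ α β : ℝ} {m n b ψ : ℝ → ℝ}

lemma abs_m_le (h : Row c₀ α β m n b) (s : ℝ) : |m s| ≤ 1 :=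
  abs_le_one_iff_mul_self_le_one.2 (by nlinarith [h.sq s, sq_nonneg (n s), sq_nonneg (b s)])

lemma abs_n_le (h : Row c₀ α β m n b) (s : ℝ) : |n s| ≤ 1 :=
  abs_le_one_iff_mul_self_le_one.2 (by nlinarith [h.sq s, sq_nonneg (m s), sq_nonneg (b s)])

lemma abs_b_le (h : Row c₀ α β m n b) (s : ℝ) : |b s| ≤ 1 :=
  abs_le_one_iff_mul_self_le_one.2 (by nlinarith [h.sq s, sq_nonneg (n s), sq_nonneg (m s)])

end Row

/-- The derivative of the phase is `βs/2` up to `O(1/s)`, and `βs/2 + βc₀²e²/s` up to `O(e s⁻³)`. -/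
lemma frequency_bounds {β c₀ e s : ℝ} (hβ : 0 ≤ β) (hβ1 : β ≤ 1) (hs : 1 ≤ s) (he : 0 ≤ e)
    (he1 : e ≤ 1) :
    |β * (s / 2) * √(1 + 4 * c₀ ^ 2 * e ^ 2 * s⁻¹ ^ 2) - β * s / 2| ≤ c₀ ^ 2 * s⁻¹ ∧
    |β * (s / 2) * √(1 + 4 * c₀ ^ 2 * e ^ 2 * s⁻¹ ^ 2) - β * s / 2 - β * c₀ ^ 2 * e ^ 2 * s⁻¹| ≤
      2 * c₀ ^ 4 * e * s⁻¹ ^ 3 := by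
  have hu : s * s⁻¹ = 1 := mul_inv_cancel₀ (by linarith)
  have hu0 : 0 < s⁻¹ := by positivity
  set u := s⁻¹ with hudef
  set x := 4 * c₀ ^ 2 * e ^ 2 * u ^ 2 with hx
  have hx0 : 0 ≤ x := by positivity
  have h1 : √(1 + x) ≤ 1 + x / 2 := Real.sqrt_le_iff.2 ⟨by positivity, by nlinarith⟩
  have h2 : 1 ≤ √(1 + x) := Real.one_le_sqrt.2 (by linarith)
  have h4 : √(1 + x) ^ 2 = 1 + x := Real.sq_sqrt (by linarith)
  have h3 : 1 + x / 2 - x ^ 2 / 4 ≤ √(1 + x) := by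
    nlinarith [mul_nonneg hx0 (sub_nonneg.2 h2), mul_nonneg hx0 (sub_nonneg.2 h1)]
  have e2 : e ^ 2 ≤ 1 := pow_le_one₀ he he1
  have e4 : e ^ 4 ≤ e := by
    calc e ^ 4 = e * e ^ 3 := by ring
      _ ≤ e * 1 := by gcongr; exact pow_le_one₀ he he1
      _ = e := mul_one e
  have hsx : s * x = 4 * c₀ ^ 2 * e ^ 2 * u := by
    rw [hx]; linear_combination 4 * c₀ ^ 2 * e ^ 2 * u * hu
  have hsx2 : s * x ^ 2 = 16 * c₀ ^ 4 * e ^ 4 * u ^ 3 := by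
    rw [hx]; linear_combination 16 * c₀ ^ 4 * e ^ 4 * u ^ 3 * hu
  have hs0 : 0 ≤ s := by linarith
  constructor
  · have E : β * (s / 2) * √(1 + x) - β * s / 2 = β * (s / 2) * (√(1 + x) - 1) := by ring
    rw [E, abs_of_nonneg (mul_nonneg (by positivity) (by linarith))]
    calc β * (s / 2) * (√(1 + x) - 1) ≤ 1 * (s / 2) * (x / 2) := by
          gcongr; linarith
      _ = c₀ ^ 2 * (e ^ 2) * u := by linear_combination hsx / 4
      _ ≤ c₀ ^ 2 * 1 * u := by gcongr
      _ = _ := by ring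
  · have E : β * (s / 2) * √(1 + x) - β * s / 2 - β * c₀ ^ 2 * e ^ 2 * u
        = -(β * (s / 2) * (1 + x / 2 - √(1 + x))) := by linear_combination (β / 4) * hsx
    rw [E, abs_neg, abs_of_nonneg (mul_nonneg (by positivity) (by linarith))]
    calc β * (s / 2) * (1 + x / 2 - √(1 + x)) ≤ 1 * (s / 2) * (x ^ 2 / 4) := by
          gcongr; linarith
      _ = 2 * c₀ ^ 4 * e ^ 4 * u ^ 3 := by linear_combination hsx2 / 8
      _ ≤ _ := by gcongr

/-! ### Transverse components -/

namespace Row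
variable {c₀ α β : ℝ} {m n b ψ : ℝ → ℝ}

lemma norm_transverse_le {w γ : ℂ} {c₀ e u m : ℝ} (hw : ‖w‖ ≤ 2) (hγ : ‖γ‖ = 1) (hc₀ : 0 < c₀)
    (he : 0 ≤ e) (he1 : e ≤ 1) (hu : 0 ≤ u) (hu1 : u ≤ 1) (hm : |m| ≤ 1) :
    ‖w - 2 * c₀ * γ * ((e * u : ℝ) * m)‖ ≤ 2 + 2 * c₀ := by
  refine (norm_sub_le _ _).trans (add_le_add hw ?_)
  simp only [norm_mul, Complex.norm_real, Complex.norm_ofNat, Real.norm_eq_abs, hγ,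
    abs_of_pos hc₀, abs_of_nonneg he, abs_of_nonneg hu]
  calc 2 * c₀ * 1 * (e * u * |m|) ≤ 2 * c₀ * 1 * (1 * 1 * 1) := by gcongr
    _ = 2 * c₀ := by ring

/-- Size of the normal-form correction `z - v`; `v'` stands for the conjugate of `v`. -/
lemma norm_correction_le {c₀ e u m : ℝ} {v' γ : ℂ} (hc₀ : 0 < c₀) (he : 0 ≤ e) (he1 : e ≤ 1)
    (hu : 0 ≤ u) (hu1 : u ≤ 1) (hm : |m| ≤ 1) (hγ : ‖γ‖ = 1) (hv' : ‖v'‖ ≤ 2 + 2 * c₀) :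
    ‖(e * u ^ 2 * (4 * c₀ * γ ^ 2 * m * u - c₀ ^ 2 * γ ^ 2 * e * v') : ℂ)‖
      ≤ e * u ^ 2 * (4 * c₀ + c₀ ^ 2 * (2 + 2 * c₀)) := by
  rw [norm_mul]
  have hB : ‖(e * u ^ 2 : ℂ)‖ = e * u ^ 2 := by
    simp [abs_of_nonneg he, abs_of_nonneg hu]
  rw [hB]
  gcongr
  refine (norm_sub_le _ _).trans (add_le_add ?_ ?_)
  · simp only [norm_mul, norm_pow, Complex.norm_real, Complex.norm_ofNat,
      Real.norm_eq_abs, abs_of_pos hc₀, abs_of_nonneg hu, hγ]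
    calc 4 * c₀ * 1 ^ 2 * |m| * u ≤ 4 * c₀ * 1 ^ 2 * 1 * 1 := by gcongr
      _ = _ := by ring
  · simp only [norm_mul, norm_pow, Complex.norm_real,
      Real.norm_eq_abs, abs_of_pos hc₀, abs_of_nonneg he, hγ]
    calc c₀ ^ 2 * 1 ^ 2 * e * ‖v'‖ ≤ c₀ ^ 2 * 1 ^ 2 * 1 * (2 + 2 * c₀) := by gcongr
      _ = _ := by ring

/-- Bound for the right-hand side of `normal_form_identity`. Here `v'`, `γ'` stand for the
conjugates of `v`, `γ`, and `δ₁`, `δ₂` for the phase velocity minus its one-term and two-term expansions. -/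
lemma remainder_bound {α c₀ e u m n δ₁ δ₂ : ℝ} {v v' γ γ' : ℂ} (hα : 0 ≤ α)
    (hc₀ : 0 < c₀) (he : 0 ≤ e) (he1 : e ≤ 1) (hu : 0 ≤ u) (hu1 : u ≤ 1)
    (hm : |m| ≤ 1) (hn : |n| ≤ 1) (hγ : ‖γ‖ = 1) (hγ' : ‖γ'‖ = 1)
    (hv : ‖v‖ ≤ 2 + 2 * c₀) (hv' : ‖v'‖ ≤ 2 + 2 * c₀)
    (hδ₁ : |δ₁| ≤ c₀ ^ 2 * u) (hδ₂ : |δ₂| ≤ 2 * c₀ ^ 4 * e * u ^ 3) :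
    ‖α * e * u * (-(c₀ ^ 2 * e * v) - 4 * c₀ ^ 3 * e ^ 2 * γ * m * u)
      + e * u ^ 3 * (-(12 * c₀ * γ ^ 2 * m * u) + 4 * c₀ ^ 2 * γ ^ 2 * e * n
          + 2 * c₀ ^ 2 * γ ^ 2 * e * v'
          - c₀ ^ 2 * γ ^ 2 * e ^ 2 * (2 * c₀ * γ' * m * u - 2 * c₀ ^ 2 * e * γ' * n))
      + Complex.I * δ₁ * (e * u ^ 2 * (4 * c₀ * γ ^ 2 * m * u - c₀ ^ 2 * γ ^ 2 * e * v'))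
      + Complex.I * δ₂ * v‖
    ≤ 100 * (1 + c₀) ^ 5 * (α * e * u + e * u ^ 3) := by
  have hc : 0 ≤ c₀ := hc₀.le
  have hX : ‖(-(c₀ ^ 2 * e * v) - 4 * c₀ ^ 3 * e ^ 2 * γ * m * u : ℂ)‖
      ≤ c₀ ^ 2 * (2 + 2 * c₀) + 4 * c₀ ^ 3 := by
    refine (norm_sub_le _ _).trans (add_le_add ?_ ?_)
    · simp only [norm_neg, norm_mul, norm_pow, Complex.norm_real, Real.norm_eq_abs,
        abs_of_pos hc₀, abs_of_nonneg he]
      calc c₀ ^ 2 * e * ‖v‖ ≤ c₀ ^ 2 * 1 * (2 + 2 * c₀) := by gcongr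
        _ = _ := by ring
    · simp only [norm_mul, norm_pow, Complex.norm_real, Complex.norm_ofNat, Real.norm_eq_abs,
        abs_of_pos hc₀, abs_of_nonneg he, abs_of_nonneg hu, hγ]
      calc 4 * c₀ ^ 3 * e ^ 2 * 1 * |m| * u ≤ 4 * c₀ ^ 3 * 1 ^ 2 * 1 * 1 * 1 := by gcongr
        _ = _ := by ring
  have hρ : ‖(2 * c₀ * γ' * m * u - 2 * c₀ ^ 2 * e * γ' * n : ℂ)‖ ≤ 2 * c₀ + 2 * c₀ ^ 2 := by
    refine (norm_sub_le _ _).trans (add_le_add ?_ ?_)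
    · simp only [norm_mul, Complex.norm_real, Complex.norm_ofNat, Real.norm_eq_abs,
        abs_of_pos hc₀, abs_of_nonneg hu, hγ']
      calc 2 * c₀ * 1 * |m| * u ≤ 2 * c₀ * 1 * 1 * 1 := by gcongr
        _ = _ := by ring
    · simp only [norm_mul, norm_pow, Complex.norm_real, Complex.norm_ofNat, Real.norm_eq_abs,
        abs_of_pos hc₀, abs_of_nonneg he, hγ']
      calc 2 * c₀ ^ 2 * e * 1 * |n| ≤ 2 * c₀ ^ 2 * 1 * 1 * 1 := by gcongr
        _ = _ := by ring
  have hY : ‖(-(12 * c₀ * γ ^ 2 * m * u) + 4 * c₀ ^ 2 * γ ^ 2 * e * n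
          + 2 * c₀ ^ 2 * γ ^ 2 * e * v'
          - c₀ ^ 2 * γ ^ 2 * e ^ 2 * (2 * c₀ * γ' * m * u - 2 * c₀ ^ 2 * e * γ' * n) : ℂ)‖
      ≤ 12 * c₀ + 4 * c₀ ^ 2 + 2 * c₀ ^ 2 * (2 + 2 * c₀) + c₀ ^ 2 * (2 * c₀ + 2 * c₀ ^ 2) := by
    refine (norm_sub_le _ _).trans (add_le_add ((norm_add_le _ _).trans
      (add_le_add ((norm_add_le _ _).trans (add_le_add ?_ ?_)) ?_)) ?_)
    · simp only [norm_neg, norm_mul, norm_pow, Complex.norm_real, Complex.norm_ofNat,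
        Real.norm_eq_abs, abs_of_pos hc₀, abs_of_nonneg hu, hγ]
      calc 12 * c₀ * 1 ^ 2 * |m| * u ≤ 12 * c₀ * 1 ^ 2 * 1 * 1 := by gcongr
        _ = _ := by ring
    · simp only [norm_mul, norm_pow, Complex.norm_real, Complex.norm_ofNat,
        Real.norm_eq_abs, abs_of_pos hc₀, abs_of_nonneg he, hγ]
      calc 4 * c₀ ^ 2 * 1 ^ 2 * e * |n| ≤ 4 * c₀ ^ 2 * 1 ^ 2 * 1 * 1 := by gcongr
        _ = _ := by ring
    · simp only [norm_mul, norm_pow, Complex.norm_real, Complex.norm_ofNat,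
        Real.norm_eq_abs, abs_of_pos hc₀, abs_of_nonneg he, hγ]
      calc 2 * c₀ ^ 2 * 1 ^ 2 * e * ‖v'‖ ≤ 2 * c₀ ^ 2 * 1 ^ 2 * 1 * (2 + 2 * c₀) := by gcongr
        _ = _ := by ring
    · rw [norm_mul]
      simp only [norm_mul _ (_ ^ 2), norm_pow, Complex.norm_real,
        Real.norm_eq_abs, abs_of_pos hc₀, abs_of_nonneg he, hγ]
      calc c₀ ^ 2 * 1 ^ 2 * e ^ 2 * _ ≤ c₀ ^ 2 * 1 ^ 2 * 1 ^ 2 * (2 * c₀ + 2 * c₀ ^ 2) := by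
            gcongr
        _ = _ := by ring
  have hW := norm_correction_le hc₀ he he1 hu hu1 hm hγ hv'
  have hE : ‖(Complex.I * δ₁ *
      (e * u ^ 2 * (4 * c₀ * γ ^ 2 * m * u - c₀ ^ 2 * γ ^ 2 * e * v')) : ℂ)‖
      ≤ e * u ^ 3 * (c₀ ^ 2 * (4 * c₀ + c₀ ^ 2 * (2 + 2 * c₀))) := by
    rw [norm_mul, norm_mul, Complex.norm_I, one_mul, Complex.norm_real, Real.norm_eq_abs]
    calc |δ₁| * _ ≤ (c₀ ^ 2 * u) * (e * u ^ 2 * (4 * c₀ + c₀ ^ 2 * (2 + 2 * c₀))) := by gcongr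
      _ = _ := by ring
  have hD : ‖(Complex.I * δ₂ * v : ℂ)‖ ≤ e * u ^ 3 * (2 * c₀ ^ 4 * (2 + 2 * c₀)) := by
    rw [norm_mul, norm_mul, Complex.norm_I, one_mul, Complex.norm_real, Real.norm_eq_abs]
    calc |δ₂| * ‖v‖ ≤ (2 * c₀ ^ 4 * e * u ^ 3) * (2 + 2 * c₀) := by gcongr
      _ = _ := by ring
  refine (norm_add_le _ _).trans ((add_le_add_left ((norm_add_le _ _).trans
    (add_le_add_left (norm_add_le _ _) _)) _).trans ?_)
  have hA : ‖(α * e * u : ℂ)‖ = α * e * u := by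
    simp [abs_of_nonneg hα, abs_of_nonneg he, abs_of_nonneg hu]
  have hB : ‖(e * u ^ 3 : ℂ)‖ = e * u ^ 3 := by
    simp [abs_of_nonneg he, abs_of_nonneg hu]
  rw [norm_mul, norm_mul _ (-(12 * c₀ * γ ^ 2 * m * u) + 4 * c₀ ^ 2 * γ ^ 2 * e * n
          + 2 * c₀ ^ 2 * γ ^ 2 * e * v'
          - c₀ ^ 2 * γ ^ 2 * e ^ 2 * (2 * c₀ * γ' * m * u - 2 * c₀ ^ 2 * e * γ' * n) : ℂ), hA, hB]
  have hA0 : 0 ≤ α * e * u := by positivity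
  have hB0 : 0 ≤ e * u ^ 3 := by positivity
  have c1 : c₀ ^ 2 * (2 + 2 * c₀) + 4 * c₀ ^ 3 ≤ 100 * (1 + c₀) ^ 5 := by
    rw [← sub_nonneg]; ring_nf; positivity
  have c2 : (12 * c₀ + 4 * c₀ ^ 2 + 2 * c₀ ^ 2 * (2 + 2 * c₀) + c₀ ^ 2 * (2 * c₀ + 2 * c₀ ^ 2))
      + c₀ ^ 2 * (4 * c₀ + c₀ ^ 2 * (2 + 2 * c₀)) + 2 * c₀ ^ 4 * (2 + 2 * c₀)
      ≤ 100 * (1 + c₀) ^ 5 := by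
    rw [← sub_nonneg]; ring_nf; positivity
  have hX' := mul_le_mul_of_nonneg_left (hX.trans c1) hA0
  have hY' := mul_le_mul_of_nonneg_left hY hB0
  have hc2 := mul_le_mul_of_nonneg_left c2 hB0
  nlinarith

/-- The derivative of `v = w - 2cγ e u m`, where `w = n + ib`. The term `-c e m` of `w'` cancels
because `γγ̄ = 1`. Taking `-I` for `I` gives the equation of the conjugate. -/
lemma transverse_deriv_identity {α β γ c e s u m n b I : ℂ} (hI : I ^ 2 = -1)
    (hγγ : γ * (α - β * I) = 1) (hsu : s * u = 1) :
    (-(c * e * m) + β * s / 2 * b) + -(β * s / 2 * n) * I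
      - 2 * c * γ * (-(α / 2 * e + e * u ^ 2) * m + e * u * (c * e * n))
    = -(I * (β * s / 2) * (n + b * I - 2 * c * γ * (e * u) * m))
      + e * u * (2 * c * γ * m * u - 2 * c ^ 2 * e * γ * n) := by
  linear_combination (β * s / 2 * b) * hI + c * e * m * hγγ - I * β * c * γ * e * m * hsu

/-- The normal form. The left-hand side is `e^{-iψ} (e^{iψ} z)'` for
`z = v + 4cγ² e u³ m - c²γ² (e u)² v̄`, with `φ = ψ'`. The identity `2n = v + v̄ + 4cα e u m`
exposes in `dv` the resonant term `-c²γ e² u v`, whose imaginary part is the frequency shift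
`βc²e²u` carried by `φ`, and the non-resonant term `-c²γ e² u v̄`, removed by the last summand
of `z`. The letters `v'`, `γ'` denote conjugates and `dv`, `dv'` the derivatives of `v`, `v'`. -/
lemma normal_form_identity {α β γ γ' c e s u m n v v' dv dv' I φ : ℂ} (hγ : γ = α + β * I)
    (hγγ : γ * (α - β * I) = 1) (hsu : s * u = 1)
    (hn : 2 * n = v + v' + 4 * c * α * e * u * m)
    (hdv : dv = -(I * (β * s / 2) * v) + e * u * (2 * c * γ * m * u - 2 * c ^ 2 * e * γ * n))
    (hdv' : dv' = I * (β * s / 2) * v' + e * u * (2 * c * γ' * m * u - 2 * c ^ 2 * e * γ' * n)) :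
    I * φ * (v + 4 * c * γ ^ 2 * (e * u ^ 3) * m - c ^ 2 * γ ^ 2 * (e * u) ^ 2 * v')
      + (dv + 4 * c * γ ^ 2 * (-(α / 2 * (e * u ^ 2) + 3 * (e * u ^ 4)) * m
          + e * u ^ 3 * (c * e * n))
        - c ^ 2 * γ ^ 2 * (2 * (e * u) * -(α / 2 * e + e * u ^ 2) * v' + (e * u) ^ 2 * dv'))
    = α * e * u * (-(c ^ 2 * e * v) - 4 * c ^ 3 * e ^ 2 * γ * m * u)
      + e * u ^ 3 * (-(12 * c * γ ^ 2 * m * u) + 4 * c ^ 2 * γ ^ 2 * e * n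
          + 2 * c ^ 2 * γ ^ 2 * e * v'
          - c ^ 2 * γ ^ 2 * e ^ 2 * (2 * c * γ' * m * u - 2 * c ^ 2 * e * γ' * n))
      + I * (φ - β * s / 2) * (e * u ^ 2 * (4 * c * γ ^ 2 * m * u - c ^ 2 * γ ^ 2 * e * v'))
      + I * (φ - β * s / 2 - β * c ^ 2 * e ^ 2 * u) * v := by
  rw [hdv, hdv']
  linear_combination (-(c ^ 2 * e ^ 2 * u * γ)) * hn - c ^ 2 * e ^ 2 * u * v * hγ
    + (-(2 * c * γ * e * u ^ 2 * m) + c ^ 2 * γ * e ^ 2 * u * v') * hγγ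
    + (2 * I * β * c * γ ^ 2 * e * u ^ 2 * m - c ^ 2 * γ ^ 2 * e ^ 2 * u * I * β * v') * hsu

/-- The transverse pair `w = n + ib` equals `e^{-iψ} Z + 2c₀γ e^{-αs²/4} m/s` up to
`O(e^{-αs²/4} s⁻²)`, for a constant `Z`. -/
lemma exists_transverse (h : Row c₀ α β m n b) (hc₀ : 0 < c₀) (hα : 0 ≤ α) (hβ : 0 ≤ β)
    (hαβ : α ^ 2 + β ^ 2 = 1)
    (hψ : ∀ s, 1 ≤ s →
      HasDerivAt ψ (β * (s / 2) * √(1 + 4 * c₀ ^ 2 * gs α s ^ 2 * s⁻¹ ^ 2)) s) :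
    ∃ Z : ℂ, ∀ s, 1 ≤ s →
      ‖(n s + b s * Complex.I) - Complex.exp (-(ψ s * Complex.I)) * Z
        - 2 * c₀ * (α + β * Complex.I) * (gs α s * s⁻¹ : ℝ) * m s‖
      ≤ 300 * (1 + c₀) ^ 5 * (gs α s * s⁻¹ ^ 2) := by
  have hα1 : α ≤ 1 := by nlinarith
  have hβ1 : β ≤ 1 := by nlinarith
  set γ : ℂ := α + β * Complex.I with hγdef
  set γ' : ℂ := α - β * Complex.I with hγ'def
  have hγ : ‖γ‖ = 1 := by
    rw [hγdef, Complex.norm_add_mul_I, hαβ, Real.sqrt_one]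
  have hγ' : ‖γ'‖ = 1 := by
    have : γ' = (α : ℝ) + ((-β : ℝ) : ℂ) * Complex.I := by rw [hγ'def]; push_cast; ring
    rw [this, Complex.norm_add_mul_I, neg_sq, hαβ, Real.sqrt_one]
  have hαβ' : (α : ℂ) ^ 2 + (β : ℂ) ^ 2 = 1 := by exact_mod_cast hαβ
  have hγγ : γ * γ' = 1 := by
    rw [hγdef, hγ'def]; linear_combination hαβ' - β ^ 2 * Complex.I_sq
  set v : ℝ → ℂ := fun t => (n t + b t * Complex.I)
    - 2 * c₀ * γ * ((gs α t * t⁻¹ : ℝ) * m t) with hvdef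
  -- `v'` is the conjugate of `v`.
  set v' : ℝ → ℂ := fun t => (n t - b t * Complex.I)
    - 2 * c₀ * γ' * ((gs α t * t⁻¹ : ℝ) * m t) with hv'def
  set z : ℝ → ℂ := fun t => v t + 4 * c₀ * γ ^ 2 * ((gs α t * t⁻¹ ^ 3 : ℝ) * m t)
    - c₀ ^ 2 * γ ^ 2 * ((gs α t * t⁻¹ : ℝ) ^ 2 * v' t) with hzdef
  have hvn : ∀ s, 1 ≤ s → ‖v s‖ ≤ 2 + 2 * c₀ := by
    intro s hs
    refine norm_transverse_le ?_ hγ hc₀ (gs_pos α s).le (gs_le_one hα s) (by positivity)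
      (inv_le_one_of_one_le₀ hs) (h.abs_m_le s)
    refine (norm_add_le _ _).trans ?_
    have := h.abs_n_le s
    have := h.abs_b_le s
    simp only [norm_mul, Complex.norm_real, Complex.norm_I, Real.norm_eq_abs]
    linarith
  have hvn' : ∀ s, 1 ≤ s → ‖v' s‖ ≤ 2 + 2 * c₀ := by
    intro s hs
    refine norm_transverse_le ?_ hγ' hc₀ (gs_pos α s).le (gs_le_one hα s) (by positivity)
      (inv_le_one_of_one_le₀ hs) (h.abs_m_le s)
    refine (norm_sub_le _ _).trans ?_
    have := h.abs_n_le s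
    have := h.abs_b_le s
    simp only [norm_mul, Complex.norm_real, Complex.norm_I, Real.norm_eq_abs]
    linarith
  have hzv : ∀ s, z s - v s = gs α s * (s⁻¹ : ℝ) ^ 2 * (4 * c₀ * γ ^ 2 * m s * (s⁻¹ : ℝ)
      - c₀ ^ 2 * γ ^ 2 * gs α s * v' s) := by
    intro s; simp only [hzdef]; push_cast; ring
  have hz : ∀ s, 1 ≤ s → ∃ R : ℂ,
      HasDerivAt (fun t => Complex.exp (ψ t * Complex.I) * z t)
        (Complex.exp (ψ s * Complex.I) * R) s ∧
      ‖R‖ ≤ 100 * (1 + c₀) ^ 5 * (α * gs α s * s⁻¹ + gs α s * s⁻¹ ^ 3) := by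
    intro s hs
    have hs0 : 0 < s := by linarith
    obtain ⟨hδ₁, hδ₂⟩ := frequency_bounds (c₀ := c₀) hβ hβ1 hs (gs_pos α s).le (gs_le_one hα s)
    have hsu : (s : ℂ) * ((s⁻¹ : ℝ) : ℂ) = 1 := by
      rw [← Complex.ofReal_mul, mul_inv_cancel₀ hs0.ne', Complex.ofReal_one]
    have hM := (h.dm s).ofReal_comp
    have hN := (h.dn s).ofReal_comp
    have hB := (h.db s).ofReal_comp
    have hq1 : HasDerivAt (fun t => ((gs α t * t⁻¹ : ℝ) : ℂ)) _ s :=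
      (by simpa using hasDerivAt_gs_mul_inv_pow α hs0 0 : HasDerivAt (fun t => gs α t * t⁻¹)
        (-(α / 2 * gs α s + gs α s * s⁻¹ ^ 2)) s).ofReal_comp
    have hq3 := (hasDerivAt_gs_mul_inv_pow α hs0 2).ofReal_comp
    have hγγ' : γ' * (α - β * -Complex.I) = 1 := by
      rw [mul_comm, ← hγγ, hγdef]; ring
    have hvs : v s = n s + b s * Complex.I - 2 * c₀ * γ * (gs α s * (s⁻¹ : ℝ)) * m s := by
      simp only [hvdef]; push_cast; ring
    have hvs' : v' s = n s + b s * -Complex.I - 2 * c₀ * γ' * (gs α s * (s⁻¹ : ℝ)) * m s := by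
      simp only [hv'def]; push_cast; ring
    have e1 := transverse_deriv_identity (α := α) (β := β) (γ := γ) (c := c₀) (e := gs α s)
      (s := s) (u := (s⁻¹ : ℝ)) (m := m s) (n := n s) (b := b s) Complex.I_sq hγγ hsu
    have e2 := transverse_deriv_identity (α := α) (β := β) (γ := γ') (c := c₀) (e := gs α s)
      (s := s) (u := (s⁻¹ : ℝ)) (m := m s) (n := n s) (b := b s) (I := -Complex.I)
      (by simp) hγγ' hsu
    rw [← hvs] at e1
    rw [← hvs'] at e2
    have hdv : HasDerivAt v (-(Complex.I * (β * s / 2) * v s) + gs α s * (s⁻¹ : ℝ) *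
        (2 * c₀ * γ * m s * (s⁻¹ : ℝ) - 2 * c₀ ^ 2 * gs α s * γ * n s)) s :=
      ((hN.add (hB.mul_const Complex.I)).sub ((hq1.mul hM).const_mul (2 * c₀ * γ))).congr_deriv
        (by push_cast at e1 ⊢; linear_combination e1)
    have hdv' : HasDerivAt v' (Complex.I * (β * s / 2) * v' s + gs α s * (s⁻¹ : ℝ) *
        (2 * c₀ * γ' * m s * (s⁻¹ : ℝ) - 2 * c₀ ^ 2 * gs α s * γ' * n s)) s :=
      ((hN.sub (hB.mul_const Complex.I)).sub ((hq1.mul hM).const_mul (2 * c₀ * γ'))).congr_deriv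
        (by push_cast at e2 ⊢; linear_combination e2)
    have hdz : HasDerivAt z _ s := (hdv.add ((hq3.mul hM).const_mul (4 * c₀ * γ ^ 2))).sub
      (((hq1.pow 2).mul hdv').const_mul (c₀ ^ 2 * γ ^ 2))
    have e3 := normal_form_identity (α := α) (β := β) (γ := γ) (γ' := γ') (c := c₀)
      (e := gs α s) (s := s) (n := n s) (I := Complex.I) (u := (s⁻¹ : ℝ)) (m := m s) (v := v s)
      (v' := v' s) (φ := (β * (s / 2) * √(1 + 4 * c₀ ^ 2 * gs α s ^ 2 * s⁻¹ ^ 2) : ℝ))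
      hγdef hγγ hsu (by rw [hvs, hvs', hγdef, hγ'def]; ring) rfl rfl
    have hzs := hzv s
    refine ⟨_, (((hψ s hs).ofReal_comp.mul_const Complex.I).cexp.mul hdz).congr_deriv ?_,
      remainder_bound hα hc₀ (gs_pos α s).le (gs_le_one hα s)
      (by positivity) (inv_le_one_of_one_le₀ hs) (h.abs_m_le s) (h.abs_n_le s) hγ hγ' (hvn s hs)
      (hvn' s hs) hδ₁ hδ₂⟩
    simp only [Pi.pow_apply]
    push_cast at e3 hzs ⊢
    linear_combination Complex.exp (ψ s * Complex.I) * e3 +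
      (Complex.exp (ψ s * Complex.I) * (β * (s / 2) *
        (√(1 + 4 * c₀ ^ 2 * gs α s ^ 2 * s⁻¹ ^ 2) : ℝ) * Complex.I)) * hzs
  choose! R hR hRb using hz
  obtain ⟨Z, -, hZ⟩ := exists_limit_of_gs_bound hα (K := 100 * (1 + c₀) ^ 5) (by positivity) 1
    hR (by
      intro s hs
      rw [norm_mul, Complex.norm_exp_ofReal_mul_I, one_mul]
      simpa using hRb s hs)
  refine ⟨Z, fun s hs => ?_⟩
  have hZs := hZ s hs
  have hE : Complex.exp (-(ψ s * Complex.I)) * Complex.exp (ψ s * Complex.I) = 1 := by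
    rw [← Complex.exp_add]; simp
  have key : (n s + b s * Complex.I) - Complex.exp (-(ψ s * Complex.I)) * Z
        - 2 * c₀ * γ * (gs α s * s⁻¹ : ℝ) * m s
      = Complex.exp (-(ψ s * Complex.I)) * (Complex.exp (ψ s * Complex.I) * z s - Z)
        - (z s - v s) := by
    have : v s = (n s + b s * Complex.I) - 2 * c₀ * γ * (gs α s * s⁻¹ : ℝ) * m s := by
      simp only [hvdef]; ring
    linear_combination -this - z s * hE
  rw [key]
  have hE1 : ‖Complex.exp (-(ψ s * Complex.I))‖ = 1 := by
    have := Complex.norm_exp_ofReal_mul_I (-ψ s)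
    simpa using this
  refine (norm_sub_le _ _).trans ?_
  rw [norm_mul, hE1, one_mul, hzv]
  have hcor := norm_correction_le hc₀ (gs_pos α s).le (gs_le_one hα s) (by positivity)
    (inv_le_one_of_one_le₀ hs) (h.abs_m_le s) hγ (hvn' s hs)
  have hg : 0 ≤ gs α s * s⁻¹ ^ 2 := by have := gs_pos α s; positivity
  have c3 : 4 * c₀ + c₀ ^ 2 * (2 + 2 * c₀) ≤ 100 * (1 + c₀) ^ 5 := by
    rw [← sub_nonneg]; ring_nf; positivity
  have := mul_le_mul_of_nonneg_left c3 hg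
  rw [one_add_one_eq_two] at hZs
  linarith

end Row

/-! ### Longitudinal component -/

namespace Row
variable {c₀ α β : ℝ} {m n b ψ : ℝ → ℝ}

lemma abs_combination_le {p q x y : ℝ} (hp : |p| ≤ 1) (hq : |q| ≤ 1) {r : ℝ}
    (hx : |x| ≤ r) (hy : |y| ≤ r) : |p * x + q * y| ≤ 2 * r := by
  have hr : 0 ≤ r := (abs_nonneg x).trans hx
  calc |p * x + q * y| ≤ |p| * |x| + |q| * |y| := by
        rw [← abs_mul, ← abs_mul]; exact abs_add_le _ _
    _ ≤ 1 * r + 1 * r := by gcongr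
    _ = 2 * r := by ring

/-- The longitudinal component has a limit `A`, approached at rate `e^{-αs²/4}/s`, and two
integrations by parts expand `m - A` up to `O(e^{-αs²/4} s⁻³)`. With `e = e^{-αs²/4}` and `u = 1/s`, the brackets
`αn + βb` and `(α² - β²)n + 2αβb` are the real parts of `γ̄w` and `γ̄²w`. -/
lemma exists_longitudinal (h : Row c₀ α β m n b) (hc₀ : 0 < c₀) (hα : 0 ≤ α) (hβ : 0 ≤ β)
    (hαβ : α ^ 2 + β ^ 2 = 1) :
    ∃ A : ℝ, Tendsto m atTop (nhds A) ∧
      (∀ s, 1 ≤ s → |m s - A| ≤ 20 * (1 + c₀) ^ 2 * (gs α s * s⁻¹)) ∧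
      ∀ s, 1 ≤ s → |m s + 2 * c₀ * (gs α s * s⁻¹) * (α * n s + β * b s)
        - 4 * c₀ * (gs α s * s⁻¹ ^ 3) * ((α ^ 2 - β ^ 2) * n s + 2 * α * β * b s)
        - 2 * c₀ ^ 2 * A * (gs α s * s⁻¹) ^ 2 - A| ≤ 400 * (1 + c₀) ^ 4 * (gs α s * s⁻¹ ^ 3) := by
  have hα1 : α ≤ 1 := by nlinarith
  have hβ1 : β ≤ 1 := by nlinarith
  have aα : |α| ≤ 1 := by rwa [abs_of_nonneg hα]
  have aβ : |β| ≤ 1 := by rwa [abs_of_nonneg hβ]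
  have ap : |α ^ 2 - β ^ 2| ≤ 1 := abs_le.2 ⟨by nlinarith, by nlinarith⟩
  have aq : |2 * α * β| ≤ 1 :=
    abs_le.2 ⟨by nlinarith [mul_nonneg hα hβ], by nlinarith [sq_nonneg (α - β)]⟩
  have hf : ∀ s, |α * n s + β * b s| ≤ 2 := fun s => by
    simpa using abs_combination_le aα aβ (h.abs_n_le s) (h.abs_b_le s)
  have hp : ∀ s, |(α ^ 2 - β ^ 2) * n s + 2 * α * β * b s| ≤ 2 := fun s => by
    simpa using abs_combination_le ap aq (h.abs_n_le s) (h.abs_b_le s)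
  have hq1 : ∀ s, 1 ≤ s → HasDerivAt (fun t => gs α t * t⁻¹)
      (-(α / 2 * gs α s + gs α s * s⁻¹ ^ 2)) s := fun s hs => by
    simpa using hasDerivAt_gs_mul_inv_pow α (by linarith : 0 < s) 0
  have hq3 : ∀ s, 1 ≤ s → HasDerivAt (fun t => gs α t * t⁻¹ ^ 3) _ s := fun s hs =>
    hasDerivAt_gs_mul_inv_pow α (by linarith : 0 < s) 2
  set y : ℝ → ℝ := fun t => m t + 2 * c₀ * ((gs α t * t⁻¹) * (α * n t + β * b t)) with hydef
  have hy : ∀ s, 1 ≤ s → HasDerivAt y (α * gs α s * (-(2 * c₀ ^ 2 * gs α s * m s * s⁻¹))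
      + gs α s * s⁻¹ ^ 2 * (-(2 * c₀ * (α * n s + β * b s)))) s := by
    intro s hs
    have hsu : s * s⁻¹ = 1 := mul_inv_cancel₀ (by linarith)
    refine ((h.dm s).add (((hq1 s hs).mul (((h.dn s).const_mul α).add
      ((h.db s).const_mul β))).const_mul (2 * c₀))).congr_deriv ?_
    simp only [Pi.add_apply]
    linear_combination (-c₀ * gs α s * n s) * hαβ + (c₀ * gs α s * β * (α * b s - β * n s)) * hsu
  obtain ⟨A, hA, hAb⟩ := exists_limit_of_gs_bound hα (K := 4 * (1 + c₀) ^ 2) (by positivity) 0 hy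
    (by
      intro s hs
      have he := (gs_pos α s).le
      have he1 := gs_le_one hα s
      have hu : 0 ≤ s⁻¹ := by positivity
      have hu1 := inv_le_one_of_one_le₀ hs
      have hm := h.abs_m_le s
      rw [Real.norm_eq_abs]
      refine (abs_add_le _ _).trans ?_
      rw [pow_zero, mul_one, zero_add, mul_add (4 * (1 + c₀) ^ 2)]
      refine add_le_add ?_ ?_
      · rw [abs_mul, abs_neg, abs_of_nonneg (by positivity : 0 ≤ α * gs α s),
          mul_comm (4 * (1 + c₀) ^ 2)]
        refine mul_le_mul_of_nonneg_left ?_ (by positivity)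
        rw [abs_mul, abs_mul (2 * c₀ ^ 2 * gs α s), abs_of_nonneg hu,
          abs_of_nonneg (by positivity : 0 ≤ 2 * c₀ ^ 2 * gs α s)]
        calc 2 * c₀ ^ 2 * gs α s * |m s| * s⁻¹ ≤ 2 * c₀ ^ 2 * 1 * 1 * 1 := by gcongr
          _ ≤ _ := by nlinarith
      · rw [abs_mul, abs_neg, abs_of_nonneg (by positivity : 0 ≤ gs α s * s⁻¹ ^ 2),
          mul_comm (4 * (1 + c₀) ^ 2)]
        refine mul_le_mul_of_nonneg_left ?_ (by positivity)
        rw [abs_mul, abs_of_nonneg (by positivity)]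
        calc 2 * c₀ * |α * n s + β * b s| ≤ 2 * c₀ * 2 := by gcongr; exact hf s
          _ ≤ _ := by nlinarith)
  have hmA : ∀ s, 1 ≤ s → |m s - A| ≤ 20 * (1 + c₀) ^ 2 * (gs α s * s⁻¹) := by
    intro s hs
    have hb := hAb s hs
    rw [Real.norm_eq_abs, zero_add, pow_one] at hb
    have hg : 0 ≤ gs α s * s⁻¹ := mul_nonneg (gs_pos α s).le (by positivity)
    have e : m s - A = (y s - A) - 2 * c₀ * ((gs α s * s⁻¹) * (α * n s + β * b s)) := by
      simp only [hydef]; ring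
    rw [e]
    refine (abs_sub _ _).trans ?_
    have : |2 * c₀ * ((gs α s * s⁻¹) * (α * n s + β * b s))| ≤ 2 * c₀ * ((gs α s * s⁻¹) * 2) := by
      rw [abs_mul, abs_mul (gs α s * s⁻¹), abs_of_nonneg hg,
        abs_of_nonneg (by positivity : 0 ≤ 2 * c₀)]
      gcongr
      exact hf s
    nlinarith [mul_nonneg hg hc₀.le, mul_nonneg hg (sq_nonneg c₀)]
  have hinv : ∀ C : ℝ, Tendsto (fun s : ℝ => C * s⁻¹) atTop (nhds 0) := fun C => by
    simpa using (tendsto_inv_atTop_zero (𝕜 := ℝ)).const_mul C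
  have hmlim : Tendsto m atTop (nhds A) := by
    rw [tendsto_iff_norm_sub_tendsto_zero]
    refine squeeze_zero' (Eventually.of_forall fun _ => norm_nonneg _) ?_
      (hinv (20 * (1 + c₀) ^ 2))
    filter_upwards [eventually_ge_atTop (1 : ℝ)] with s hs
    refine (hmA s hs).trans ?_
    gcongr
    exact mul_le_of_le_one_left (by positivity) (gs_le_one hα s)
  have hA1 : |A| ≤ 1 := le_of_tendsto hmlim.abs (Eventually.of_forall h.abs_m_le)
  refine ⟨A, hmlim, hmA, ?_⟩
  -- Second integration by parts; the `A`-term absorbs the mean of `-2c₀²α e² u m`.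
  set y₂ : ℝ → ℝ := fun t => y t - 4 * c₀ * ((gs α t * t⁻¹ ^ 3) *
    ((α ^ 2 - β ^ 2) * n t + 2 * α * β * b t)) - 2 * c₀ ^ 2 * A * (gs α t * t⁻¹) ^ 2 with hy₂def
  have hy₂ : ∀ s, 1 ≤ s → HasDerivAt y₂
      (α * gs α s * s⁻¹ * (-(2 * c₀ ^ 2 * gs α s) * (m s - A))
        + α * gs α s * s⁻¹ ^ 2 * (8 * c₀ ^ 2 * gs α s * s⁻¹ * α * A)
        + gs α s * s⁻¹ ^ 4 * (12 * c₀ * ((α ^ 2 - β ^ 2) * n s + 2 * α * β * b s))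
        + gs α s * s⁻¹ ^ 3 * (4 * c₀ ^ 2 * (α ^ 2 - β ^ 2) * gs α s * (m s - A))) s := by
    intro s hs
    have hsu : s * s⁻¹ = 1 := mul_inv_cancel₀ (by linarith)
    refine (((hy s hs).sub (((hq3 s hs).mul (((h.dn s).const_mul (α ^ 2 - β ^ 2)).add
      ((h.db s).const_mul (2 * α * β)))).const_mul (4 * c₀))).sub
      (((hq1 s hs).pow 2).const_mul (2 * c₀ ^ 2 * A))).congr_deriv ?_
    simp only [Pi.add_apply]
    push_cast
    linear_combination (2 * c₀ * gs α s * s⁻¹ ^ 2 * (α * n s + β * b s)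
      - 4 * c₀ ^ 2 * A * gs α s ^ 2 * s⁻¹ ^ 3) * hαβ
      - 2 * c₀ * β * gs α s * s⁻¹ ^ 2 * ((α ^ 2 - β ^ 2) * b s - 2 * α * β * n s) * hsu
  obtain ⟨L, hL, hLb⟩ := exists_limit_of_gs_bound hα (K := 200 * (1 + c₀) ^ 4) (by positivity) 2
    hy₂ (by
      intro s hs
      have he := (gs_pos α s).le
      have he1 := gs_le_one hα s
      have hu : 0 ≤ s⁻¹ := by positivity
      have hu1 := inv_le_one_of_one_le₀ hs
      have hm := hmA s hs
      rw [Real.norm_eq_abs]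
      have g1 : 0 ≤ α * gs α s * s⁻¹ ^ 2 := by positivity
      have g2 : 0 ≤ gs α s * s⁻¹ ^ 4 := by positivity
      have t1 : |α * gs α s * s⁻¹ * (-(2 * c₀ ^ 2 * gs α s) * (m s - A))|
          ≤ α * gs α s * s⁻¹ ^ 2 * (2 * c₀ ^ 2 * (20 * (1 + c₀) ^ 2)) := by
        rw [abs_mul, abs_mul (-(2 * c₀ ^ 2 * gs α s)), abs_neg,
          abs_of_nonneg (by positivity : 0 ≤ α * gs α s * s⁻¹),
          abs_of_nonneg (by positivity : 0 ≤ 2 * c₀ ^ 2 * gs α s)]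
        calc α * gs α s * s⁻¹ * (2 * c₀ ^ 2 * gs α s * |m s - A|)
            ≤ α * gs α s * s⁻¹ * (2 * c₀ ^ 2 * 1 * (20 * (1 + c₀) ^ 2 * (1 * s⁻¹))) := by
              gcongr; exact hm.trans (by gcongr)
          _ = _ := by ring
      have t2 : |α * gs α s * s⁻¹ ^ 2 * (8 * c₀ ^ 2 * gs α s * s⁻¹ * α * A)|
          ≤ α * gs α s * s⁻¹ ^ 2 * (8 * c₀ ^ 2) := by
        rw [abs_mul, abs_of_nonneg g1]
        refine mul_le_mul_of_nonneg_left ?_ g1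
        rw [abs_mul, abs_of_nonneg (by positivity : 0 ≤ 8 * c₀ ^ 2 * gs α s * s⁻¹ * α)]
        calc 8 * c₀ ^ 2 * gs α s * s⁻¹ * α * |A| ≤ 8 * c₀ ^ 2 * 1 * 1 * 1 * 1 := by gcongr
          _ = _ := by ring
      have t3 : |gs α s * s⁻¹ ^ 4 * (12 * c₀ * ((α ^ 2 - β ^ 2) * n s + 2 * α * β * b s))|
          ≤ gs α s * s⁻¹ ^ 4 * (12 * c₀ * 2) := by
        rw [abs_mul, abs_of_nonneg g2, abs_mul, abs_of_nonneg (by positivity : 0 ≤ 12 * c₀)]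
        gcongr
        exact hp s
      have t4 : |gs α s * s⁻¹ ^ 3 * (4 * c₀ ^ 2 * (α ^ 2 - β ^ 2) * gs α s * (m s - A))|
          ≤ gs α s * s⁻¹ ^ 4 * (4 * c₀ ^ 2 * (20 * (1 + c₀) ^ 2)) := by
        simp only [abs_mul, abs_of_nonneg he, abs_pow, abs_of_nonneg hu, abs_of_pos hc₀,
          abs_of_pos (by norm_num : (0 : ℝ) < 4)]
        calc gs α s * s⁻¹ ^ 3 * (4 * c₀ ^ 2 * |α ^ 2 - β ^ 2| * gs α s * |m s - A|)
            ≤ gs α s * s⁻¹ ^ 3 * (4 * c₀ ^ 2 * 1 * 1 * (20 * (1 + c₀) ^ 2 * (1 * s⁻¹))) := by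
              gcongr; exact hm.trans (by gcongr)
          _ = _ := by ring
      refine (abs_add_le _ _).trans ((add_le_add_left ((abs_add_le _ _).trans
        (add_le_add_left (abs_add_le _ _) _)) _).trans ?_)
      have c1 : 2 * c₀ ^ 2 * (20 * (1 + c₀) ^ 2) + 8 * c₀ ^ 2 ≤ 200 * (1 + c₀) ^ 4 := by
        rw [← sub_nonneg]; ring_nf; positivity
      have c2 : 12 * c₀ * 2 + 4 * c₀ ^ 2 * (20 * (1 + c₀) ^ 2) ≤ 200 * (1 + c₀) ^ 4 := by
        rw [← sub_nonneg]; ring_nf; positivity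
      have := mul_le_mul_of_nonneg_left c1 g1
      have := mul_le_mul_of_nonneg_left c2 g2
      norm_num only at *
      linarith)
  have hLA : L = A := by
    have hq0 : ∀ k, Tendsto (fun s : ℝ => gs α s * s⁻¹ ^ (k + 1)) atTop (nhds 0) := fun k => by
      refine squeeze_zero' ?_ ?_ (hinv 1)
      · filter_upwards [eventually_ge_atTop (1 : ℝ)] with t ht
        have := gs_pos α t
        positivity
      · filter_upwards [eventually_ge_atTop (1 : ℝ)] with t ht
        have := gs_pos α t
        have hu1 := inv_le_one_of_one_le₀ ht
        have : 0 ≤ t⁻¹ := by positivity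
        rw [pow_succ, ← mul_assoc]
        gcongr
        exact mul_le_one₀ (gs_le_one hα t) (by positivity) (pow_le_one₀ this hu1)
    have hzero : Tendsto (fun t => (gs α t * t⁻¹ ^ 3) *
        ((α ^ 2 - β ^ 2) * n t + 2 * α * β * b t)) atTop (nhds 0) := by
      have h2 : Tendsto (fun t => gs α t * t⁻¹ ^ 3 * 2) atTop (nhds 0) := by
        simpa only [zero_mul] using (hq0 2).mul_const 2
      refine squeeze_zero_norm' ?_ h2
      filter_upwards [eventually_ge_atTop (1 : ℝ)] with t ht
      have := gs_pos α t
      rw [norm_mul, Real.norm_eq_abs, Real.norm_eq_abs, abs_of_nonneg (by positivity)]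
      gcongr
      exact hp t
    refine tendsto_nhds_unique hL ?_
    have := (hA.sub (hzero.const_mul (4 * c₀))).sub
      (((hq0 0).pow 2).const_mul (2 * c₀ ^ 2 * A))
    simpa [hy₂def] using this
  intro s hs
  have := hLb s hs
  rw [hLA, Real.norm_eq_abs] at this
  convert this using 1
  · congr 1
    simp only [hy₂def, hydef]
    ring
  · ring

end Row

/-! ### Phase and assembly of a row -/

lemma hasDerivAt_phase (c₀ α a : ℝ) {s : ℝ} (hs : 0 < s) :
    HasDerivAt (phase c₀ α a)
      (√(1 - α ^ 2) * (s / 2) * √(1 + 4 * c₀ ^ 2 * gs α s ^ 2 * s⁻¹ ^ 2)) s := by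
  set f : ℝ → ℝ := fun σ => √(1 + c₀ ^ 2 * Real.exp (-2 * α * σ) / σ) with hf
  have hcont : ContinuousOn f (Set.Ioi 0) := by
    intro x hx
    have hx' : x ≠ 0 := ne_of_gt hx
    exact ContinuousAt.continuousWithinAt (by simp only [hf]; fun_prop (disch := exact hx'))
  have hp : 0 < (4 * √(8 + c₀ ^ 2)) ^ 2 / 4 := by positivity
  have hq : 0 < s ^ 2 / 4 := by positivity
  have hF : HasDerivAt (fun x => ∫ σ in ((4 * √(8 + c₀ ^ 2)) ^ 2 / 4)..x, f σ)
      (f (s ^ 2 / 4)) (s ^ 2 / 4) := by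
    refine intervalIntegral.integral_hasDerivAt_right ?_ ?_ ?_
    · refine (hcont.mono fun x hx => ?_).intervalIntegrable
      exact lt_of_lt_of_le (lt_min hp hq) hx.1
    · exact hcont.stronglyMeasurableAtFilter isOpen_Ioi _ hq
    · exact hcont.continuousAt (Ioi_mem_nhds hq)
  have hs2 : HasDerivAt (fun t : ℝ => t ^ 2 / 4) (s / 2) s := by
    refine ((hasDerivAt_pow 2 s).div_const 4).congr_deriv ?_
    norm_num
    ring
  have hcomp := ((hF.comp s hs2).const_mul (√(1 - α ^ 2))).const_add a
  refine hcomp.congr_deriv ?_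
  have hfs : f (s ^ 2 / 4) = √(1 + 4 * c₀ ^ 2 * gs α s ^ 2 * s⁻¹ ^ 2) := by
    have : Real.exp (-2 * α * (s ^ 2 / 4)) = gs α s ^ 2 := by
      rw [gs, ← Real.exp_nat_mul]
      congr 1
      push_cast
      ring
    simp only [hf, this]
    congr 2
    field_simp
  rw [hfs]
  ring

/-- Writing `Z = ‖Z‖ e^{iθ}`, the shift is `a = π/2 - θ` reduced modulo `2π`. -/
lemma exists_phase_shift (Z : ℂ) : ∃ a ∈ Set.Ico (0 : ℝ) (2 * π), ∀ ψ : ℝ,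
    (Complex.exp (-(ψ * Complex.I)) * Z).re = ‖Z‖ * Real.sin (a + ψ) ∧
    (Complex.exp (-(ψ * Complex.I)) * Z).im = ‖Z‖ * Real.cos (a + ψ) := by
  refine ⟨toIcoMod Real.two_pi_pos 0 (π / 2 - Z.arg), ?_, fun ψ => ?_⟩
  · simpa using toIcoMod_mem_Ico Real.two_pi_pos 0 (π / 2 - Z.arg)
  · set k := toIcoDiv Real.two_pi_pos 0 (π / 2 - Z.arg)
    have ha : toIcoMod Real.two_pi_pos 0 (π / 2 - Z.arg) + ψ
        = π / 2 - (Z.arg - ψ) - k * (2 * π) := by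
      rw [toIcoMod, zsmul_eq_mul]
      ring
    have hZ : Complex.exp (-(ψ * Complex.I)) * Z
        = ‖Z‖ * Complex.exp (((Z.arg - ψ : ℝ) : ℂ) * Complex.I) := by
      conv_lhs => rw [← Complex.norm_mul_exp_arg_mul_I Z]
      rw [mul_left_comm, ← Complex.exp_add]
      congr 2
      push_cast
      ring
    rw [hZ, Complex.re_ofReal_mul, Complex.im_ofReal_mul, Complex.exp_ofReal_mul_I_re,
      Complex.exp_ofReal_mul_I_im, ha, Real.sin_sub_int_mul_two_pi, Real.cos_sub_int_mul_two_pi,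
      Real.sin_pi_div_two_sub, Real.cos_pi_div_two_sub]
    exact ⟨rfl, rfl⟩

/-- Substitution of the transverse expansion into the longitudinal one at a fixed point, with
`e = e^{-αs²/4}`, `u = 1/s`, and `S`, `C` the leading oscillating parts of `n`, `b`. -/
lemma Row.longitudinal_of_transverse {c₀ α β e u A M₀ N₀ B₀ S C : ℝ} (hc₀ : 0 < c₀)
    (hα : 0 ≤ α) (hβ : 0 ≤ β) (hαβ : α ^ 2 + β ^ 2 = 1)
    (he : 0 ≤ e) (he1 : e ≤ 1) (hu : 0 ≤ u) (hN : |N₀| ≤ 1) (hB : |B₀| ≤ 1)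
    (hn : |N₀ - S - 2 * c₀ * α * (e * u) * A| ≤ 340 * (1 + c₀) ^ 5 * (e * u ^ 2))
    (hb : |B₀ - C - 2 * c₀ * β * (e * u) * A| ≤ 340 * (1 + c₀) ^ 5 * (e * u ^ 2))
    (hM : |M₀ + 2 * c₀ * (e * u) * (α * N₀ + β * B₀)
      - 4 * c₀ * (e * u ^ 3) * ((α ^ 2 - β ^ 2) * N₀ + 2 * α * β * B₀)
      - 2 * c₀ ^ 2 * A * (e * u) ^ 2 - A| ≤ 400 * (1 + c₀) ^ 4 * (e * u ^ 3)) :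
    |M₀ - A + 2 * c₀ * (e * u) * (α * S + β * C) + 2 * c₀ ^ 2 * A * (e * u) ^ 2|
      ≤ 2000 * (1 + c₀) ^ 6 * (e * u ^ 3) := by
  have hα1 : α ≤ 1 := by nlinarith
  have hβ1 : β ≤ 1 := by nlinarith
  have hg3 : 0 ≤ e * u ^ 3 := by positivity
  set X := N₀ - S - 2 * c₀ * α * (e * u) * A with hX
  set Y := B₀ - C - 2 * c₀ * β * (e * u) * A with hY
  set P := (α ^ 2 - β ^ 2) * N₀ + 2 * α * β * B₀ with hP
  set M := M₀ + 2 * c₀ * (e * u) * (α * N₀ + β * B₀) - 4 * c₀ * (e * u ^ 3) * P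
        - 2 * c₀ ^ 2 * A * (e * u) ^ 2 - A with hM'
  -- The correction `2c₀γeuA` of the transverse part contributes `4c₀²A(eu)²`, which turns
  -- `-2c₀²A(eu)²` into `+2c₀²A(eu)²`.
  have key : M₀ - A + 2 * c₀ * (e * u) * (α * S + β * C)
        + 2 * c₀ ^ 2 * A * (e * u) ^ 2
      = M + (4 * c₀ * (e * u ^ 3) * P + -(2 * c₀ * (e * u) * (α * X + β * Y))) := by
    rw [hM', hX, hY]
    linear_combination (-4 * c₀ ^ 2 * A * (e * u) ^ 2) * hαβ
  have aα : |α| ≤ 1 := by rwa [abs_of_nonneg hα]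
  have aβ : |β| ≤ 1 := by rwa [abs_of_nonneg hβ]
  have aP : |P| ≤ 2 := by
    have ap : |α ^ 2 - β ^ 2| ≤ 1 := abs_le.2 ⟨by nlinarith, by nlinarith⟩
    have aq : |2 * α * β| ≤ 1 :=
      abs_le.2 ⟨by nlinarith [mul_nonneg hα hβ], by nlinarith [sq_nonneg (α - β)]⟩
    simpa using Row.abs_combination_le ap aq hN hB
  have aXY := Row.abs_combination_le aα aβ hn hb
  rw [key]
  refine (abs_add_le _ _).trans ((add_le_add hM (abs_add_le _ _)).trans ?_)
  rw [abs_neg, abs_mul _ P, abs_mul _ (α * X + β * Y),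
    abs_of_nonneg (by positivity : 0 ≤ 4 * c₀ * (e * u ^ 3)),
    abs_of_nonneg (by positivity : 0 ≤ 2 * c₀ * (e * u))]
  have h5 : 2 * c₀ * (e * u) * |α * X + β * Y|
      ≤ 2 * c₀ * (2 * (340 * (1 + c₀) ^ 5)) * (e * u ^ 3) := by
    calc 2 * c₀ * (e * u) * |α * X + β * Y|
        ≤ 2 * c₀ * (e * u) * (2 * (340 * (1 + c₀) ^ 5 * (1 * u ^ 2))) := by
          gcongr; exact aXY.trans (by gcongr)
      _ = _ := by ring
  have h6 : 4 * c₀ * (e * u ^ 3) * |P| ≤ 4 * c₀ * (e * u ^ 3) * 2 := by gcongr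
  have h7 : 400 * (1 + c₀) ^ 4 + 4 * c₀ * 2 + 2 * c₀ * (2 * (340 * (1 + c₀) ^ 5))
      ≤ 2000 * (1 + c₀) ^ 6 := by
    rw [← sub_nonneg]; ring_nf; positivity
  have := mul_le_mul_of_nonneg_right h7 hg3
  linarith

/-- The asymptotics of one row, for any phase `ψ` with the right derivative. -/
lemma Row.asymptotics {c₀ α β : ℝ} {m n b ψ : ℝ → ℝ} (h : Row c₀ α β m n b) (hc₀ : 0 < c₀)
    (hα : 0 ≤ α) (hβ : 0 ≤ β) (hαβ : α ^ 2 + β ^ 2 = 1)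
    (hψ : ∀ s, 1 ≤ s → HasDerivAt ψ (β * (s / 2) * √(1 + 4 * c₀ ^ 2 * gs α s ^ 2 * s⁻¹ ^ 2)) s) :
    ∃ A a : ℝ, Tendsto m atTop (nhds A) ∧ a ∈ Set.Ico (0 : ℝ) (2 * π) ∧ ∀ s, 1 ≤ s →
      |m s - A + 2 * c₀ * (gs α s * s⁻¹) * √(1 - A ^ 2)
          * (α * Real.sin (a + ψ s) + β * Real.cos (a + ψ s))
        + 2 * c₀ ^ 2 * A * (gs α s * s⁻¹) ^ 2| ≤ 2000 * (1 + c₀) ^ 6 * (gs α s * s⁻¹ ^ 3) ∧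
      |n s - √(1 - A ^ 2) * Real.sin (a + ψ s) - 2 * c₀ * α * (gs α s * s⁻¹) * A|
        ≤ 2000 * (1 + c₀) ^ 6 * (gs α s * s⁻¹ ^ 2) ∧
      |b s - √(1 - A ^ 2) * Real.cos (a + ψ s) - 2 * c₀ * β * (gs α s * s⁻¹) * A|
        ≤ 2000 * (1 + c₀) ^ 6 * (gs α s * s⁻¹ ^ 2) := by
  obtain ⟨A, hmlim, hmA, hlong⟩ := h.exists_longitudinal hc₀ hα hβ hαβ
  obtain ⟨Z, hZ⟩ := h.exists_transverse hc₀ hα hβ hαβ hψ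
  have hα1 : α ≤ 1 := by nlinarith
  have hβ1 : β ≤ 1 := by nlinarith
  have hA1 : |A| ≤ 1 := le_of_tendsto hmlim.abs (Eventually.of_forall h.abs_m_le)
  set w : ℝ → ℂ := fun s => n s + b s * Complex.I with hw
  have hwn : ∀ s, ‖w s‖ ^ 2 = 1 - m s ^ 2 := fun s => by
    rw [← Complex.normSq_eq_norm_sq, Complex.normSq_apply]
    simp only [hw, Complex.add_re, Complex.add_im, Complex.mul_re, Complex.mul_im,
      Complex.ofReal_re, Complex.ofReal_im, Complex.I_re, Complex.I_im]
    linarith [h.sq s]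
  -- Replacing `m` by its limit in the correction costs only `O(e u²)`.
  have hw' : ∀ s, 1 ≤ s → ‖w s - Complex.exp (-(ψ s * Complex.I)) * Z
      - ((2 * c₀ * (gs α s * s⁻¹) * A : ℝ) : ℂ) * (α + β * Complex.I)‖
        ≤ 340 * (1 + c₀) ^ 5 * (gs α s * s⁻¹ ^ 2) := by
    intro s hs
    have he := (gs_pos α s).le
    have he1 := gs_le_one hα s
    have hu : 0 ≤ s⁻¹ := by positivity
    have hγ : ‖(α : ℂ) + β * Complex.I‖ = 1 := by
      rw [← sq_eq_sq₀ (norm_nonneg _) zero_le_one, ← Complex.normSq_eq_norm_sq,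
        Complex.normSq_add_mul_I, hαβ, one_pow]
    have e : w s - Complex.exp (-(ψ s * Complex.I)) * Z
        - ((2 * c₀ * (gs α s * s⁻¹) * A : ℝ) : ℂ) * (α + β * Complex.I)
        = (((n s : ℂ) + b s * Complex.I) - Complex.exp (-(ψ s * Complex.I)) * Z
          - 2 * c₀ * (α + β * Complex.I) * (gs α s * s⁻¹ : ℝ) * m s)
        + ((2 * c₀ * (gs α s * s⁻¹) * (m s - A) : ℝ) : ℂ) * (α + β * Complex.I) := by
      simp only [hw]
      push_cast
      ring
    rw [e]
    refine (norm_add_le _ _).trans ?_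
    rw [norm_mul, hγ, mul_one, Complex.norm_real, Real.norm_eq_abs, abs_mul,
      abs_of_nonneg (by positivity : 0 ≤ 2 * c₀ * (gs α s * s⁻¹))]
    have h2 : 2 * c₀ * (gs α s * s⁻¹) * |m s - A|
        ≤ 2 * c₀ * (20 * (1 + c₀) ^ 2) * (gs α s * s⁻¹ ^ 2) := by
      calc 2 * c₀ * (gs α s * s⁻¹) * |m s - A|
          ≤ 2 * c₀ * (gs α s * s⁻¹) * (20 * (1 + c₀) ^ 2 * (1 * s⁻¹)) := by
            gcongr; exact (hmA s hs).trans (by gcongr)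
        _ = _ := by ring
    have h3 : 2 * c₀ * (20 * (1 + c₀) ^ 2) ≤ 40 * (1 + c₀) ^ 5 := by
      rw [← sub_nonneg]; ring_nf; positivity
    have h4 := mul_le_mul_of_nonneg_right h3 (by positivity : 0 ≤ gs α s * s⁻¹ ^ 2)
    have := hZ s hs
    linarith
  have hB : ‖Z‖ = √(1 - A ^ 2) := by
    have hlim : Tendsto (fun s => ‖w s‖) atTop (nhds ‖Z‖) := by
      rw [tendsto_iff_norm_sub_tendsto_zero]
      have hinv : Tendsto (fun s : ℝ => (340 * (1 + c₀) ^ 5 + 2 * c₀) * s⁻¹) atTop (nhds 0) := by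
        simpa using (tendsto_inv_atTop_zero (𝕜 := ℝ)).const_mul (340 * (1 + c₀) ^ 5 + 2 * c₀)
      refine squeeze_zero' (Eventually.of_forall fun _ => norm_nonneg _) ?_ hinv
      filter_upwards [eventually_ge_atTop (1 : ℝ)] with s hs
      have he := (gs_pos α s).le
      have he1 := gs_le_one hα s
      have hu : 0 ≤ s⁻¹ := by positivity
      have hu1 := inv_le_one_of_one_le₀ hs
      have hγ : ‖(α : ℂ) + β * Complex.I‖ = 1 := by
        rw [← sq_eq_sq₀ (norm_nonneg _) zero_le_one, ← Complex.normSq_eq_norm_sq,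
          Complex.normSq_add_mul_I, hαβ, one_pow]
      have hexp : ‖Complex.exp (-(ψ s * Complex.I)) * Z‖ = ‖Z‖ := by
        rw [norm_mul, ← neg_mul, ← Complex.ofReal_neg, Complex.norm_exp_ofReal_mul_I, one_mul]
      have h1 := abs_norm_sub_norm_le (w s) (Complex.exp (-(ψ s * Complex.I)) * Z)
      rw [hexp] at h1
      have h2 := norm_le_norm_sub_add (w s - Complex.exp (-(ψ s * Complex.I)) * Z)
        (((2 * c₀ * (gs α s * s⁻¹) * A : ℝ) : ℂ) * (α + β * Complex.I))
      rw [norm_mul _ ((α : ℂ) + _), hγ, mul_one, Complex.norm_real, Real.norm_eq_abs, abs_mul,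
        abs_of_nonneg (by positivity : 0 ≤ 2 * c₀ * (gs α s * s⁻¹))] at h2
      have h3 : 2 * c₀ * (gs α s * s⁻¹) * |A| ≤ 2 * c₀ * (1 * s⁻¹) * 1 := by gcongr
      have h4 : 340 * (1 + c₀) ^ 5 * (gs α s * s⁻¹ ^ 2) ≤ 340 * (1 + c₀) ^ 5 * (1 * s⁻¹) := by
        gcongr
        exact pow_le_of_le_one hu hu1 two_ne_zero
      have := hw' s hs
      rw [Real.norm_eq_abs]
      linarith
    have h1 : ‖Z‖ ^ 2 = 1 - A ^ 2 :=
      tendsto_nhds_unique (hlim.pow 2) (((hmlim.pow 2).const_sub 1).congr fun s => (hwn s).symm)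
    rw [← h1, Real.sqrt_sq (norm_nonneg _)]
  obtain ⟨a, ha, haψ⟩ := exists_phase_shift Z
  refine ⟨A, a, hmlim, ha, fun s hs => ?_⟩
  have he := (gs_pos α s).le
  have he1 := gs_le_one hα s
  have hu : 0 ≤ s⁻¹ := by positivity
  have hg2 : 0 ≤ gs α s * s⁻¹ ^ 2 := by positivity
  have hg3 : 0 ≤ gs α s * s⁻¹ ^ 3 := by positivity
  obtain ⟨hre, him⟩ := haψ (ψ s)
  rw [hB] at hre him
  have hn : |n s - √(1 - A ^ 2) * Real.sin (a + ψ s) - 2 * c₀ * α * (gs α s * s⁻¹) * A|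
      ≤ 340 * (1 + c₀) ^ 5 * (gs α s * s⁻¹ ^ 2) := by
    refine le_trans (le_of_eq ?_) ((Complex.abs_re_le_norm _).trans (hw' s hs))
    rw [Complex.sub_re, Complex.sub_re, hre, Complex.re_ofReal_mul]
    simp only [hw, Complex.add_re, Complex.mul_re, Complex.ofReal_re, Complex.ofReal_im,
      Complex.I_re, Complex.I_im]
    congr 1
    ring
  have hb : |b s - √(1 - A ^ 2) * Real.cos (a + ψ s) - 2 * c₀ * β * (gs α s * s⁻¹) * A|
      ≤ 340 * (1 + c₀) ^ 5 * (gs α s * s⁻¹ ^ 2) := by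
    refine le_trans (le_of_eq ?_) ((Complex.abs_im_le_norm _).trans (hw' s hs))
    rw [Complex.sub_im, Complex.sub_im, him, Complex.im_ofReal_mul]
    simp only [hw, Complex.add_im, Complex.mul_im, Complex.ofReal_re, Complex.ofReal_im,
      Complex.I_re, Complex.I_im]
    congr 1
    ring
  have hK : 340 * (1 + c₀) ^ 5 ≤ 2000 * (1 + c₀) ^ 6 := by
    rw [← sub_nonneg]; ring_nf; positivity
  have hK2 := mul_le_mul_of_nonneg_right hK hg2
  refine ⟨?_, hn.trans hK2, hb.trans hK2⟩
  have := Row.longitudinal_of_transverse hc₀ hα hβ hαβ he he1 hu (h.abs_n_le s) (h.abs_b_le s)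
    hn hb (hlong s hs)
  convert this using 2
  ring

/-! ### Orthonormality of the frame -/

section Frame
variable {c₀ α : ℝ} {m n b : ℝ → Fin 3 → ℝ}

/-- The rows of the frame matrix `(m n b)` stay orthonormal. -/
lemma ProfileSystem.row_gram (h : ProfileSystem c₀ α m n b) (j k : Fin 3) (s : ℝ) :
    m s j * m s k + n s j * n s k + b s j * b s k = if j = k then 1 else 0 := by
  have hm := fun i t => hasDerivAt_pi.1 (h.1 t).1 i
  have hn := fun i t => hasDerivAt_pi.1 (h.1 t).2.1 i
  have hb := fun i t => hasDerivAt_pi.1 (h.1 t).2.2 i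
  have hd : ∀ t, HasDerivAt (fun t => m t j * m t k + n t j * n t k + b t j * b t k) 0 t :=
    fun t => by
      refine ((((hm j t).mul (hm k t)).add ((hn j t).mul (hn k t))).add
        ((hb j t).mul (hb k t))).congr_deriv ?_
      simp only [Pi.add_apply, Pi.smul_apply, smul_eq_mul]
      ring
  have := is_const_of_deriv_eq_zero (fun t => (hd t).differentiableAt) (fun t => (hd t).deriv) s 0
  rw [this, h.2.1, h.2.2.1, h.2.2.2]
  fin_cases j <;> fin_cases k <;> simp

lemma ProfileSystem.row (h : ProfileSystem c₀ α m n b) (j : Fin 3) :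
    Row c₀ α (√(1 - α ^ 2)) (fun s => m s j) (fun s => n s j) (fun s => b s j) where
  dm s := (hasDerivAt_pi.1 (h.1 s).1 j).congr_deriv (by simp [gs])
  dn s := (hasDerivAt_pi.1 (h.1 s).2.1 j).congr_deriv (by simp [gs])
  db s := (hasDerivAt_pi.1 (h.1 s).2.2 j).congr_deriv (by simp)
  sq s := by
    have := h.row_gram j j s
    simp only [if_true] at this
    linarith

/-- Orthonormality of the rows of the frame matrix gives that of its columns. -/
lemma ProfileSystem.norm_m (h : ProfileSystem c₀ α m n b) (s : ℝ) :
    m s 0 ^ 2 + m s 1 ^ 2 + m s 2 ^ 2 = 1 := by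
  set F : Matrix (Fin 3) (Fin 3) ℝ := Matrix.of fun j i => ![m s j, n s j, b s j] i with hF
  have h1 : F * F.transpose = 1 := by
    ext j k
    rw [Matrix.mul_apply, Matrix.one_apply, ← h.row_gram j k s]
    simp [hF, Fin.sum_univ_three]
  have h2 := congrArg (fun G : Matrix (Fin 3) (Fin 3) ℝ => G 0 0) (mul_eq_one_comm.1 h1)
  simp only [hF, Matrix.mul_apply, Fin.sum_univ_three, Matrix.transpose_apply, Matrix.of_apply,
    Matrix.cons_val_zero, Matrix.one_apply_eq] at h2
  linarith

end Frame

/-- **Asymptotics of the profile.** There is a constant `C`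
depending only on `c₀` (uniform in `α ∈ [0,1]`) such that the components of
`m, n, b` satisfy the stated asymptotics for `s ≥ s₀ = 4√(8+c₀²)`. -/
theorem profile_asymptotics (c₀ : ℝ) (hc₀ : 0 < c₀) :
    ∃ C : ℝ, 0 < C ∧ ∀ α ∈ Set.Icc (0 : ℝ) 1, ∀ m n b : ℝ → Fin 3 → ℝ,
      ProfileSystem c₀ α m n b →
      ∃ A a : Fin 3 → ℝ,
        (A 0) ^ 2 + (A 1) ^ 2 + (A 2) ^ 2 = 1 ∧
        (∀ j : Fin 3, a j ∈ Set.Ico (0 : ℝ) (2 * Real.pi)) ∧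
        ∀ s : ℝ, 4 * Real.sqrt (8 + c₀ ^ 2) ≤ s → ∀ j : Fin 3,
          |m s j - A j
              + (2 * c₀ / s) * Real.sqrt (1 - (A j) ^ 2)
                * Real.exp (-α * s ^ 2 / 4)
                * (α * Real.sin (phase c₀ α (a j) s)
                    + Real.sqrt (1 - α ^ 2) * Real.cos (phase c₀ α (a j) s))
              + (2 * c₀ ^ 2 / s ^ 2) * A j * Real.exp (-α * s ^ 2 / 2)|
            ≤ C * Real.exp (-α * s ^ 2 / 4) / s ^ 3 ∧
          |n s j - Real.sqrt (1 - (A j) ^ 2) * Real.sin (phase c₀ α (a j) s)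
              - (2 * c₀ * α / s) * A j * Real.exp (-α * s ^ 2 / 4)|
            ≤ C * Real.exp (-α * s ^ 2 / 4) / s ^ 2 ∧
          |b s j - Real.sqrt (1 - (A j) ^ 2) * Real.cos (phase c₀ α (a j) s)
              - (2 * c₀ * Real.sqrt (1 - α ^ 2) / s) * A j
                * Real.exp (-α * s ^ 2 / 4)|
            ≤ C * Real.exp (-α * s ^ 2 / 4) / s ^ 2 := by
  refine ⟨2000 * (1 + c₀) ^ 6, by positivity, fun α hα m n b h => ?_⟩
  have hα2 : 0 ≤ 1 - α ^ 2 := by nlinarith [hα.1, hα.2]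
  have hαβ : α ^ 2 + √(1 - α ^ 2) ^ 2 = 1 := by rw [Real.sq_sqrt hα2]; ring
  choose A a hlim ha hbound using fun j => (h.row j).asymptotics hc₀ hα.1 (Real.sqrt_nonneg _) hαβ
    (ψ := phase c₀ α 0) fun s hs => hasDerivAt_phase c₀ α 0 (by linarith)
  refine ⟨A, a, ?_, ha, fun s hs j => ?_⟩
  · refine tendsto_nhds_unique ((((hlim 0).pow 2).add ((hlim 1).pow 2)).add ((hlim 2).pow 2)) ?_
    exact tendsto_const_nhds.congr fun s => (h.norm_m s).symm
  · have hs1 : 1 ≤ s := by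
      refine le_trans ?_ hs
      have : 1 ≤ √(8 + c₀ ^ 2) := Real.one_le_sqrt.2 (by nlinarith [sq_nonneg c₀])
      linarith
    have hphase : phase c₀ α (a j) s = a j + phase c₀ α 0 s := by
      simp only [phase, zero_add]
    have hexp : Real.exp (-α * s ^ 2 / 4) = gs α s := rfl
    have hexp2 : Real.exp (-α * s ^ 2 / 2) = gs α s ^ 2 := by
      rw [gs, ← Real.exp_nat_mul]
      congr 1
      push_cast
      ring
    have hb := hbound j s hs1
    rw [hphase, hexp, hexp2]
    refine ⟨?_, ?_, ?_⟩
    · convert hb.1 using 1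
      · congr 1
        ring
      · ring
    · convert hb.2.1 using 1
      · congr 1
        ring
      · ring
    · convert hb.2.2 using 1
      · congr 1
        ring
      · ring
end

section
/- Fix c₀>0. There exists a constant C>0 depending only on c₀ with the following property. For α∈[0,1] and β=√(1−α²), let m^α,n^α,b^α:ℝ→ℝ³ denote a solution of the self-similar profile system with parameter α, and let A(α)∈ℝ³ denote the limit of m^α(s) as s→+∞ (assumed to exist). Then: (1) for all α∈(0,1/2], |A(α) − A(0)| ≤ C·√α·|ln α|; and (2) for all α∈[1/2,1], |A(α) − A(1)| ≤ C·√(1−α). -/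
/-!
Each coordinate `j` gives a scalar triple `(x, y, z) = (m j, n j, b j)` solving an antisymmetric
linear system, so `x ^ 2 + y ^ 2 + z ^ 2 = 1`, and two such triples for different `α` are compared
through the equation for their difference `w`. By antisymmetry a forcing term contributes only its
integral to `|w|` (`energy_bound`), with no exponential factor.

For small `α` the curvature does not decay soon enough, and the rotation of `(y, z)` by the torsion
`β s / 2` has to be used. Since `y = -z' / τ`, the quantity `x + (c / τ) z` has derivative
`(c / τ)' z`, of order `1 / s ^ 2`; hence `A - m(s) = O(1 / s)` uniformly in `α` (`tail_bound`). For
the difference from the solution with `α = 0`, the forcing has size `α s ^ 2`, but its main part is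
cancelled by an explicit corrector of size `α s`, leaving a remainder `O(α (1 + s))` and thus
`w = O(α (1 + s ^ 2))`. Applying the device `x + (c / τ) z` to the corrected difference gains two
powers of `s` in its derivative, so the first component of `w` is `O(α s + 1 / s)`
(`diff_bound_zero`). At `s = 1 / √α` both errors are `O(√α)`, and `|log α| ≥ log 2` on `(0, 1/2]`,
so the logarithm in the claim is not needed. To avoid the singularity of `1 / τ` at `0`, the
function `1 / s` is replaced throughout by `s / (1 + s ^ 2)`.

For `α` near `1` the curvature is a Gaussian with rate at least `1 / 8`. The energy estimate gives
`w = O(β (1 + s ^ 2))`, and the derivative of the first component carries a factor decaying like the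
curvature, so its integral over `[0, ∞)` is `O(β) = O(√(1 - α))` (`limit_bound_one`).
-/


open Real Filter

namespace ProfileLimit

/-- One coordinate `(x, y, z) = (m j, n j, b j)` of a Serret–Frenet frame with curvature `c` and
torsion `τ`. -/
def CoordSystem (c τ x y z : ℝ → ℝ) : Prop :=
  ∀ s, HasDerivAt x (c s * y s) s ∧ HasDerivAt y (-c s * x s + τ s * z s) s ∧
    HasDerivAt z (-τ s * y s) s

theorem abs_mul_le_mul {a b A B : ℝ} (ha : |a| ≤ A) (hb : |b| ≤ B) : |a * b| ≤ A * B := by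
  rw [abs_mul]
  exact mul_le_mul ha hb (abs_nonneg _) ((abs_nonneg _).trans ha)

theorem abs_add_le_add {a b A B : ℝ} (ha : |a| ≤ A) (hb : |b| ≤ B) : |a + b| ≤ A + B :=
  (abs_add_le a b).trans (add_le_add ha hb)

/-! ### Comparison and energy estimates -/

theorem sub_le_sub_of_deriv_le {f g f' g' : ℝ → ℝ} {a b : ℝ} (hab : a ≤ b)
    (hf : ∀ s, a ≤ s → HasDerivAt f (f' s) s) (hg : ∀ s, a ≤ s → HasDerivAt g (g' s) s)
    (h : ∀ s, a ≤ s → f' s ≤ g' s) : f b - f a ≤ g b - g a := by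
  have hd : ∀ s, a ≤ s → HasDerivAt (fun s => g s - f s) (g' s - f' s) s :=
    fun s hs => (hg s hs).sub (hf s hs)
  have hmono : MonotoneOn (fun s => g s - f s) (Set.Ici a) := by
    apply monotoneOn_of_deriv_nonneg (convex_Ici a)
    · exact fun s hs => (hd s hs).continuousAt.continuousWithinAt
    · intro s hs
      rw [interior_Ici] at hs
      exact (hd s (le_of_lt hs)).differentiableAt.differentiableWithinAt
    · intro s hs
      rw [interior_Ici] at hs
      rw [(hd s (le_of_lt hs)).deriv]
      exact sub_nonneg.2 (h s (le_of_lt hs))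
  have := hmono (Set.mem_Ici.2 le_rfl) (Set.mem_Ici.2 hab) hab
  simp only at this
  linarith

theorem abs_sub_le_of_abs_deriv_le {f g f' g' : ℝ → ℝ} {a b : ℝ} (hab : a ≤ b)
    (hf : ∀ s, a ≤ s → HasDerivAt f (f' s) s) (hg : ∀ s, a ≤ s → HasDerivAt g (g' s) s)
    (h : ∀ s, a ≤ s → |f' s| ≤ g' s) : |f b - f a| ≤ g b - g a := by
  have h1 := sub_le_sub_of_deriv_le hab hf hg fun s hs => (abs_le.1 (h s hs)).2
  have h2 := sub_le_sub_of_deriv_le hab (fun s hs => (hf s hs).neg) hg fun s hs => by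
    have := (abs_le.1 (h s hs)).1
    linarith
  simp only [Pi.neg_apply] at h2
  exact abs_le.2 ⟨by linarith, by linarith⟩

/-- The homogeneous part being antisymmetric, a forcing with components at most `B'` makes the
solution grow by at most `2 * B` (the factor `2` bounds `√3`); no Grönwall exponential appears. -/
theorem energy_bound {c τ w₁ w₂ w₃ R₁ R₂ R₃ B B' : ℝ → ℝ}
    (h₁ : ∀ s, HasDerivAt w₁ (c s * w₂ s + R₁ s) s)
    (h₂ : ∀ s, HasDerivAt w₂ (-c s * w₁ s + τ s * w₃ s + R₂ s) s)
    (h₃ : ∀ s, HasDerivAt w₃ (-τ s * w₂ s + R₃ s) s)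
    (h0₁ : w₁ 0 = 0) (h0₂ : w₂ 0 = 0) (h0₃ : w₃ 0 = 0)
    (hB : ∀ s, HasDerivAt B (B' s) s) (hB0 : B 0 = 0)
    (hR : ∀ s, 0 ≤ s → |R₁ s| ≤ B' s ∧ |R₂ s| ≤ B' s ∧ |R₃ s| ≤ B' s)
    {s : ℝ} (hs : 0 ≤ s) : |w₁ s| ≤ 2 * B s ∧ |w₂ s| ≤ 2 * B s ∧ |w₃ s| ≤ 2 * B s := by
  -- `√(|w|² + ε²)` stands in for `|w|`, which need not be differentiable where it vanishes.
  have key : ∀ ε : ℝ, 0 < ε →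
      √(w₁ s ^ 2 + w₂ s ^ 2 + w₃ s ^ 2 + ε ^ 2) ≤ 2 * B s + ε := by
    intro ε hε
    have hpos : ∀ r, 0 < w₁ r ^ 2 + w₂ r ^ 2 + w₃ r ^ 2 + ε ^ 2 := fun r => by positivity
    have hE : ∀ r, HasDerivAt (fun r => w₁ r ^ 2 + w₂ r ^ 2 + w₃ r ^ 2 + ε ^ 2)
        (2 * (w₁ r * R₁ r + w₂ r * R₂ r + w₃ r * R₃ r)) r := by
      intro r
      have := ((((h₁ r).pow 2).add ((h₂ r).pow 2)).add ((h₃ r).pow 2)).add_const (ε ^ 2)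
      exact this.congr_deriv (by push_cast; ring)
    have := sub_le_sub_of_deriv_le hs (fun r _ => (hE r).sqrt (hpos r).ne')
      (fun r _ => (hB r).const_mul 2) (by
        intro r hr
        obtain ⟨k1, k2, k3⟩ := hR r hr
        have hb : 0 ≤ B' r := (abs_nonneg _).trans k1
        have hq := Real.sqrt_pos.2 (hpos r)
        have hq2 := Real.sq_sqrt (hpos r).le
        set q := √(w₁ r ^ 2 + w₂ r ^ 2 + w₃ r ^ 2 + ε ^ 2)
        rw [div_le_iff₀ (by positivity)]
        have e1 := (le_abs_self _).trans (abs_mul_le_mul (le_refl |w₁ r|) k1)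
        have e2 := (le_abs_self _).trans (abs_mul_le_mul (le_refl |w₂ r|) k2)
        have e3 := (le_abs_self _).trans (abs_mul_le_mul (le_refl |w₃ r|) k3)
        have hsum : |w₁ r| + |w₂ r| + |w₃ r| ≤ 2 * q := by
          apply abs_le_of_sq_le_sq' _ (by positivity) |>.2
          nlinarith [sq_nonneg (|w₁ r| - |w₂ r|), sq_nonneg (|w₂ r| - |w₃ r|),
            sq_nonneg (|w₁ r| - |w₃ r|), sq_abs (w₁ r), sq_abs (w₂ r), sq_abs (w₃ r),
            sq_nonneg (w₁ r), sq_nonneg (w₂ r), sq_nonneg (w₃ r), sq_nonneg ε]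
        nlinarith [mul_le_mul_of_nonneg_right hsum hb])
    simp only [h0₁, h0₂, h0₃, hB0] at this
    rw [show (0:ℝ) ^ 2 + 0 ^ 2 + 0 ^ 2 + ε ^ 2 = ε ^ 2 by ring, Real.sqrt_sq hε.le] at this
    linarith
  refine ⟨?_, ?_, ?_⟩ <;> refine le_of_forall_pos_le_add fun ε hε => ?_ <;>
    refine (Real.abs_le_sqrt ?_).trans (key ε hε) <;>
    nlinarith [sq_nonneg (w₁ s), sq_nonneg (w₂ s), sq_nonneg (w₃ s), sq_nonneg ε]

theorem CoordSystem.abs_le_one {c τ x y z : ℝ → ℝ} (h : CoordSystem c τ x y z)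
    (h0 : x 0 ^ 2 + y 0 ^ 2 + z 0 ^ 2 = 1) (s : ℝ) : |x s| ≤ 1 ∧ |y s| ≤ 1 ∧ |z s| ≤ 1 := by
  have hE : ∀ r, HasDerivAt (fun r => x r ^ 2 + y r ^ 2 + z r ^ 2) 0 r := by
    intro r
    obtain ⟨h1, h2, h3⟩ := h r
    have := ((h1.pow 2).add (h2.pow 2)).add (h3.pow 2)
    exact this.congr_deriv (by push_cast; ring)
  have hc := is_const_of_deriv_eq_zero (fun r => (hE r).differentiableAt) (fun r => (hE r).deriv)
    s 0
  simp only [h0] at hc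
  refine ⟨?_, ?_, ?_⟩ <;> rw [← sq_le_one_iff_abs_le_one] <;>
    nlinarith [sq_nonneg (x s), sq_nonneg (y s), sq_nonneg (z s)]

/-! ### The Gaussian curvature and the regularised inverse torsion -/

/-- The Gaussian factor of the curvature. -/
noncomputable def gauss (α s : ℝ) : ℝ := Real.exp (-α * s ^ 2 / 4)

/-- A smooth substitute for `1 / s`, with error `1 - s * reg s = 1 / (1 + s ^ 2)`. -/
noncomputable def reg (s : ℝ) : ℝ := s / (1 + s ^ 2)

theorem gauss_pos (α s : ℝ) : 0 < gauss α s := Real.exp_pos _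

theorem hasDerivAt_gauss (α s : ℝ) : HasDerivAt (gauss α) (-(α * s / 2) * gauss α s) s := by
  have := ((((hasDerivAt_id' s).pow 2).const_mul (-α)).div_const 4).exp
  exact this.congr_deriv (by simp [gauss]; ring)

theorem hasDerivAt_reg (s : ℝ) :
    HasDerivAt reg ((1 - s ^ 2) / (1 + s ^ 2) ^ 2) s := by
  have hp : (1 + s ^ 2) ≠ 0 := by positivity
  have := (hasDerivAt_id' s).div (((hasDerivAt_id' s).pow 2).const_add 1) hp
  exact this.congr_deriv (by simp; ring)

theorem gauss_le_one {α : ℝ} (hα : 0 ≤ α) (s : ℝ) : gauss α s ≤ 1 := by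
  unfold gauss
  rw [Real.exp_le_one_iff]
  have : 0 ≤ α * s ^ 2 := by positivity
  linarith

theorem one_sub_gauss_le (α s : ℝ) : 1 - gauss α s ≤ α * s ^ 2 / 4 := by
  unfold gauss
  have := Real.add_one_le_exp (-α * s ^ 2 / 4)
  linarith

theorem mul_gauss_le (α s : ℝ) : α * s ^ 2 * gauss α s ≤ 4 := by
  have h1 := Real.add_one_le_exp (α * s ^ 2 / 4)
  have h2 : Real.exp (α * s ^ 2 / 4) * gauss α s = 1 := by
    unfold gauss
    rw [← Real.exp_add]
    convert Real.exp_zero using 2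
    ring
  nlinarith [gauss_pos α s]

theorem reg_bounds {s : ℝ} (hs : 0 ≤ s) :
    0 ≤ reg s ∧ reg s ≤ 1 ∧ s * reg s ≤ 1 ∧ 1 - s * reg s = 1 / (1 + s ^ 2) := by
  have hp : 0 < 1 + s ^ 2 := by positivity
  unfold reg
  refine ⟨by positivity, ?_, ?_, by field_simp; ring⟩
  · rw [div_le_one hp]; nlinarith [sq_nonneg (s - 1)]
  · rw [← mul_div_assoc, div_le_one hp]; nlinarith

theorem abs_deriv_reg_le (s : ℝ) : |(1 - s ^ 2) / (1 + s ^ 2) ^ 2| ≤ 1 / (1 + s ^ 2) := by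
  have hp : 0 < 1 + s ^ 2 := by positivity
  rw [abs_div, abs_of_pos (pow_pos hp 2), div_le_div_iff₀ (pow_pos hp 2) hp]
  have : |1 - s ^ 2| ≤ 1 + s ^ 2 := abs_le.2 ⟨by nlinarith, by nlinarith [sq_nonneg s]⟩
  nlinarith

/-- `kap K α` is the regularisation of `curvature / torsion`, where `K = 2 * c₀ / β`. -/
noncomputable def kap (K α s : ℝ) : ℝ := K * (gauss α s * reg s)

/-- The derivative of `kap`. -/
noncomputable def kap' (K α s : ℝ) : ℝ :=
  K * (-(α * s / 2) * gauss α s * reg s + gauss α s * ((1 - s ^ 2) / (1 + s ^ 2) ^ 2))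

theorem hasDerivAt_kap (K α s : ℝ) : HasDerivAt (kap K α) (kap' K α s) s :=
  ((hasDerivAt_gauss α s).mul (hasDerivAt_reg s)).const_mul K

theorem kap_bounds {K α s : ℝ} (hK : 0 ≤ K) (hα : 0 ≤ α) (hs : 0 ≤ s) :
    |kap K α s| ≤ K * reg s ∧ |kap' K α s| ≤ 3 * K * (1 / (1 + s ^ 2)) := by
  obtain ⟨hr0, hr1, hsr, -⟩ := reg_bounds hs
  have hg := gauss_pos α s
  have hg1 := gauss_le_one hα s
  have hp : 0 < 1 + s ^ 2 := by positivity
  have habs : |gauss α s| ≤ 1 := by rwa [abs_of_pos hg]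
  constructor
  · unfold kap
    refine abs_mul_le_mul (abs_of_nonneg hK).le ?_
    simpa using abs_mul_le_mul habs (abs_of_nonneg hr0).le
  · unfold kap'
    have h1 : |-(α * s / 2) * gauss α s * reg s| ≤ 2 * (1 / (1 + s ^ 2)) := by
      have e : -(α * s / 2) * gauss α s * reg s
          = -((α * s ^ 2 * gauss α s) / 2 * (1 / (1 + s ^ 2))) := by
        unfold reg; field_simp
      rw [e, abs_neg, abs_of_nonneg (by positivity)]
      have := mul_gauss_le α s
      gcongr
      linarith
    have h2 := abs_mul_le_mul habs (abs_deriv_reg_le s)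
    have := abs_mul_le_mul (abs_of_nonneg hK).le (abs_add_le_add h1 h2)
    refine this.trans (le_of_eq (by ring))

/-! ### The tail of a single solution -/

/-- Up to an `O(1 / s)` correction, `x` equals `x + kap * z`, whose derivative is `O(1 / s ^ 2)`:
the fast oscillation of `y` is absorbed by `z' = -τ * y`. -/
theorem tail_bound {c₀ β α K a : ℝ} {x y z : ℝ → ℝ} (hc₀ : 0 < c₀) (hα : 0 ≤ α)
    (hβ : K * β = 2 * c₀) (hK : 0 ≤ K) (hK3 : K ≤ 3 * c₀)
    (h : CoordSystem (fun s => c₀ * gauss α s) (fun s => β * s / 2) x y z)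
    (h0 : x 0 ^ 2 + y 0 ^ 2 + z 0 ^ 2 = 1) (ha : Tendsto x atTop (nhds a)) {s : ℝ} (hs : 0 < s) :
    |a - x s| ≤ 16 * c₀ / s := by
  have hb := h.abs_le_one h0
  have hX : ∀ r, HasDerivAt (fun r => x r + kap K α r * z r)
      (c₀ * gauss α r * (1 - r * reg r) * y r + kap' K α r * z r) r := by
    intro r
    obtain ⟨h1, h2, h3⟩ := h r
    have := h1.add ((hasDerivAt_kap K α r).mul h3)
    refine this.congr_deriv ?_
    unfold kap
    linear_combination (-gauss α r * reg r * r * y r / 2) * hβ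
  have hkz : ∀ r, 0 < r → |kap K α r * z r| ≤ 3 * c₀ / r := by
    intro r hr
    obtain ⟨_, _, q, _⟩ := reg_bounds hr.le
    have e1 := abs_mul_le_mul (kap_bounds hK hα hr.le).1 (hb r).2.2
    refine e1.trans ?_
    rw [le_div_iff₀ hr]
    nlinarith
  have main : ∀ r, s ≤ r → |x r - x s| ≤ 16 * c₀ / s := by
    intro r hr
    have hr0 : 0 < r := hs.trans_le hr
    have hG : ∀ t, s ≤ t → HasDerivAt (fun t => -(10 * c₀) * t⁻¹) (10 * c₀ * (t ^ 2)⁻¹) t := by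
      intro t ht
      have := (hasDerivAt_inv (hs.trans_le ht).ne').const_mul (-(10 * c₀))
      exact this.congr_deriv (by ring)
    have := abs_sub_le_of_abs_deriv_le hr (fun t _ => hX t) hG (by
      intro t ht
      have ht0 : 0 < t := hs.trans_le ht
      obtain ⟨_, _, _, q⟩ := reg_bounds ht0.le
      have hp : 0 < 1 / (1 + t ^ 2) := by positivity
      have e1 : |c₀ * gauss α t * (1 - t * reg t)| ≤ c₀ * (1 / (1 + t ^ 2)) := by
        have hg := gauss_pos α t
        rw [q, abs_of_pos (by positivity)]
        have := gauss_le_one hα t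
        gcongr
        nlinarith
      have e2 := abs_mul_le_mul e1 (hb t).2.1
      have e3 := abs_mul_le_mul (kap_bounds hK hα ht0.le).2 (hb t).2.2
      refine (abs_add_le_add e2 e3).trans ?_
      have e4 : 1 / (1 + t ^ 2) ≤ (t ^ 2)⁻¹ := by
        rw [one_div]; gcongr; linarith
      have e5 : 10 * c₀ * (1 / (1 + t ^ 2)) ≤ 10 * c₀ * (t ^ 2)⁻¹ := by gcongr
      nlinarith)
    have hr' := hkz r hr0
    have hs' := hkz s hs
    have hrs : 3 * c₀ / r ≤ 3 * c₀ / s := by gcongr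
    have hri : 0 < c₀ * r⁻¹ := by positivity
    have e : 16 * c₀ / s = 10 * c₀ * s⁻¹ + 3 * c₀ / s + 3 * c₀ / s := by field_simp; ring
    rw [e]
    rw [abs_le] at *
    constructor <;> linarith
  exact le_of_tendsto ((ha.sub_const (x s)).abs) (eventually_atTop.2 ⟨s, main⟩)

/-! ### Small `α` -/

/-- Derivative of `(gauss α - 1) * reg`. -/
noncomputable def defect' (α s : ℝ) : ℝ :=
  -(α * s / 2) * gauss α s * reg s + (gauss α s - 1) * ((1 - s ^ 2) / (1 + s ^ 2) ^ 2)

theorem hasDerivAt_defect (α s : ℝ) :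
    HasDerivAt (fun s => (gauss α s - 1) * reg s) (defect' α s) s :=
  ((hasDerivAt_gauss α s).sub_const 1).mul (hasDerivAt_reg s)

theorem defect_bounds {α s : ℝ} (hα : 0 ≤ α) (hs : 0 ≤ s) :
    |(gauss α s - 1) * reg s| ≤ α * s / 4 ∧ |defect' α s| ≤ α ∧
      |(gauss α s - 1) * (1 - s * reg s)| ≤ α / 4 := by
  obtain ⟨hr0, hr1, hsr, hq⟩ := reg_bounds hs
  have hg := gauss_pos α s
  have hg1 := gauss_le_one hα s
  have hd : |gauss α s - 1| ≤ α * s ^ 2 / 4 := by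
    have := one_sub_gauss_le α s
    exact abs_le.2 ⟨by linarith, by nlinarith [mul_nonneg hα (sq_nonneg s)]⟩
  have habs : |gauss α s| ≤ 1 := by rwa [abs_of_pos hg]
  have hαs : 0 ≤ α * s := mul_nonneg hα hs
  have hfrac : α * s ^ 2 / 4 * (1 / (1 + s ^ 2)) ≤ α / 4 := by
    have hp : 0 < 1 + s ^ 2 := by positivity
    rw [mul_one_div, div_le_iff₀ hp]
    linarith
  refine ⟨?_, ?_, ?_⟩
  · refine (abs_mul_le_mul hd (abs_of_nonneg hr0).le).trans ?_
    nlinarith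
  · have h1 : |-(α * s / 2) * gauss α s * reg s| ≤ α * s / 2 * 1 * reg s := by
      refine abs_mul_le_mul (abs_mul_le_mul ?_ habs) (abs_of_nonneg hr0).le
      rw [abs_neg, abs_of_nonneg (by positivity)]
    refine (abs_add_le_add h1 (abs_mul_le_mul hd (abs_deriv_reg_le s))).trans ?_
    nlinarith
  · rw [hq]
    refine (abs_mul_le_mul hd (b := 1 / (1 + s ^ 2)) (abs_of_nonneg (by positivity)).le).trans hfrac

set_option maxHeartbeats 1000000 in
/-- Comparison of a solution with small `α` and one with `α = 0`.

Subtracting from the difference `w` the corrector `(-2 c₀ D z₀, 0, L D x₀)` with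
`D = (gauss α - 1) * reg` cancels the forcing of size `α * s ^ 2`, so that the energy estimate gives
`O(α * s ^ 2)`. The first component then gains a factor `s` from the correction by `kap`, exactly as
in `tail_bound`. -/
theorem diff_bound_zero {c₀ α β L : ℝ} {x y z x₀ y₀ z₀ : ℝ → ℝ} (hc₀ : 0 < c₀) (hα : 0 ≤ α)
    (hβ : L * β = 2 * c₀) (hL : 0 ≤ L) (hL3 : L ≤ 3 * c₀) (hβ1 : |β - 1| ≤ α)
    (h : CoordSystem (fun s => c₀ * gauss α s) (fun s => β * s / 2) x y z)
    (h₀ : CoordSystem (fun _ => c₀) (fun s => s / 2) x₀ y₀ z₀)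
    (hn : x 0 ^ 2 + y 0 ^ 2 + z 0 ^ 2 = 1)
    (hx : x 0 = x₀ 0) (hy : y 0 = y₀ 0) (hz : z 0 = z₀ 0) {s : ℝ} (hs : 0 < s) :
    |x s - x₀ s| ≤
      (26 * c₀ * (3 + 3 * c₀ + 3 * c₀ ^ 2) + 4 * c₀ + 3 * c₀ ^ 2) * (α * s) + 6 * c₀ / s := by
  have hb := h.abs_le_one hn
  have hb₀ := h₀.abs_le_one (by rw [← hx, ← hy, ← hz]; exact hn)
  set K := 3 + 3 * c₀ + 3 * c₀ ^ 2 with hKdef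
  have hK : 0 < K := by positivity
  let D : ℝ → ℝ := fun s => (gauss α s - 1) * reg s
  let R₁ : ℝ → ℝ := fun s =>
    c₀ * ((gauss α s - 1) * (1 - s * reg s)) * y₀ s + 2 * c₀ * defect' α s * z₀ s
  let R₂ : ℝ → ℝ := fun s =>
    -c₀ * ((gauss α s - 1) * (1 - s * reg s)) * x₀ s + (β - 1) * (s / 2) * z₀ s
      + 2 * c₀ ^ 2 * gauss α s * D s * z₀ s
  let R₃ : ℝ → ℝ := fun s =>
    -(β - 1) * (s / 2) * y₀ s + -L * (defect' α s * x₀ s + D s * (c₀ * y₀ s))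
  let q₁ : ℝ → ℝ := fun s => x s - x₀ s + 2 * c₀ * (D s * z₀ s)
  let q₂ : ℝ → ℝ := fun s => y s - y₀ s
  let q₃ : ℝ → ℝ := fun s => z s - z₀ s - L * (D s * x₀ s)
  have hD : ∀ s, HasDerivAt D (defect' α s) s := hasDerivAt_defect α
  have hq₁ : ∀ s, HasDerivAt q₁ (c₀ * gauss α s * q₂ s + R₁ s) s := by
    intro s
    have := ((h s).1.sub (h₀ s).1).add (((hD s).mul (h₀ s).2.2).const_mul (2 * c₀))
    refine this.congr_deriv ?_
    simp only [R₁, q₂, D]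
    ring
  have hq₂ : ∀ s, HasDerivAt q₂ (-(c₀ * gauss α s) * q₁ s + β * s / 2 * q₃ s + R₂ s) s := by
    intro s
    refine ((h s).2.1.sub (h₀ s).2.1).congr_deriv ?_
    simp only [R₂, q₁, q₃, D]
    linear_combination ((gauss α s - 1) * reg s * x₀ s * s / 2) * hβ
  have hq₃ : ∀ s, HasDerivAt q₃ (-(β * s / 2) * q₂ s + R₃ s) s := by
    intro s
    have := ((h s).2.2.sub (h₀ s).2.2).sub (((hD s).mul (h₀ s).1).const_mul L)
    refine this.congr_deriv ?_
    simp only [R₃, q₂, D]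
    ring
  have hgabs : ∀ t, |gauss α t| ≤ 1 := fun t => by
    rw [abs_of_pos (gauss_pos α t)]; exact gauss_le_one hα t
  have hLabs : |L| ≤ 3 * c₀ := by rwa [abs_of_nonneg hL]
  have hcabs : |c₀| ≤ c₀ := (abs_of_pos hc₀).le
  have h2cabs : |2 * c₀| ≤ 2 * c₀ := (abs_of_pos (by positivity)).le
  have hR₁ : ∀ t, 0 ≤ t → |R₁ t| ≤ 3 * c₀ * α := by
    intro t ht
    obtain ⟨-, d2, d3⟩ := defect_bounds hα ht
    refine (abs_add_le_add (abs_mul_le_mul (abs_mul_le_mul hcabs d3) (hb₀ t).2.1)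
      (abs_mul_le_mul (abs_mul_le_mul h2cabs d2) (hb₀ t).2.2)).trans ?_
    nlinarith [mul_nonneg hc₀.le hα]
  have hR : ∀ t, 0 ≤ t → |R₁ t| ≤ K * α * (1 + t) ∧ |R₂ t| ≤ K * α * (1 + t) ∧
      |R₃ t| ≤ K * α * (1 + t) := by
    intro t ht
    obtain ⟨d1, d2, d3⟩ := defect_bounds hα ht
    have hcα : 0 ≤ c₀ * α := by positivity
    have hcαt : 0 ≤ c₀ * α * t := by positivity
    have hccα : 0 ≤ c₀ ^ 2 * α := by positivity
    have hccαt : 0 ≤ c₀ ^ 2 * α * t := by positivity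
    have hαt : 0 ≤ α * t := by positivity
    have ht2 : |t / 2| ≤ t / 2 := (abs_of_nonneg (by positivity)).le
    refine ⟨(hR₁ t ht).trans ?_, ?_, ?_⟩
    · rw [hKdef]; nlinarith
    · refine (abs_add_le_add (abs_add_le_add
        (abs_mul_le_mul (abs_mul_le_mul ((abs_neg c₀).trans_le hcabs) d3) (hb₀ t).1)
        (abs_mul_le_mul (abs_mul_le_mul hβ1 ht2) (hb₀ t).2.2))
        (abs_mul_le_mul (abs_mul_le_mul (abs_mul_le_mul (a := 2 * c₀ ^ 2)
          (abs_of_nonneg (by positivity)).le (hgabs t)) d1) (hb₀ t).2.2)).trans ?_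
      rw [hKdef]; nlinarith
    · refine (abs_add_le_add
        (abs_mul_le_mul (abs_mul_le_mul ((abs_neg (β - 1)).trans_le hβ1) ht2) (hb₀ t).2.1)
        (abs_mul_le_mul ((abs_neg L).trans_le hLabs)
          (abs_add_le_add (abs_mul_le_mul d2 (hb₀ t).1)
            (abs_mul_le_mul d1 (abs_mul_le_mul hcabs (hb₀ t).2.1))))).trans ?_
      rw [hKdef]; nlinarith
  have hB : ∀ t, HasDerivAt (fun t => K * α * (t + t ^ 2 / 2)) (K * α * (1 + t)) t := by
    intro t
    have := ((hasDerivAt_id' t).add (((hasDerivAt_id' t).pow 2).div_const 2)).const_mul (K * α)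
    exact this.congr_deriv (by simp)
  have hD0 : D 0 = 0 := by simp [D, reg]
  have hq : ∀ t, 0 ≤ t → |q₂ t| ≤ 2 * K * α * (1 + t ^ 2) ∧ |q₃ t| ≤ 2 * K * α * (1 + t ^ 2) := by
    intro t ht
    obtain ⟨-, e2, e3⟩ := energy_bound (c := fun s => c₀ * gauss α s) (τ := fun s => β * s / 2)
      hq₁ hq₂ hq₃ (by simp [q₁, hD0, hx]) (by simp [q₂, hy]) (by simp [q₃, hD0, hz]) hB (by simp)
      hR ht
    have : 2 * (K * α * (t + t ^ 2 / 2)) ≤ 2 * K * α * (1 + t ^ 2) := by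
      have : t + t ^ 2 / 2 ≤ 1 + t ^ 2 := by nlinarith [sq_nonneg (t - 1)]
      have := mul_le_mul_of_nonneg_left this (by positivity : 0 ≤ 2 * K * α)
      linarith
    exact ⟨e2.trans this, e3.trans this⟩
  -- The analogue for the difference of the corrected coordinate of `tail_bound`.
  have hE : ∀ t, HasDerivAt (fun t => q₁ t + kap L α t * q₃ t)
      (c₀ * gauss α t * (1 - t * reg t) * q₂ t + kap' L α t * q₃ t + (R₁ t + kap L α t * R₃ t))
      t := by
    intro t
    have := (hq₁ t).add ((hasDerivAt_kap L α t).mul (hq₃ t))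
    refine this.congr_deriv ?_
    unfold kap
    linear_combination (-gauss α t * reg t * t * q₂ t / 2) * hβ
  have hmain := abs_sub_le_of_abs_deriv_le hs.le (fun t _ => hE t)
    (fun t _ => ((hasDerivAt_id' t).const_mul ((26 * c₀ * K + 3 * c₀) * α))) (by
      intro t ht
      obtain ⟨_, _, _, q⟩ := reg_bounds ht
      have hp : 0 < 1 + t ^ 2 := by positivity
      obtain ⟨k1, k2⟩ := kap_bounds (K := L) hL hα ht
      obtain ⟨e2, e3⟩ := hq t ht
      have e1 : |c₀ * gauss α t * (1 - t * reg t)| ≤ c₀ * 1 * (1 / (1 + t ^ 2)) := by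
        refine abs_mul_le_mul (abs_mul_le_mul hcabs (hgabs t)) ?_
        rw [q, abs_of_pos (by positivity)]
      refine (abs_add_le_add (abs_add_le_add (abs_mul_le_mul e1 e2) (abs_mul_le_mul k2 e3))
        (abs_add_le_add (hR₁ t ht) (abs_mul_le_mul k1 (hR t ht).2.2))).trans ?_
      have f1 : c₀ * 1 * (1 / (1 + t ^ 2)) * (2 * K * α * (1 + t ^ 2)) = 2 * c₀ * K * α := by
        field_simp
      have f2 : 3 * L * (1 / (1 + t ^ 2)) * (2 * K * α * (1 + t ^ 2)) = 6 * L * (K * α) := by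
        field_simp; ring
      have f3 : L * reg t * (K * α * (1 + t)) ≤ 2 * L * (K * α) := by
        have : reg t * (1 + t) ≤ 2 := by linarith
        have := mul_le_mul_of_nonneg_left this (by positivity : 0 ≤ L * (K * α))
        linarith
      rw [f1, f2]
      have hKα : 0 ≤ K * α := by positivity
      nlinarith [mul_le_mul_of_nonneg_right hL3 hKα])
  have hz0 : q₁ 0 + kap L α 0 * q₃ 0 = 0 := by simp [q₁, q₃, hD0, hx, hz]
  simp only [hz0, sub_zero, mul_zero] at hmain
  obtain ⟨r0, r1, r2, -⟩ := reg_bounds hs.le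
  obtain ⟨d1, -, -⟩ := defect_bounds hα hs.le
  have k1 := (kap_bounds (K := L) hL hα hs.le).1
  have g1 : |2 * c₀ * (D s * z₀ s)| ≤ 2 * c₀ * (α * s / 4 * 1) :=
    abs_mul_le_mul h2cabs (abs_mul_le_mul d1 (hb₀ s).2.2)
  have hαs : 0 ≤ α * s := by positivity
  have g2 : |kap L α s * (L * (D s * x₀ s))| ≤ 3 * c₀ ^ 2 * (α * s) := by
    have kk : |kap L α s| ≤ 3 * c₀ := k1.trans (by nlinarith)
    refine (abs_mul_le_mul kk (abs_mul_le_mul hLabs (abs_mul_le_mul d1 (hb₀ s).1))).trans ?_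
    nlinarith [mul_nonneg (sq_nonneg c₀) hαs]
  have g3 : |kap L α s * (z s - z₀ s)| ≤ 6 * c₀ / s := by
    have hzz : |z s - z₀ s| ≤ 2 := (abs_sub _ _).trans (by linarith [(hb s).2.2, (hb₀ s).2.2])
    refine (abs_mul_le_mul k1 hzz).trans ?_
    rw [le_div_iff₀ hs]
    nlinarith
  have hid : x s - x₀ s = (q₁ s + kap L α s * q₃ s) + (-(2 * c₀ * (D s * z₀ s))
      + (kap L α s * (L * (D s * x₀ s)) + -(kap L α s * (z s - z₀ s)))) := by
    simp only [q₁, q₃]; ring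
  rw [hid]
  refine (abs_add_le_add hmain (abs_add_le_add ((abs_neg _).trans_le g1)
    (abs_add_le_add g2 ((abs_neg _).trans_le g3)))).trans ?_
  nlinarith [mul_nonneg hc₀.le hαs]

/-- The limits of the two solutions are compared through their values at `s = 1 / √α`, where the
errors `α * s` and `1 / s` balance. -/
theorem limit_bound_zero {c₀ α β a a₀ : ℝ} {x y z x₀ y₀ z₀ : ℝ → ℝ} (hc₀ : 0 < c₀) (hα : 0 < α)
    (hβ : 2 / 3 ≤ β) (hβ1 : |β - 1| ≤ α)
    (h : CoordSystem (fun s => c₀ * gauss α s) (fun s => β * s / 2) x y z)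
    (h₀ : CoordSystem (fun _ => c₀) (fun s => s / 2) x₀ y₀ z₀)
    (hn : x 0 ^ 2 + y 0 ^ 2 + z 0 ^ 2 = 1)
    (hx : x 0 = x₀ 0) (hy : y 0 = y₀ 0) (hz : z 0 = z₀ 0)
    (ha : Tendsto x atTop (nhds a)) (ha₀ : Tendsto x₀ atTop (nhds a₀)) :
    |a - a₀| ≤ (26 * c₀ * (3 + 3 * c₀ + 3 * c₀ ^ 2) + 42 * c₀ + 3 * c₀ ^ 2) * √α := by
  have hβ0 : 0 < β := by linarith
  have hL3 : 2 * c₀ / β ≤ 3 * c₀ := by rw [div_le_iff₀ hβ0]; nlinarith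
  have hL : 0 ≤ 2 * c₀ / β := by positivity
  have hLβ : 2 * c₀ / β * β = 2 * c₀ := by field_simp
  have hq := Real.sqrt_pos.2 hα
  have hq2 := Real.mul_self_sqrt hα.le
  have hs : 0 < (√α)⁻¹ := inv_pos.2 hq
  have t1 := tail_bound hc₀ hα.le hLβ hL hL3 h hn ha hs
  have t0 := tail_bound (α := 0) (β := 1) (K := 2 * c₀) hc₀ le_rfl (by ring) (by positivity)
    (by linarith) (by simpa [gauss] using h₀) (by rw [← hx, ← hy, ← hz]; exact hn) ha₀ hs
  have t2 := diff_bound_zero hc₀ hα.le hLβ hL hL3 hβ1 h h₀ hn hx hy hz hs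
  have e : α * (√α)⁻¹ = √α := by
    rw [mul_inv_eq_iff_eq_mul₀ hq.ne', hq2]
  rw [div_inv_eq_mul] at t1 t0 t2
  rw [e] at t2
  have hid : a - a₀ = (a - x (√α)⁻¹) + ((x (√α)⁻¹ - x₀ (√α)⁻¹) + -(a₀ - x₀ (√α)⁻¹)) := by ring
  rw [hid]
  exact (abs_add_le_add t1 (abs_add_le_add t2 ((abs_neg _).trans_le t0))).trans (le_of_eq (by ring))

/-! ### `α` near `1` -/

theorem gauss_le_of_half_le {α : ℝ} (hα : 1 / 2 ≤ α) (s : ℝ) :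
    gauss α s ≤ 128 * (1 / (1 + s ^ 2)) ^ 2 := by
  have h1 := Real.quadratic_le_exp_of_nonneg (x := s ^ 2 / 8) (by positivity)
  have h2 : Real.exp (s ^ 2 / 8) * gauss α s ≤ 1 := by
    unfold gauss
    rw [← Real.exp_add, Real.exp_le_one_iff]
    nlinarith [sq_nonneg s]
  have h3 : (1 + s ^ 2) ^ 2 / 128 ≤ Real.exp (s ^ 2 / 8) := by nlinarith [sq_nonneg s]
  have h4 := mul_le_mul_of_nonneg_right h3 (gauss_pos α s).le
  rw [div_pow, one_pow, mul_one_div, le_div_iff₀ (by positivity)]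
  linarith

/-- The energy estimate bounds the difference by `O(β * (1 + s ^ 2))`; in the equation for the first
component this is multiplied by the curvature, whose decay makes the result integrable. -/
theorem limit_bound_one {c₀ α β a a₁ : ℝ} {x y z x₁ y₁ z₁ : ℝ → ℝ} (hc₀ : 0 < c₀)
    (hα : 1 / 2 ≤ α) (hα1 : α ≤ 1) (hβ : 0 ≤ β) (hαβ : 1 - α ≤ β)
    (h : CoordSystem (fun s => c₀ * gauss α s) (fun s => β * s / 2) x y z)
    (h₁ : CoordSystem (fun s => c₀ * gauss 1 s) (fun _ => 0) x₁ y₁ z₁)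
    (hn : x 0 ^ 2 + y 0 ^ 2 + z 0 ^ 2 = 1)
    (hx : x 0 = x₁ 0) (hy : y 0 = y₁ 0) (hz : z 0 = z₁ 0)
    (ha : Tendsto x atTop (nhds a)) (ha₁ : Tendsto x₁ atTop (nhds a₁)) :
    |a - a₁| ≤ 256 * c₀ * (4 * c₀ + 2) * β := by
  have hα0 : 0 < α := by linarith
  have hb₁ := h₁.abs_le_one (by rw [← hx, ← hy, ← hz]; exact hn)
  have hΔ : ∀ t, |gauss α t - gauss 1 t| ≤ gauss α t * (β * t ^ 2 / 4) := by
    intro t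
    have e : gauss 1 t = gauss α t * gauss (1 - α) t := by
      unfold gauss
      rw [← Real.exp_add]
      congr 1
      ring
    have e1 := gauss_le_one (sub_nonneg.2 hα1) t
    have e2 := one_sub_gauss_le (1 - α) t
    rw [e, show gauss α t - gauss α t * gauss (1 - α) t
      = gauss α t * (1 - gauss (1 - α) t) by ring, abs_of_nonneg
      (mul_nonneg (gauss_pos α t).le (by linarith))]
    refine mul_le_mul_of_nonneg_left (e2.trans ?_) (gauss_pos α t).le
    have := mul_le_mul_of_nonneg_right hαβ (sq_nonneg t)
    linarith
  have hΔ2 : ∀ t, |gauss α t - gauss 1 t| ≤ 2 * β := by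
    intro t
    refine (hΔ t).trans ?_
    have e1 := mul_gauss_le α t
    have e2 : t ^ 2 * gauss α t ≤ 8 := by
      nlinarith [mul_nonneg (sq_nonneg t) (gauss_pos α t).le]
    nlinarith
  have hcabs : |c₀| ≤ c₀ := (abs_of_pos hc₀).le
  have hw₁ : ∀ s, HasDerivAt (fun s => x s - x₁ s)
      (c₀ * gauss α s * (y s - y₁ s) + c₀ * (gauss α s - gauss 1 s) * y₁ s) s := by
    intro s
    exact ((h s).1.sub (h₁ s).1).congr_deriv (by ring)
  have hw₂ : ∀ s, HasDerivAt (fun s => y s - y₁ s)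
      (-(c₀ * gauss α s) * (x s - x₁ s) + β * s / 2 * (z s - z₁ s)
        + (-c₀ * (gauss α s - gauss 1 s) * x₁ s + β * s / 2 * z₁ s)) s := by
    intro s
    exact ((h s).2.1.sub (h₁ s).2.1).congr_deriv (by ring)
  have hw₃ : ∀ s, HasDerivAt (fun s => z s - z₁ s)
      (-(β * s / 2) * (y s - y₁ s) + -(β * s / 2) * y₁ s) s := by
    intro s
    exact ((h s).2.2.sub (h₁ s).2.2).congr_deriv (by ring)
  have hB : ∀ t, HasDerivAt (fun t => β * (2 * c₀ * t + t ^ 2 / 4)) (β * (2 * c₀ + t / 2)) t := by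
    intro t
    have := (((hasDerivAt_id' t).const_mul (2 * c₀)).add
      (((hasDerivAt_id' t).pow 2).div_const 4)).const_mul β
    exact this.congr_deriv (by push_cast; ring)
  have hw : ∀ t, 0 ≤ t → |y t - y₁ t| ≤ (2 * c₀ + 1) * β * (1 + t ^ 2) := by
    intro t ht
    obtain ⟨-, e, -⟩ := energy_bound (c := fun s => c₀ * gauss α s) (τ := fun s => β * s / 2)
      hw₁ hw₂ hw₃ (by simp [hx]) (by simp [hy]) (by simp [hz]) hB (by simp) (by
        intro r hr
        have hβr : 0 ≤ β * r := by positivity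
        have hcβ : 0 ≤ c₀ * β := by positivity
        have u1 : |β * r / 2| ≤ β * r / 2 := (abs_of_nonneg (by positivity)).le
        refine ⟨(abs_mul_le_mul (abs_mul_le_mul hcabs (hΔ2 r)) (hb₁ r).2.1).trans (by linarith),
          (abs_add_le_add (abs_mul_le_mul (abs_mul_le_mul ((abs_neg c₀).trans_le hcabs) (hΔ2 r))
            (hb₁ r).1) (abs_mul_le_mul u1 (hb₁ r).2.2)).trans (by linarith),
          (abs_mul_le_mul ((abs_neg (β * r / 2)).trans_le u1) (hb₁ r).2.1).trans
            (by linarith)⟩) ht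
    refine e.trans ?_
    have : 2 * (2 * c₀ * t + t ^ 2 / 4) ≤ (2 * c₀ + 1) * (1 + t ^ 2) := by
      nlinarith [mul_nonneg hc₀.le (sq_nonneg (t - 1)), sq_nonneg t]
    nlinarith [mul_le_mul_of_nonneg_left this hβ]
  have hmain : ∀ s, 0 ≤ s → |x s - x₁ s| ≤ 256 * c₀ * (4 * c₀ + 2) * β := by
    intro s hs
    have := abs_sub_le_of_abs_deriv_le hs (fun t _ => hw₁ t)
      (fun t _ => (Real.hasDerivAt_arctan t).const_mul (128 * c₀ * (4 * c₀ + 2) * β)) (by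
        intro t ht
        have hg := gauss_pos α t
        have e1 : |c₀ * gauss α t| ≤ c₀ * gauss α t := (abs_of_pos (by positivity)).le
        refine (abs_add_le_add (abs_mul_le_mul e1 (hw t ht))
          (abs_mul_le_mul (abs_mul_le_mul hcabs (hΔ t)) (hb₁ t).2.1)).trans ?_
        have e2 : c₀ * gauss α t * ((2 * c₀ + 1) * β * (1 + t ^ 2))
            + c₀ * (gauss α t * (β * t ^ 2 / 4)) * 1
            ≤ c₀ * (4 * c₀ + 2) * β * (1 + t ^ 2) * gauss α t := by
          have hA : 0 ≤ c₀ * β * gauss α t := by positivity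
          have hpoly : (2 * c₀ + 1) * (1 + t ^ 2) + t ^ 2 / 4 ≤ (4 * c₀ + 2) * (1 + t ^ 2) := by
            nlinarith [mul_nonneg hc₀.le (sq_nonneg t), sq_nonneg t]
          nlinarith [mul_le_mul_of_nonneg_left hpoly hA]
        refine e2.trans ((mul_le_mul_of_nonneg_left (gauss_le_of_half_le hα t)
          (by positivity)).trans (le_of_eq ?_))
        field_simp)
    simp only [hx, sub_self, sub_zero, Real.arctan_zero, mul_zero] at this
    refine this.trans ?_
    have hat : Real.arctan s ≤ 2 := by
      linarith [Real.arctan_lt_pi_div_two s, Real.pi_le_four]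
    have := mul_le_mul_of_nonneg_left hat
      (by positivity : 0 ≤ 128 * c₀ * (4 * c₀ + 2) * β)
    linarith
  exact le_of_tendsto (ha.sub ha₁).abs (eventually_atTop.2 ⟨0, hmain⟩)

/-! ### Passage to the vector-valued system -/

theorem coordSystem_of_profileSystem {c₀ α : ℝ} {m n b : ℝ → Fin 3 → ℝ}
    (h : ProfileSystem c₀ α m n b) (j : Fin 3) :
    CoordSystem (fun s => c₀ * gauss α s) (fun s => √(1 - α ^ 2) * s / 2)
      (fun s => m s j) (fun s => n s j) (fun s => b s j) := by
  intro s
  obtain ⟨h1, h2, h3⟩ := h.1 s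
  refine ⟨?_, ?_, ?_⟩
  · simpa [gauss] using hasDerivAt_pi.1 h1 j
  · simpa [gauss] using hasDerivAt_pi.1 h2 j
  · simpa [gauss] using hasDerivAt_pi.1 h3 j

theorem initial_norm {c₀ α : ℝ} {m n b : ℝ → Fin 3 → ℝ}
    (h : ProfileSystem c₀ α m n b) (j : Fin 3) :
    m 0 j ^ 2 + n 0 j ^ 2 + b 0 j ^ 2 = 1 := by
  obtain ⟨-, h1, h2, h3⟩ := h
  rw [h1, h2, h3]
  fin_cases j <;> simp

theorem initial_eq {c₀ α α' : ℝ} {m n b m' n' b' : ℝ → Fin 3 → ℝ}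
    (h : ProfileSystem c₀ α m n b) (h' : ProfileSystem c₀ α' m' n' b') (j : Fin 3) :
    m 0 j = m' 0 j ∧ n 0 j = n' 0 j ∧ b 0 j = b' 0 j := by
  obtain ⟨-, h1, h2, h3⟩ := h
  obtain ⟨-, h1', h2', h3'⟩ := h'
  simp [h1, h2, h3, h1', h2', h3']

theorem sqrt_sum_sq_le {u v : Fin 3 → ℝ} {M : ℝ} (h : ∀ j, |u j - v j| ≤ M) :
    √(∑ j : Fin 3, (u j - v j) ^ 2) ≤ 2 * M := by
  have hM : 0 ≤ M := (abs_nonneg _).trans (h 0)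
  have h2 : ∀ j, (u j - v j) ^ 2 ≤ M ^ 2 := fun j => sq_le_sq' (abs_le.1 (h j)).1 (abs_le.1 (h j)).2
  rw [Real.sqrt_le_left (by positivity), Fin.sum_univ_three]
  nlinarith [h2 0, h2 1, h2 2]

end ProfileLimit

/-- Continuity in `α` of the limit vector `A(α)`: there is a
constant `C = C(c₀)` such that `|A(α) − A(0)| ≤ C √α |ln α|` for `α ∈ (0,1/2]`
and `|A(α) − A(1)| ≤ C √(1−α)` for `α ∈ [1/2,1]` (Euclidean distance). -/
theorem limit_vector_continuity_in_alpha (c₀ : ℝ) (hc₀ : 0 < c₀)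
    (m n b : ℝ → ℝ → Fin 3 → ℝ) (A : ℝ → Fin 3 → ℝ)
    (h : ∀ α ∈ Set.Icc (0 : ℝ) 1,
      ProfileSystem c₀ α (m α) (n α) (b α) ∧
      Tendsto (m α) atTop (nhds (A α))) :
    ∃ C : ℝ, 0 < C ∧
      (∀ α ∈ Set.Ioc (0 : ℝ) (1 / 2),
        Real.sqrt (∑ j : Fin 3, (A α j - A 0 j) ^ 2)
          ≤ C * Real.sqrt α * |Real.log α|) ∧
      (∀ α ∈ Set.Icc (1 / 2 : ℝ) 1,
        Real.sqrt (∑ j : Fin 3, (A α j - A 1 j) ^ 2)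
          ≤ C * Real.sqrt (1 - α)) := by
  have hsq : ∀ α ∈ Set.Icc (0 : ℝ) 1, √(1 - α ^ 2) ^ 2 = 1 - α ^ 2 := fun α hα =>
    Real.sq_sqrt (by nlinarith [hα.1, hα.2])
  set M := 26 * c₀ * (3 + 3 * c₀ + 3 * c₀ ^ 2) + 42 * c₀ + 3 * c₀ ^ 2 with hMdef
  have hM : 0 < M := by positivity
  set N := 256 * c₀ * (4 * c₀ + 2) with hNdef
  have hN : 0 < N := by positivity
  refine ⟨4 * M + 4 * N, by positivity, ?_, ?_⟩
  · rintro α ⟨hα0, hα1⟩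
    have hα : α ∈ Set.Icc (0 : ℝ) 1 := ⟨hα0.le, by linarith⟩
    have hz : (0 : ℝ) ∈ Set.Icc (0 : ℝ) 1 := ⟨le_rfl, zero_le_one⟩
    obtain ⟨hs, hl⟩ := h α hα
    obtain ⟨hs₀, hl₀⟩ := h 0 hz
    have hβ := hsq α hα
    have hβ0 := Real.sqrt_nonneg (1 - α ^ 2)
    set β := √(1 - α ^ 2) with hβdef
    have hβ1 : β ≤ 1 := by nlinarith
    have hβ2 : 2 / 3 ≤ β := by nlinarith
    have hβα : |β - 1| ≤ α := abs_le.2 ⟨by nlinarith, by linarith⟩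
    have hj : ∀ j, |A α j - A 0 j| ≤ M * √α := by
      intro j
      obtain ⟨i1, i2, i3⟩ := ProfileLimit.initial_eq hs hs₀ j
      exact ProfileLimit.limit_bound_zero hc₀ hα0 hβ2 hβα
        (ProfileLimit.coordSystem_of_profileSystem hs j)
        (by simpa [ProfileLimit.gauss] using ProfileLimit.coordSystem_of_profileSystem hs₀ j)
        (ProfileLimit.initial_norm hs j) i1 i2 i3
        (tendsto_pi_nhds.1 hl j) (tendsto_pi_nhds.1 hl₀ j)
    refine (ProfileLimit.sqrt_sum_sq_le hj).trans ?_
    have hlog : 1 / 2 ≤ |Real.log α| := by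
      have h1 := Real.log_le_log hα0 hα1
      rw [one_div, Real.log_inv] at h1
      have h2 := neg_le_abs (Real.log α)
      linarith [Real.log_two_gt_d9]
    have hq := Real.sqrt_nonneg α
    have h1 := mul_le_mul_of_nonneg_left hlog (by positivity : 0 ≤ (4 * M + 4 * N) * √α)
    nlinarith [mul_nonneg hN.le hq]
  · rintro α ⟨hα0, hα1⟩
    have hα : α ∈ Set.Icc (0 : ℝ) 1 := ⟨by linarith, hα1⟩
    have ho : (1 : ℝ) ∈ Set.Icc (0 : ℝ) 1 := ⟨zero_le_one, le_rfl⟩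
    obtain ⟨hs, hl⟩ := h α hα
    obtain ⟨hs₁, hl₁⟩ := h 1 ho
    have hβ := hsq α hα
    have hβ0 := Real.sqrt_nonneg (1 - α ^ 2)
    set β := √(1 - α ^ 2) with hβdef
    have hβ1 : β ≤ 1 := by nlinarith
    have hαβ : 1 - α ≤ β := by nlinarith
    have hβs : β ≤ 2 * √(1 - α) := by
      have := Real.sq_sqrt (sub_nonneg.2 hα1)
      refine abs_le_of_sq_le_sq' ?_ (by positivity) |>.2
      nlinarith
    have hj : ∀ j, |A α j - A 1 j| ≤ N * β := by
      intro j
      obtain ⟨i1, i2, i3⟩ := ProfileLimit.initial_eq hs hs₁ j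
      exact ProfileLimit.limit_bound_one hc₀ hα0 hα1 hβ0 hαβ
        (ProfileLimit.coordSystem_of_profileSystem hs j)
        (by simpa using ProfileLimit.coordSystem_of_profileSystem hs₁ j)
        (ProfileLimit.initial_norm hs j) i1 i2 i3
        (tendsto_pi_nhds.1 hl j) (tendsto_pi_nhds.1 hl₁ j)
    refine (ProfileLimit.sqrt_sum_sq_le hj).trans ?_
    have hq := Real.sqrt_nonneg (1 - α)
    nlinarith [mul_le_mul_of_nonneg_left hβs hN.le, mul_nonneg hM.le hq]
end

section
/- For c₀>0 and α∈[0,1], let A⁺(c₀,α)=(A₁⁺,A₂⁺,A₃⁺)∈ℝ³ denote the limit as s→+∞ of the first component function m of a solution of the self-similar profile system with parameters c₀ and α, and set A⁻(c₀,α)=(A₁⁺,−A₂⁺,−A₃⁺). Then: (i) for every fixed α∈(0,1) there exists c₀*>0 such that A⁺(c₀,α)≠A⁻(c₀,α) for all c₀∈(0,c₀*); (ii) for every fixed c₀>0 there exists α₀*>0 such that A⁺(c₀,α)≠A⁻(c₀,α) for all α∈(0,α₀*); (iii) for every fixed c₀>0 with c₀≠k√π for all k∈ℕ, there exists α₁*∈(0,1)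 such that A⁺(c₀,α)≠A⁻(c₀,α) for all α∈(α₁*,1). -/
/-!
The limits `A⁺` and `A⁻` agree only if `A₂⁺ = A₃⁺ = 0`, and since `A⁺` is a unit vector
(`limit_norm_sq`) this forces `A₁⁺ = ±1`. Each coordinate `j` of the frame gives a scalar solution
`(mⱼ, nⱼ, bⱼ)` of the same linear system (`IsRow`), on which the pairing of two rows is conserved.

* Small `c₀`: in the frame rotating with the torsion angle, `n₂` is `cos(βs²/4)` up to `O(c₀)`, so
  `A₂⁺ = c₀ I + O(c₀²)` with `I = ∫₀^∞ e^{-αs²/4} cos(βs²/4) ds > 0` (`small_curvature`,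
  `exists_pos_tendsto_cos`).
* `α` near `1`: in the frame rotating with the curvature angle, `A₂⁺ = sin(c₀ √(π/α)) + O(β)`
  (`small_torsion`), and `sin(c₀ √π) ≠ 0` when `c₀` is not a multiple of `√π`.
* Small `α`: `A₁⁺(c₀, α)` is continuous at `α = 0`, because `m` converges as `s → ∞` uniformly in
  `α` (`tail_bound`, from the monotonicity of `c/τ`) and depends continuously on `α` on bounded
  intervals (`small_damping`). It remains to see that `|A₁⁺(c₀, 0)| < 1` (`undamped_limit`). This
  uses no explicit formula: if the limit were `±1`, then `n₁` and `b₁` would tend to zero, with the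
  rates in `decay`, and a quadratic quantity `Q` that starts from `0` and is nonincreasing would
  tend to `0` at infinity; its derivative would then vanish, so `n₁ = 0`, which contradicts
  `n₁'(0) = -c₀`.
-/

open Real Filter

open scoped Topology

/-! ### Scalar components of the frame -/

/-- One scalar component of a Serret–Frenet frame: the system is linear, so the `j`-th coordinates
of `m, n, b` solve the same equations among themselves. -/
structure IsRow (c τ m n b : ℝ → ℝ) : Prop where
  dm : ∀ s, HasDerivAt m (c s * n s) s
  dn : ∀ s, HasDerivAt n (-c s * m s + τ s * b s) s
  db : ∀ s, HasDerivAt b (-τ s * n s) s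

lemma SerretFrenet.isRow {c τ : ℝ → ℝ} {m n b : ℝ → Fin 3 → ℝ} (h : SerretFrenet c τ m n b)
    (j : Fin 3) : IsRow c τ (fun s => m s j) (fun s => n s j) (fun s => b s j) where
  dm s := by simpa using hasDerivAt_pi.1 (h s).1 j
  dn s := by simpa using hasDerivAt_pi.1 (h s).2.1 j
  db s := by simpa using hasDerivAt_pi.1 (h s).2.2 j

/-- The pairing of two rows is conserved, because the coefficient matrix is antisymmetric. -/
lemma IsRow.pairing {c τ m n b m' n' b' : ℝ → ℝ} (h : IsRow c τ m n b)
    (h' : IsRow c τ m' n' b') (s : ℝ) :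
    m s * m' s + n s * n' s + b s * b' s = m 0 * m' 0 + n 0 * n' 0 + b 0 * b' 0 := by
  have hd : ∀ x, HasDerivAt (fun s => m s * m' s + n s * n' s + b s * b' s) 0 x := by
    intro x
    refine HasDerivAt.congr_deriv ((((h.dm x).mul (h'.dm x)).add ((h.dn x).mul (h'.dn x))).add
      ((h.db x).mul (h'.db x))) ?_
    ring
  exact is_const_of_deriv_eq_zero (fun x => (hd x).differentiableAt) (fun x => (hd x).deriv) s 0

lemma IsRow.norm_sq {c τ m n b : ℝ → ℝ} (h : IsRow c τ m n b)
    (h0 : m 0 ^ 2 + n 0 ^ 2 + b 0 ^ 2 = 1) (s : ℝ) : m s ^ 2 + n s ^ 2 + b s ^ 2 = 1 := by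
  rw [← h0]
  simpa [sq] using h.pairing h s

lemma IsRow.abs_le {c τ m n b : ℝ → ℝ} (h : IsRow c τ m n b)
    (h0 : m 0 ^ 2 + n 0 ^ 2 + b 0 ^ 2 = 1) (s : ℝ) : |m s| ≤ 1 ∧ |n s| ≤ 1 ∧ |b s| ≤ 1 := by
  have := h.norm_sq h0 s
  refine ⟨?_, ?_, ?_⟩ <;> apply abs_le_one_iff_mul_self_le_one.2 <;>
    nlinarith [sq_nonneg (m s), sq_nonneg (n s), sq_nonneg (b s)]

/-- Comparison of increments from a comparison of derivatives. -/
lemma abs_sub_le_of_deriv {f g f' g' : ℝ → ℝ} {a : ℝ} (hf : ∀ x ≥ a, HasDerivAt f (f' x) x)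
    (hg : ∀ x ≥ a, HasDerivAt g (g' x) x) (hle : ∀ x ≥ a, |f' x| ≤ g' x) {x : ℝ} (hx : a ≤ x) :
    |f x - f a| ≤ g x - g a := by
  have h1 : MonotoneOn (fun x => g x - f x) (Set.Ici a) := by
    refine monotoneOn_of_hasDerivWithinAt_nonneg (f' := fun x => g' x - f' x) (convex_Ici a)
      (fun x hx => ((hg x hx).sub (hf x hx)).continuousAt.continuousWithinAt)
      (fun x hx => ?_) (fun x hx => ?_)
    · rw [interior_Ici] at hx
      exact ((hg x hx.le).sub (hf x hx.le)).hasDerivWithinAt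
    · rw [interior_Ici] at hx
      linarith [hle x hx.le, le_abs_self (f' x)]
  have h2 : MonotoneOn (fun x => g x + f x) (Set.Ici a) := by
    refine monotoneOn_of_hasDerivWithinAt_nonneg (f' := fun x => g' x + f' x) (convex_Ici a)
      (fun x hx => ((hg x hx).add (hf x hx)).continuousAt.continuousWithinAt)
      (fun x hx => ?_) (fun x hx => ?_)
    · rw [interior_Ici] at hx
      exact ((hg x hx.le).add (hf x hx.le)).hasDerivWithinAt
    · rw [interior_Ici] at hx
      linarith [hle x hx.le, neg_le_abs (f' x)]
  have e1 := h1 Set.self_mem_Ici hx hx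
  have e2 := h2 Set.self_mem_Ici hx hx
  simp only at e1 e2
  rw [abs_le]
  constructor <;> linarith

/-- The limit of the tangent is a unit vector: the frame is an orthogonal matrix, so its first
column is a unit vector because its rows are orthonormal. -/
lemma limit_norm_sq {c₀ α : ℝ} {m n b : ℝ → Fin 3 → ℝ} {A : Fin 3 → ℝ}
    (h : ProfileSystem c₀ α m n b) (hA : Tendsto m atTop (𝓝 A)) :
    A 0 ^ 2 + A 1 ^ 2 + A 2 ^ 2 = 1 := by
  obtain ⟨hs, hm, hn, hb⟩ := h
  have key : ∀ s, m s 0 ^ 2 + m s 1 ^ 2 + m s 2 ^ 2 = 1 := by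
    intro s
    have hp := fun i j => (hs.isRow i).pairing (hs.isRow j) s
    let M : Matrix (Fin 3) (Fin 3) ℝ := Matrix.of fun i => ![m s i, n s i, b s i]
    have h1 : M * M.transpose = 1 := by
      ext i j
      have := hp i j
      simp only [hm, hn, hb] at this
      simp only [Matrix.mul_apply, Fin.sum_univ_three, M, Matrix.transpose_apply, Matrix.of_apply]
      simp only [Matrix.cons_val]
      rw [this]
      fin_cases i <;> fin_cases j <;> simp
    have h2 : M.transpose * M = 1 := mul_eq_one_comm.1 h1
    have h3 := congrFun (congrFun h2 0) 0
    simp [Matrix.mul_apply, Fin.sum_univ_three, M] at h3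
    linarith [h3]
  have hc := tendsto_pi_nhds.1 hA
  have hl := (((hc 0).pow 2).add ((hc 1).pow 2)).add ((hc 2).pow 2)
  simp only [key] at hl
  exact tendsto_nhds_unique hl tendsto_const_nhds

/-! ### Gaussian integrals -/

/-- The total curvature `∫₀ˢ e^{-αx²/4} dx` on `[0, s]`, for `c₀ = 1`. -/
noncomputable def gaussInt (α s : ℝ) : ℝ := ∫ x in (0 : ℝ)..s, Real.exp (-α * x ^ 2 / 4)

lemma gaussInt_zero (α : ℝ) : gaussInt α 0 = 0 := by simp [gaussInt]

lemma hasDerivAt_gaussInt (α s : ℝ) :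
    HasDerivAt (gaussInt α) (Real.exp (-α * s ^ 2 / 4)) s :=
  (Continuous.integral_hasStrictDerivAt (f := fun x : ℝ => Real.exp (-α * x ^ 2 / 4))
    (by fun_prop) 0 s).hasDerivAt

lemma tendsto_gaussInt {α : ℝ} (hα : 0 < α) :
    Tendsto (gaussInt α) atTop (𝓝 (√(π / α))) := by
  have hi := (integrable_exp_neg_mul_sq (b := α / 4) (by positivity)).integrableOn
    (s := Set.Ioi 0)
  have h := MeasureTheory.intervalIntegral_tendsto_integral_Ioi 0 hi tendsto_id
  rw [integral_gaussian_Ioi] at h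
  convert h using 2
  · simp only [gaussInt, id]
    congr 1
    ext x
    ring_nf
  · rw [show π / (α / 4) = 2 ^ 2 * (π / α) by field_simp; norm_num, Real.sqrt_mul (by norm_num),
      Real.sqrt_sq (by norm_num)]
    ring

lemma gaussInt_le {α : ℝ} (hα : 0 < α) (s : ℝ) : gaussInt α s ≤ √(π / α) := by
  refine Monotone.ge_of_tendsto ?_ (tendsto_gaussInt hα) s
  exact monotone_of_deriv_nonneg (fun s => (hasDerivAt_gaussInt α s).differentiableAt)
    fun s => by rw [(hasDerivAt_gaussInt α s).deriv]; positivity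

/-- The oscillating integral `∫₀^∞ e^{-αx²/4} cos(βx²/4) dx` is the real part of the
principal square root of `π / (α + iβ)`, which lies in the right half plane. -/
lemma exists_pos_tendsto_cos {α : ℝ} (hα : 0 < α) (β : ℝ) : ∃ I : ℝ, 0 < I ∧
    Tendsto (fun s => ∫ x in (0 : ℝ)..s, Real.exp (-α * x ^ 2 / 4) * Real.cos (β * x ^ 2 / 4))
      atTop (𝓝 I) := by
  set z : ℂ := ⟨α / 4, β / 4⟩ with hz
  have hzre : 0 < z.re := by simp only [hz]; positivity
  have hz0 : z ≠ 0 := by rintro h; simp [h] at hzre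
  have hi := (integrable_cexp_neg_mul_sq hzre).integrableOn (s := Set.Ioi 0)
  have h := MeasureTheory.intervalIntegral_tendsto_integral_Ioi 0 hi tendsto_id
  rw [integral_gaussian_complex_Ioi hzre] at h
  refine ⟨_, ?_, (Complex.continuous_re.tendsto _ |>.comp h).congr fun s => ?_⟩
  · have h1 : 0 < ((π : ℂ) / z).re := by
      rw [Complex.div_re]
      simp only [Complex.ofReal_re, Complex.ofReal_im, zero_mul, zero_div, add_zero]
      have := Complex.normSq_pos.2 hz0
      positivity
    have h2 := Complex.abs_arg_lt_pi_div_two_iff.2 (Or.inl h1)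
    have h3 : (((π : ℂ) / z) ^ (1 / 2 : ℂ)).re
        = ‖(π : ℂ) / z‖ ^ (1 / 2 : ℝ) * Real.cos (Complex.arg (π / z) * (1 / 2 : ℝ)) := by
      rw [← Complex.cpow_ofReal_re]; norm_num
    have h4 : 0 < ‖(π : ℂ) / z‖ := norm_pos_iff.2 (by rintro h; simp [h] at h1)
    rw [abs_lt] at h2
    have h5 : 0 < Real.cos (Complex.arg (π / z) * (1 / 2 : ℝ)) :=
      Real.cos_pos_of_mem_Ioo ⟨by linarith, by linarith⟩
    have h6 : (((π : ℂ) / z) ^ (1 / 2 : ℂ) / 2).re = (((π : ℂ) / z) ^ (1 / 2 : ℂ)).re / 2 := by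
      simp
    rw [h6, h3]
    positivity
  · simp only [Function.comp, id]
    have hint : IntervalIntegrable (fun x : ℝ => Complex.exp (-z * x ^ 2)) MeasureTheory.volume
        0 s := (by fun_prop : Continuous fun x : ℝ => Complex.exp (-z * x ^ 2)).intervalIntegrable _ _
    have := Complex.reCLM.intervalIntegral_comp_comm hint
    simp only [Complex.reCLM_apply] at this
    rw [← this]
    congr 1
    ext x
    rw [Complex.exp_re]
    have e : (-z * (x : ℂ) ^ 2) = ⟨-α * x ^ 2 / 4, -(β * x ^ 2 / 4)⟩ := by
      apply Complex.ext <;> simp [hz, ← Complex.ofReal_pow] <;> ring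
    rw [e]
    simp

/-! ### The second coordinate: small curvature, and small torsion -/

/-- In the frame rotating with the torsion angle `φ = βs²/4` the normal moves only because of the
curvature, so `n₂` is `cos φ` up to the total curvature; integrating gives `m₂`. -/
lemma small_curvature {c₀ α β : ℝ} (hc : 0 < c₀) (hα : 0 < α) {m n b : ℝ → ℝ}
    (h : IsRow (fun s => c₀ * Real.exp (-α * s ^ 2 / 4)) (fun s => β * s / 2) m n b)
    (hm : m 0 = 0) (hn : n 0 = 1) (hb : b 0 = 0) {s : ℝ} (hs : 0 ≤ s) :
    |m s - c₀ * ∫ x in (0 : ℝ)..s, Real.exp (-α * x ^ 2 / 4) * Real.cos (β * x ^ 2 / 4)|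
      ≤ 2 * c₀ ^ 2 * √(π / α) ^ 2 := by
  set C := √(π / α)
  have hC : 0 ≤ C := Real.sqrt_nonneg _
  have hle := h.abs_le (by simp [hm, hn, hb])
  have hφ : ∀ x : ℝ, HasDerivAt (fun s : ℝ => β * s ^ 2 / 4) (β * x / 2) x := by
    intro x
    refine HasDerivAt.congr_deriv ((((hasDerivAt_id' x).pow 2).const_mul β).div_const 4) ?_
    push_cast; ring
  have hcos := fun x => (hφ x).cos
  have hsin := fun x => (hφ x).sin
  have hy : ∀ x, HasDerivAt (fun s => n s * Real.cos (β * s ^ 2 / 4) - b s * Real.sin (β * s ^ 2 / 4))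
      (-(c₀ * Real.exp (-α * x ^ 2 / 4)) * m x * Real.cos (β * x ^ 2 / 4)) x := by
    intro x
    refine HasDerivAt.congr_deriv (((h.dn x).mul (hcos x)).sub ((h.db x).mul (hsin x))) ?_
    ring
  have hz : ∀ x, HasDerivAt (fun s => n s * Real.sin (β * s ^ 2 / 4) + b s * Real.cos (β * s ^ 2 / 4))
      (-(c₀ * Real.exp (-α * x ^ 2 / 4)) * m x * Real.sin (β * x ^ 2 / 4)) x := by
    intro x
    refine HasDerivAt.congr_deriv (((h.dn x).mul (hsin x)).add ((h.db x).mul (hcos x))) ?_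
    ring
  have hg : ∀ k x, HasDerivAt (fun s => k * gaussInt α s) (k * Real.exp (-α * x ^ 2 / 4)) x :=
    fun k x => (hasDerivAt_gaussInt α x).const_mul k
  have hbd : ∀ x t : ℝ, |t| ≤ 1 → |-(c₀ * Real.exp (-α * x ^ 2 / 4)) * m x * t|
      ≤ c₀ * Real.exp (-α * x ^ 2 / 4) := by
    intro x t ht
    rw [abs_mul, abs_mul, abs_neg, abs_of_pos (by positivity : 0 < c₀ * Real.exp (-α * x ^ 2 / 4))]
    have : |m x| * |t| ≤ 1 := mul_le_one₀ (hle x).1 (abs_nonneg _) ht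
    have := mul_le_mul_of_nonneg_left this
      (by positivity : 0 ≤ c₀ * Real.exp (-α * x ^ 2 / 4))
    linarith
  have hn' : ∀ x ≥ 0, |n x - Real.cos (β * x ^ 2 / 4)| ≤ 2 * c₀ * C := by
    intro x hx
    have e1 := abs_sub_le_of_deriv (a := 0) (fun x _ => hy x) (fun x _ => hg c₀ x)
      (fun x _ => hbd x _ (Real.abs_cos_le_one _)) hx
    have e2 := abs_sub_le_of_deriv (a := 0) (fun x _ => hz x) (fun x _ => hg c₀ x)
      (fun x _ => hbd x _ (Real.abs_sin_le_one _)) hx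
    simp only [gaussInt_zero, hn, hb] at e1 e2
    norm_num at e1 e2
    have hG := mul_le_mul_of_nonneg_left (gaussInt_le hα x) hc.le
    set co := Real.cos (β * x ^ 2 / 4) with hco
    set si := Real.sin (β * x ^ 2 / 4) with hsi
    have hcs : si ^ 2 + co ^ 2 = 1 := Real.sin_sq_add_cos_sq _
    have e : n x - co = (n x * co - b x * si - 1) * co + (n x * si + b x * co) * si := by
      linear_combination (-(n x)) * hcs
    rw [e]
    have h1 : |(n x * co - b x * si - 1) * co| ≤ c₀ * C := by
      rw [abs_mul]
      have := mul_le_mul (e1.trans hG) (Real.abs_cos_le_one (β * x ^ 2 / 4)) (abs_nonneg _)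
        (by positivity)
      linarith
    have h2 : |(n x * si + b x * co) * si| ≤ c₀ * C := by
      rw [abs_mul]
      have := mul_le_mul (e2.trans hG) (Real.abs_sin_le_one (β * x ^ 2 / 4)) (abs_nonneg _)
        (by positivity)
      linarith
    linarith [abs_add_le ((n x * co - b x * si - 1) * co) ((n x * si + b x * co) * si)]
  have hI : ∀ x, HasDerivAt
      (fun s => ∫ x in (0 : ℝ)..s, Real.exp (-α * x ^ 2 / 4) * Real.cos (β * x ^ 2 / 4))
      (Real.exp (-α * x ^ 2 / 4) * Real.cos (β * x ^ 2 / 4)) x := fun x =>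
    (Continuous.integral_hasStrictDerivAt
      (f := fun x : ℝ => Real.exp (-α * x ^ 2 / 4) * Real.cos (β * x ^ 2 / 4))
      (by fun_prop) 0 x).hasDerivAt
  have e := abs_sub_le_of_deriv (a := 0) (fun x _ => (h.dm x).sub ((hI x).const_mul c₀))
    (fun x _ => hg (2 * c₀ ^ 2 * C) x) (fun x hx => ?_) hs
  · simp only [gaussInt_zero, hm, Pi.sub_apply] at e
    simp only [mul_zero, sub_zero, intervalIntegral.integral_same] at e
    refine e.trans ?_
    have := mul_le_mul_of_nonneg_left (gaussInt_le hα s) (by positivity : 0 ≤ 2 * c₀ ^ 2 * C)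
    change _ ≤ 2 * c₀ ^ 2 * C * C at this
    linarith
  · have : c₀ * Real.exp (-α * x ^ 2 / 4) * n x
        - c₀ * (Real.exp (-α * x ^ 2 / 4) * Real.cos (β * x ^ 2 / 4))
        = c₀ * Real.exp (-α * x ^ 2 / 4) * (n x - Real.cos (β * x ^ 2 / 4)) := by ring
    rw [this, abs_mul, abs_of_pos (by positivity : 0 < c₀ * Real.exp (-α * x ^ 2 / 4))]
    have := mul_le_mul_of_nonneg_left (hn' x hx)
      (by positivity : 0 ≤ c₀ * Real.exp (-α * x ^ 2 / 4))
    linarith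

/-- A pointwise bound for the Gaussian by the derivative of the bounded function `arctan`. -/
lemma sq_mul_exp_le {α : ℝ} (hα : 1 / 2 ≤ α) (x : ℝ) :
    x ^ 2 * Real.exp (-α * x ^ 2 / 4) ≤ 128 * (1 / (1 + x ^ 2)) := by
  have h1 : Real.exp (-α * x ^ 2 / 4) ≤ Real.exp (-(x ^ 2 / 8)) :=
    Real.exp_le_exp.2 (by nlinarith [sq_nonneg x])
  have h2 := Real.quadratic_le_exp_of_nonneg (by positivity : 0 ≤ x ^ 2 / 8)
  have h3 : Real.exp (-(x ^ 2 / 8)) ≤ 1 / (1 + x ^ 2 / 8 + (x ^ 2 / 8) ^ 2 / 2) := by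
    rw [Real.exp_neg, ← one_div]
    exact one_div_le_one_div_of_le (by positivity) h2
  calc x ^ 2 * Real.exp (-α * x ^ 2 / 4)
      ≤ x ^ 2 * (1 / (1 + x ^ 2 / 8 + (x ^ 2 / 8) ^ 2 / 2)) :=
        mul_le_mul_of_nonneg_left (h1.trans h3) (sq_nonneg x)
    _ ≤ 128 * (1 / (1 + x ^ 2)) := by
        rw [mul_one_div, mul_one_div, div_le_div_iff₀ (by positivity) (by positivity)]
        nlinarith [sq_nonneg x, sq_nonneg (x ^ 2)]

/-- In the frame rotating with the curvature angle `θ = c₀ ∫ e^{-αs²/4}` only the torsion acts, so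
`m₂` is `sin θ` up to a multiple of `β`. -/
lemma small_torsion {c₀ α β : ℝ} (hc : 0 < c₀) (hα : 1 / 2 ≤ α) (hβ : 0 ≤ β) {m n b : ℝ → ℝ}
    (h : IsRow (fun s => c₀ * Real.exp (-α * s ^ 2 / 4)) (fun s => β * s / 2) m n b)
    (hm : m 0 = 0) (hn : n 0 = 1) (hb : b 0 = 0) {s : ℝ} (hs : 0 ≤ s) :
    |m s - Real.sin (c₀ * gaussInt α s)| ≤ 128 * c₀ * β := by
  have hle := h.abs_le (by simp [hm, hn, hb])
  have hθ : ∀ x, HasDerivAt (fun s => c₀ * gaussInt α s) (c₀ * Real.exp (-α * x ^ 2 / 4)) x :=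
    fun x => (hasDerivAt_gaussInt α x).const_mul c₀
  have hcos := fun x => (hθ x).cos
  have hsin := fun x => (hθ x).sin
  have hy : ∀ x, HasDerivAt
      (fun s => m s * Real.cos (c₀ * gaussInt α s) - n s * Real.sin (c₀ * gaussInt α s))
      (-(β * x / 2) * b x * Real.sin (c₀ * gaussInt α x)) x := by
    intro x
    refine HasDerivAt.congr_deriv (((h.dm x).mul (hcos x)).sub ((h.dn x).mul (hsin x))) ?_
    ring
  have hz : ∀ x, HasDerivAt
      (fun s => m s * Real.sin (c₀ * gaussInt α s) + n s * Real.cos (c₀ * gaussInt α s))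
      ((β * x / 2) * b x * Real.cos (c₀ * gaussInt α x)) x := by
    intro x
    refine HasDerivAt.congr_deriv (((h.dm x).mul (hsin x)).add ((h.dn x).mul (hcos x))) ?_
    ring
  have hg : ∀ x : ℝ, HasDerivAt (fun s => β * s ^ 2 / 4) (β * x / 2) x := by
    intro x
    refine HasDerivAt.congr_deriv ((((hasDerivAt_id' x).pow 2).const_mul β).div_const 4) ?_
    push_cast; ring
  have hbd : ∀ x t : ℝ, 0 ≤ x → |t| ≤ 1 → |(β * x / 2) * b x * t| ≤ β * x / 2 := by
    intro x t hx ht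
    rw [abs_mul, abs_mul, abs_of_nonneg (by positivity : 0 ≤ β * x / 2)]
    have : |b x| * |t| ≤ 1 := mul_le_one₀ (hle x).2.2 (abs_nonneg _) ht
    have := mul_le_mul_of_nonneg_left this (by positivity : 0 ≤ β * x / 2)
    linarith
  have hn' : ∀ x ≥ 0, |n x - Real.cos (c₀ * gaussInt α x)| ≤ β * x ^ 2 / 2 := by
    intro x hx
    have e1 := abs_sub_le_of_deriv (a := 0) (fun x _ => hy x) (fun x _ => hg x)
      (fun x hx => by
        simpa [neg_mul, abs_neg] using hbd x _ hx (Real.abs_sin_le_one (c₀ * gaussInt α x))) hx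
    have e2 := abs_sub_le_of_deriv (a := 0) (fun x _ => hz x) (fun x _ => hg x)
      (fun x hx => hbd x _ hx (Real.abs_cos_le_one _)) hx
    simp only [gaussInt_zero, hn, hm] at e1 e2
    norm_num at e1 e2
    have hcs := Real.sin_sq_add_cos_sq (c₀ * gaussInt α x)
    have hco := Real.abs_cos_le_one (c₀ * gaussInt α x)
    have hsi := Real.abs_sin_le_one (c₀ * gaussInt α x)
    set co := Real.cos (c₀ * gaussInt α x)
    set si := Real.sin (c₀ * gaussInt α x)
    have e : n x - co = (m x * si + n x * co - 1) * co - (m x * co - n x * si) * si := by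
      linear_combination (-(n x)) * hcs
    rw [e]
    have h0 : 0 ≤ β * x ^ 2 / 4 := by positivity
    have h1 : |(m x * si + n x * co - 1) * co| ≤ β * x ^ 2 / 4 := by
      rw [abs_mul]
      have := mul_le_mul e2 hco (abs_nonneg _) h0
      linarith
    have h2 : |(m x * co - n x * si) * si| ≤ β * x ^ 2 / 4 := by
      rw [abs_mul]
      have := mul_le_mul e1 hsi (abs_nonneg _) h0
      linarith
    linarith [abs_sub ((m x * si + n x * co - 1) * co) ((m x * co - n x * si) * si)]
  have e := abs_sub_le_of_deriv (a := 0) (fun x _ => (h.dm x).sub (hsin x))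
    (fun x _ => (Real.hasDerivAt_arctan x).const_mul (64 * c₀ * β)) (fun x hx => ?_) hs
  · simp only [gaussInt_zero, hm, Pi.sub_apply] at e
    norm_num at e
    refine e.trans ?_
    have h1 : Real.arctan s ≤ 2 := by linarith [Real.arctan_lt_pi_div_two s, Real.pi_le_four]
    have := mul_le_mul_of_nonneg_left h1 (by positivity : 0 ≤ 64 * c₀ * β)
    linarith
  · have : c₀ * Real.exp (-α * x ^ 2 / 4) * n x
        - Real.cos (c₀ * gaussInt α x) * (c₀ * Real.exp (-α * x ^ 2 / 4))
        = c₀ * Real.exp (-α * x ^ 2 / 4) * (n x - Real.cos (c₀ * gaussInt α x)) := by ring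
    rw [this, abs_mul, abs_of_pos (by positivity : 0 < c₀ * Real.exp (-α * x ^ 2 / 4))]
    have h1 := mul_le_mul_of_nonneg_left (hn' x hx)
      (by positivity : 0 ≤ c₀ * Real.exp (-α * x ^ 2 / 4))
    have h2 := mul_le_mul_of_nonneg_left (sq_mul_exp_le hα x) (by positivity : 0 ≤ c₀ * β / 2)
    linarith

/-! ### The first coordinate as the damping tends to zero -/

/-- The quantity `m + (c/τ) b` has derivative `(c/τ)' b`, and `c/τ` decreases, so the oscillation
of `m` beyond `S` is at most `3 (c/τ)(S)`. The bound is uniform in `α`. -/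
lemma tail_bound {c₀ α β : ℝ} (hc : 0 < c₀) (hα : 0 ≤ α) (hβ : 1 / 2 ≤ β) {m n b : ℝ → ℝ}
    (h : IsRow (fun s => c₀ * Real.exp (-α * s ^ 2 / 4)) (fun s => β * s / 2) m n b)
    (h0 : m 0 ^ 2 + n 0 ^ 2 + b 0 ^ 2 = 1) {S s : ℝ} (hS : 0 < S) (hs : S ≤ s) :
    |m s - m S| ≤ 12 * c₀ / S := by
  have hβ0 : 0 < β := by linarith
  have hle := h.abs_le h0
  set q : ℝ → ℝ := fun x => 2 * c₀ * Real.exp (-α * x ^ 2 / 4) / (β * x) with hq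
  set q' : ℝ → ℝ := fun x => -(2 * c₀ * Real.exp (-α * x ^ 2 / 4) * (α / (2 * β) + 1 / (β * x ^ 2)))
    with hq'
  have hexp : ∀ x : ℝ, HasDerivAt (fun x : ℝ => Real.exp (-α * x ^ 2 / 4))
      (Real.exp (-α * x ^ 2 / 4) * (-α * x / 2)) x := by
    intro x
    refine HasDerivAt.congr_deriv ((((hasDerivAt_id' x).pow 2).const_mul (-α)).div_const 4).exp ?_
    simp only [Pi.pow_apply]
    push_cast; ring
  have hqd : ∀ x ≥ S, HasDerivAt q (q' x) x := by
    intro x hx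
    have hx0 : x ≠ 0 := (hS.trans_le hx).ne'
    refine HasDerivAt.congr_deriv (((hexp x).const_mul (2 * c₀)).div
      ((hasDerivAt_id' x).const_mul β) (by positivity)) ?_
    simp only [hq']
    field_simp
    ring
  have hq'0 : ∀ x, q' x ≤ 0 := fun x => neg_nonpos.2 (by positivity)
  have hq0 : ∀ x ≥ S, 0 ≤ q x := fun x hx => by
    have : 0 < x := hS.trans_le hx
    simp only [hq]; positivity
  have e := abs_sub_le_of_deriv (a := S) (f := fun x => m x + q x * b x) (f' := fun x => q' x * b x)
    (g := fun x => -q x) (g' := fun x => -q' x) (fun x hx => ?_) (fun x hx => (hqd x hx).neg)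
    (fun x hx => ?_) hs
  · have hqs : q s ≤ q S := by
      have := (abs_nonneg _).trans e
      linarith
    have hqS : q S ≤ 4 * c₀ / S := by
      have h1 : Real.exp (-α * S ^ 2 / 4) ≤ 1 := Real.exp_le_one_iff.2 (by
        have : 0 ≤ α * S ^ 2 := by positivity
        linarith)
      simp only [hq]
      rw [div_le_div_iff₀ (by positivity) hS]
      have h2 : 2 * c₀ * S * Real.exp (-α * S ^ 2 / 4) ≤ 2 * c₀ * S * 1 :=
        mul_le_mul_of_nonneg_left h1 (by positivity)
      have h3 : 4 * c₀ * S * (1 / 2) ≤ 4 * c₀ * S * β :=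
        mul_le_mul_of_nonneg_left hβ (by positivity)
      linarith
    have hb : ∀ x ≥ S, |q x * b x| ≤ q x := fun x hx => by
      rw [abs_mul, abs_of_nonneg (hq0 x hx)]
      exact mul_le_of_le_one_right (hq0 x hx) (hle x).2.2
    have h1 := abs_le.1 (hb s hs)
    have h2 := abs_le.1 (hb S le_rfl)
    have h3 := abs_le.1 e
    have h4 := hq0 s hs
    have : 12 * c₀ / S = 3 * (4 * c₀ / S) := by ring
    rw [this, abs_le]
    constructor <;> linarith [h1.1, h1.2, h2.1, h2.2, h3.1, h3.2]
  · have hx0 : x ≠ 0 := (hS.trans_le hx).ne'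
    refine HasDerivAt.congr_deriv ((h.dm x).add ((hqd x hx).mul (h.db x))) ?_
    simp only [hq]
    field_simp
    ring
  · rw [abs_mul, abs_of_nonpos (hq'0 x)]
    exact mul_le_of_le_one_right (neg_nonneg.2 (hq'0 x)) (hle x).2.2

/-- Continuity in `α` at `0` on bounded intervals. The pairing of two rows with equal initial data
is `1` at `s = 0` and changes only through the differences of curvature and torsion. -/
lemma small_damping {c₀ α β : ℝ} (hc : 0 < c₀) (hα : 0 ≤ α) (hβ1 : β ≤ 1) (hβ : 1 - β ≤ α)
    {m n b m' n' b' : ℝ → ℝ}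
    (h : IsRow (fun s => c₀ * Real.exp (-α * s ^ 2 / 4)) (fun s => β * s / 2) m n b)
    (h' : IsRow (fun _ => c₀) (fun s => s / 2) m' n' b')
    (h0 : m 0 = 1 ∧ n 0 = 0 ∧ b 0 = 0) (h0' : m' 0 = 1 ∧ n' 0 = 0 ∧ b' 0 = 0)
    {s : ℝ} (hs : 0 ≤ s) :
    (m s - m' s) ^ 2 ≤ 4 * α * (c₀ * s ^ 3 / 12 + s ^ 2 / 4) := by
  have hu : m 0 ^ 2 + n 0 ^ 2 + b 0 ^ 2 = 1 := by simp [h0]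
  have hu' : m' 0 ^ 2 + n' 0 ^ 2 + b' 0 ^ 2 = 1 := by simp [h0']
  have hle := h.abs_le hu
  have hle' := h'.abs_le hu'
  have hF : ∀ x, HasDerivAt (fun s => m s * m' s + n s * n' s + b s * b' s)
      ((c₀ * Real.exp (-α * x ^ 2 / 4) - c₀) * (n x * m' x - m x * n' x)
        + (β * x / 2 - x / 2) * (b x * n' x - n x * b' x)) x := by
    intro x
    refine HasDerivAt.congr_deriv ((((h.dm x).mul (h'.dm x)).add ((h.dn x).mul (h'.dn x))).add
      ((h.db x).mul (h'.db x))) ?_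
    ring
  have hG : ∀ x : ℝ, HasDerivAt (fun s : ℝ => 2 * α * (c₀ * s ^ 3 / 12 + s ^ 2 / 4))
      (2 * α * (c₀ * x ^ 2 / 4 + x / 2)) x := by
    intro x
    refine HasDerivAt.congr_deriv ((((((hasDerivAt_id' x).pow 3).const_mul c₀).div_const 12).add
      (((hasDerivAt_id' x).pow 2).div_const 4)).const_mul (2 * α)) ?_
    push_cast; ring
  have hd : ∀ p q u v : ℝ, |p| ≤ 1 → |q| ≤ 1 → |u| ≤ 1 → |v| ≤ 1 → |p * q - u * v| ≤ 2 := by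
    intro p q u v hp hq hu hv
    have h1 : |p * q| ≤ 1 := by rw [abs_mul]; exact mul_le_one₀ hp (abs_nonneg _) hq
    have h2 : |u * v| ≤ 1 := by rw [abs_mul]; exact mul_le_one₀ hu (abs_nonneg _) hv
    linarith [abs_sub (p * q) (u * v)]
  have e := abs_sub_le_of_deriv (a := 0) (fun x _ => hF x) (fun x _ => hG x) (fun x hx => ?_) hs
  · simp only [h0, h0'] at e
    norm_num at e
    have e1 := (abs_le.1 e).1
    nlinarith [h.norm_sq hu s, h'.norm_sq hu' s, sq_nonneg (n s - n' s), sq_nonneg (b s - b' s)]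
  · have h1 : |c₀ * Real.exp (-α * x ^ 2 / 4) - c₀| ≤ c₀ * (α * x ^ 2 / 4) := by
      have e1 : Real.exp (-α * x ^ 2 / 4) ≤ 1 := Real.exp_le_one_iff.2 (by
        have : 0 ≤ α * x ^ 2 := by positivity
        linarith)
      have e2 := Real.add_one_le_exp (-α * x ^ 2 / 4)
      rw [abs_of_nonpos (by nlinarith)]
      nlinarith
    have h2 : |β * x / 2 - x / 2| ≤ α * x / 2 := by
      rw [abs_of_nonpos (by nlinarith)]
      nlinarith
    have d1 := hd _ _ _ _ (hle x).2.1 (hle' x).1 (hle x).1 (hle' x).2.1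
    have d2 := hd _ _ _ _ (hle x).2.2 (hle' x).2.1 (hle x).2.1 (hle' x).2.2
    refine (abs_add_le _ _).trans ?_
    rw [abs_mul, abs_mul]
    have f1 := mul_le_mul h1 d1 (abs_nonneg _) (by positivity)
    have f2 := mul_le_mul h2 d2 (abs_nonneg _) (by positivity)
    linarith

/-! ### The undamped profile -/

/-- A nonnegative quantity tending to `0` whose decay rate is at most `C s⁻³ √K` is `O(s⁻⁴)`. -/
lemma sqrt_decay {K K' : ℝ → ℝ} {C : ℝ} (hK : ∀ s ≥ 1, HasDerivAt K (K' s) s)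
    (h0 : ∀ s ≥ 1, 0 ≤ K s) (hK' : ∀ s ≥ 1, -(C / s ^ 3 * √(K s)) ≤ K' s) (hC : 0 ≤ C)
    (hlim : Tendsto K atTop (𝓝 0)) {s : ℝ} (hs : 1 ≤ s) : √(K s) ≤ C / (4 * s ^ 2) := by
  have key : ∀ ε > 0, √(K s + ε) - C / (4 * s ^ 2) ≤ √ε := by
    intro ε hε
    have hmono : MonotoneOn (fun s => √(K s + ε) - C / (4 * s ^ 2)) (Set.Ici 1) := by
      have hd : ∀ x ≥ 1, HasDerivAt (fun s => √(K s + ε) - C / (4 * s ^ 2))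
          (K' x / (2 * √(K x + ε)) + C / (2 * x ^ 3)) x := by
        intro x hx
        have hx0 : x ≠ 0 := by positivity
        have hp : K x + ε ≠ 0 := by linarith [h0 x hx]
        refine HasDerivAt.congr_deriv ((((hK x hx).add_const ε).sqrt hp).sub
          ((hasDerivAt_const x C).div (((hasDerivAt_id' x).pow 2).const_mul 4)
            (by positivity))) ?_
        push_cast
        field_simp
        ring
      refine monotoneOn_of_hasDerivWithinAt_nonneg
        (f' := fun x => K' x / (2 * √(K x + ε)) + C / (2 * x ^ 3)) (convex_Ici 1)
        (fun x hx => (hd x hx).continuousAt.continuousWithinAt)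
        (fun x hx => ?_) (fun x hx => ?_)
      · exact (hd x (interior_subset hx)).hasDerivWithinAt
      · have hx1 : 1 ≤ x := interior_subset hx
        have hx0 : 0 < x := by linarith
        have hp : 0 < √(K x + ε) := Real.sqrt_pos.2 (by linarith [h0 x hx1])
        have h1 : √(K x) ≤ √(K x + ε) := Real.sqrt_le_sqrt (by linarith)
        have h2 := hK' x hx1
        have h3 := mul_le_mul_of_nonneg_left h1 (by positivity : 0 ≤ C / x ^ 3)
        have h4 : -(C / (2 * x ^ 3)) ≤ K' x / (2 * √(K x + ε)) := by
          rw [le_div_iff₀ (by positivity)]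
          have : -(C / (2 * x ^ 3)) * (2 * √(K x + ε)) = -(C / x ^ 3 * √(K x + ε)) := by
            field_simp
          linarith
        linarith
    have hl : Tendsto (fun s => √(K s + ε)) atTop (𝓝 (√ε)) := by
      simpa using (hlim.add_const ε).sqrt
    refine ge_of_tendsto hl ?_
    filter_upwards [eventually_ge_atTop s] with t ht
    have h1 := hmono hs (hs.trans ht : (1 : ℝ) ≤ t) ht
    simp only at h1
    have : 0 ≤ C / (4 * t ^ 2) := by positivity
    linarith
  have hl1 : Tendsto (fun ε => √(K s + ε) - C / (4 * s ^ 2)) (𝓝[>] 0)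
      (𝓝 (√(K s + 0) - C / (4 * s ^ 2))) :=
    ((by fun_prop : Continuous fun ε => √(K s + ε) - C / (4 * s ^ 2)).tendsto 0).mono_left
      nhdsWithin_le_nhds
  have hl2 : Tendsto (fun ε => √ε) (𝓝[>] 0) (𝓝 (√0)) :=
    (Real.continuous_sqrt.tendsto 0).mono_left nhdsWithin_le_nhds
  have := le_of_tendsto_of_tendsto hl1 hl2 (by
    filter_upwards [self_mem_nhdsWithin] with ε hε using key ε hε)
  simp only [add_zero, Real.sqrt_zero] at this
  linarith

/-- If `n` and `b` vanish at infinity, then subtracting the leading non-oscillating terms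
`4cm/s³` and `2cm/s` leaves an `O(s⁻²)` remainder. The weighted energy
`(1 + 4c²/s²) ñ² + b̃²` is chosen so that the terms of its derivative of order `s⁻¹` cancel. -/
lemma decay {c : ℝ} (hc : 0 < c) {m n b : ℝ → ℝ}
    (h : IsRow (fun _ => c) (fun s => s / 2) m n b)
    (h0 : m 0 ^ 2 + n 0 ^ 2 + b 0 ^ 2 = 1)
    (hn : Tendsto n atTop (𝓝 0)) (hb : Tendsto b atTop (𝓝 0)) :
    ∃ D : ℝ, 0 ≤ D ∧ ∀ s ≥ 1, |n s| ≤ D / s ^ 2 ∧ |b s - 2 * c * m s / s| ≤ D / s ^ 2 := by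
  have hle := h.abs_le h0
  set p : ℝ → ℝ := fun s => n s - 4 * c * m s / s ^ 3 with hp
  set q : ℝ → ℝ := fun s => b s - 2 * c * m s / s with hq
  set K : ℝ → ℝ := fun s => (1 + 4 * c ^ 2 / s ^ 2) * p s ^ 2 + q s ^ 2 with hKdef
  set C : ℝ := 8 * c ^ 2 * (1 + 4 * c) + 2 * (1 + 4 * c ^ 2) * (12 * c + 4 * c ^ 2) + 16 * c ^ 3
  have hC : 0 ≤ C := by positivity
  have hpd : ∀ s ≥ 1, HasDerivAt p (s / 2 * q s + 12 * c * m s / s ^ 4 - 4 * c ^ 2 * n s / s ^ 3) s := by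
    intro s hs
    have hs0 : s ≠ 0 := by positivity
    refine HasDerivAt.congr_deriv ((h.dn s).sub (((h.dm s).const_mul (4 * c)).div
      ((hasDerivAt_id' s).pow 3) (by positivity))) ?_
    simp only [hq]
    push_cast
    field_simp
    ring
  have hqd : ∀ s ≥ 1, HasDerivAt q
      (-(s / 2) * p s * (1 + 4 * c ^ 2 / s ^ 2) - 8 * c ^ 3 * m s / s ^ 4) s := by
    intro s hs
    have hs0 : s ≠ 0 := by positivity
    refine HasDerivAt.congr_deriv ((h.db s).sub (((h.dm s).const_mul (2 * c)).div
      (hasDerivAt_id' s) hs0)) ?_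
    simp only [hp]
    field_simp
    ring
  have hKd : ∀ s ≥ 1, HasDerivAt K (-(8 * c ^ 2 / s ^ 3) * p s ^ 2
      + 2 * (1 + 4 * c ^ 2 / s ^ 2) * p s * (12 * c * m s / s ^ 4 - 4 * c ^ 2 * n s / s ^ 3)
      - 16 * c ^ 3 * m s * q s / s ^ 4) s := by
    intro s hs
    have hs0 : s ≠ 0 := by positivity
    refine HasDerivAt.congr_deriv (((((hasDerivAt_const s (4 * c ^ 2)).div
      ((hasDerivAt_id' s).pow 2) (pow_ne_zero 2 hs0)).const_add 1).mul ((hpd s hs).pow 2)).add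
      ((hqd s hs).pow 2)) ?_
    simp only [Pi.pow_apply, Pi.div_apply]
    push_cast
    field_simp
    ring
  have hK0 : ∀ s, 0 ≤ K s := fun s => by simp only [hKdef]; positivity
  have hpK : ∀ s, |p s| ≤ √(K s) := fun s => Real.abs_le_sqrt (by
    have : 0 ≤ 4 * c ^ 2 / s ^ 2 * p s ^ 2 := by positivity
    simp only [hKdef]
    nlinarith [sq_nonneg (q s)])
  have hqK : ∀ s, |q s| ≤ √(K s) := fun s => Real.abs_le_sqrt (by
    have : 0 ≤ (1 + 4 * c ^ 2 / s ^ 2) * p s ^ 2 := by positivity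
    simp only [hKdef]
    linarith)
  have hinv : ∀ k : ℕ, k ≠ 0 → Tendsto (fun s : ℝ => (s ^ k)⁻¹) atTop (𝓝 0) := fun k hk =>
    (tendsto_pow_atTop hk).inv_tendsto_atTop
  have hbdd : IsBoundedUnder (· ≤ ·) atTop fun s => |m s| :=
    isBoundedUnder_of ⟨1, fun s => (hle s).1⟩
  have hmlim : ∀ k : ℕ, k ≠ 0 → ∀ a : ℝ, Tendsto (fun s : ℝ => a * m s / s ^ k) atTop (𝓝 0) := by
    intro k hk a
    have h1 : Tendsto (fun s : ℝ => (s ^ k)⁻¹ * m s) atTop (𝓝 0) :=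
      (hinv k hk).zero_mul_isBoundedUnder_le hbdd
    have h2 := h1.const_mul a
    rw [mul_zero] at h2
    exact h2.congr fun s => by ring
  have hKlim : Tendsto K atTop (𝓝 0) := by
    have h1 : Tendsto p atTop (𝓝 0) := by simpa using hn.sub (hmlim 3 (by norm_num) (4 * c))
    have h2 : Tendsto q atTop (𝓝 0) := by
      simpa using hb.sub (hmlim 1 (by norm_num) (2 * c))
    have h3 : Tendsto (fun s : ℝ => 1 + 4 * c ^ 2 / s ^ 2) atTop (𝓝 1) := by
      simpa [div_eq_mul_inv] using ((hinv 2 (by norm_num)).const_mul (4 * c ^ 2)).const_add 1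
    simpa using (h3.mul (h1.pow 2)).add (h2.pow 2)
  have hroot : ∀ s ≥ 1, √(K s) ≤ C / (4 * s ^ 2) := by
    intro s hs
    refine sqrt_decay hKd (fun s _ => hK0 s) (fun s hs => ?_) hC hKlim hs
    have hs0 : 0 < s := by linarith
    have hr := Real.sqrt_nonneg (K s)
    have hm := (hle s).1
    have hn1 := (hle s).2.1
    have hs34 : 1 / s ^ 4 ≤ 1 / s ^ 3 :=
      one_div_le_one_div_of_le (by positivity) (pow_le_pow_right₀ hs (by norm_num))
    have hs3 : 1 / s ^ 3 ≤ 1 := by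
      rw [div_le_one (by positivity)]; exact one_le_pow₀ hs
    have hs2 : 1 / s ^ 2 ≤ 1 := by
      rw [div_le_one (by positivity)]; exact one_le_pow₀ hs
    have hp1 : |p s| ≤ 1 + 4 * c := by
      refine (abs_sub _ _).trans (add_le_add hn1 ?_)
      rw [abs_div, abs_mul, abs_of_pos (by positivity : 0 < 4 * c),
        abs_of_pos (by positivity : 0 < s ^ 3), div_le_iff₀ (by positivity)]
      have : 1 ≤ s ^ 3 := one_le_pow₀ hs
      nlinarith
    have t1 : (8 * c ^ 2 / s ^ 3) * p s ^ 2 ≤ 8 * c ^ 2 * (1 + 4 * c) / s ^ 3 * √(K s) := by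
      have : p s ^ 2 ≤ (1 + 4 * c) * √(K s) := by
        rw [← sq_abs, sq]
        exact mul_le_mul hp1 (hpK s) (abs_nonneg _) (by positivity)
      have := mul_le_mul_of_nonneg_left this (by positivity : 0 ≤ 8 * c ^ 2 / s ^ 3)
      refine this.trans (le_of_eq ?_)
      ring
    have t2 : |12 * c * m s / s ^ 4 - 4 * c ^ 2 * n s / s ^ 3| ≤ (12 * c + 4 * c ^ 2) / s ^ 3 := by
      refine (abs_sub _ _).trans ?_
      rw [add_div]
      refine add_le_add ?_ ?_
      · rw [abs_div, abs_mul, abs_of_pos (by positivity : 0 < 12 * c),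
          abs_of_pos (by positivity : 0 < s ^ 4)]
        calc 12 * c * |m s| / s ^ 4 ≤ 12 * c * 1 / s ^ 4 := by gcongr
          _ = 12 * c * (1 / s ^ 4) := by ring
          _ ≤ 12 * c * (1 / s ^ 3) := by gcongr
          _ = 12 * c / s ^ 3 := by ring
      · rw [abs_div, abs_mul, abs_of_pos (by positivity : 0 < 4 * c ^ 2),
          abs_of_pos (by positivity : 0 < s ^ 3)]
        calc 4 * c ^ 2 * |n s| / s ^ 3 ≤ 4 * c ^ 2 * 1 / s ^ 3 := by gcongr
          _ = 4 * c ^ 2 / s ^ 3 := by ring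
    have t3 : |2 * (1 + 4 * c ^ 2 / s ^ 2) * p s
        * (12 * c * m s / s ^ 4 - 4 * c ^ 2 * n s / s ^ 3)|
        ≤ 2 * (1 + 4 * c ^ 2) * √(K s) * ((12 * c + 4 * c ^ 2) / s ^ 3) := by
      rw [abs_mul, abs_mul, abs_of_pos (by positivity : 0 < 2 * (1 + 4 * c ^ 2 / s ^ 2))]
      have : 4 * c ^ 2 / s ^ 2 ≤ 4 * c ^ 2 := by
        rw [div_le_iff₀ (by positivity)]
        exact le_mul_of_one_le_right (by positivity) (one_le_pow₀ hs)
      have := hpK s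
      gcongr
    have t4 : |16 * c ^ 3 * m s * q s / s ^ 4| ≤ 16 * c ^ 3 / s ^ 3 * √(K s) := by
      rw [abs_div, abs_mul, abs_mul, abs_of_pos (by positivity : 0 < 16 * c ^ 3),
        abs_of_pos (by positivity : 0 < s ^ 4)]
      calc 16 * c ^ 3 * |m s| * |q s| / s ^ 4 ≤ 16 * c ^ 3 * 1 * √(K s) / s ^ 4 := by
            have := hqK s
            gcongr
        _ = 16 * c ^ 3 * √(K s) * (1 / s ^ 4) := by ring
        _ ≤ 16 * c ^ 3 * √(K s) * (1 / s ^ 3) := by gcongr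
        _ = _ := by ring
    have e : C / s ^ 3 * √(K s) = 8 * c ^ 2 * (1 + 4 * c) / s ^ 3 * √(K s)
        + 2 * (1 + 4 * c ^ 2) * √(K s) * ((12 * c + 4 * c ^ 2) / s ^ 3)
        + 16 * c ^ 3 / s ^ 3 * √(K s) := by
      simp only [C]
      ring
    rw [e]
    have := (abs_le.1 t3).1
    have := (abs_le.1 t4).2
    linarith
  refine ⟨C / 4 + 4 * c, by positivity, fun s hs => ?_⟩
  have hs0 : 0 < s := by linarith
  have hr : √(K s) ≤ C / 4 / s ^ 2 := (hroot s hs).trans (le_of_eq (by rw [div_div]))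
  have hmono : C / 4 / s ^ 2 ≤ (C / 4 + 4 * c) / s ^ 2 := by gcongr; linarith
  refine ⟨?_, (hqK s).trans (hr.trans hmono)⟩
  have e : n s = p s + 4 * c * m s / s ^ 3 := by simp only [hp]; ring
  have h1 : |4 * c * m s / s ^ 3| ≤ 4 * c / s ^ 2 := by
    have hm := (hle s).1
    have hs32 : 1 / s ^ 3 ≤ 1 / s ^ 2 :=
      one_div_le_one_div_of_le (by positivity) (pow_le_pow_right₀ hs (by norm_num))
    rw [abs_div, abs_mul, abs_of_pos (by positivity : 0 < 4 * c),
      abs_of_pos (by positivity : 0 < s ^ 3)]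
    calc 4 * c * |m s| / s ^ 3 ≤ 4 * c * 1 / s ^ 3 := by gcongr
      _ = 4 * c * (1 / s ^ 3) := by ring
      _ ≤ 4 * c * (1 / s ^ 2) := by gcongr
      _ = 4 * c / s ^ 2 := by ring
  rw [e, add_div]
  exact (abs_add_le _ _).trans (add_le_add ((hpK s).trans hr) h1)

/-- For `α = 0` the velocity `v = cn` solves `v''' + (c² + s²/4) v' + (3/4) s v = 0`. Multiplying
by `s v - (3/2)(m - μ)`, with `μ` the limit of `m`, gives a quantity `Q` with `Q(0) = 0` and
`Q' = -(c²v² + (3/4)s²v² + (3/16)(m - μ)²) ≤ 0`. If `μ = ±1` then `n` and `b` vanish at infinity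
fast enough for `Q` to tend to `0`, whence `v = 0` on `[0, ∞)`, contradicting `v'(0) = -c²`. -/
lemma undamped_limit {c : ℝ} (hc : 0 < c) {m n b : ℝ → ℝ}
    (h : IsRow (fun _ => c) (fun s => s / 2) m n b)
    (hm0 : m 0 = 1) (hn0 : n 0 = 0) (hb0 : b 0 = 0) {μ : ℝ}
    (hlim : Tendsto m atTop (𝓝 μ)) : μ ^ 2 < 1 := by
  have h0 : m 0 ^ 2 + n 0 ^ 2 + b 0 ^ 2 = 1 := by simp [hm0, hn0, hb0]
  have hns := h.norm_sq h0
  have hle := h.abs_le h0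
  have hμ1 : μ ^ 2 ≤ 1 := le_of_tendsto (hlim.pow 2) (Eventually.of_forall fun s => by
    nlinarith [hns s, sq_nonneg (n s), sq_nonneg (b s)])
  refine lt_of_le_of_ne hμ1 fun hμ => ?_
  have hm2 : Tendsto (fun s => 1 - m s ^ 2) atTop (𝓝 0) := by
    simpa [hμ] using (hlim.pow 2).const_sub 1
  have hroot : Tendsto (fun s => √(1 - m s ^ 2)) atTop (𝓝 0) := by simpa using hm2.sqrt
  have hn : Tendsto n atTop (𝓝 0) := squeeze_zero_norm (fun s => by
    rw [Real.norm_eq_abs]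
    exact Real.abs_le_sqrt (by nlinarith [hns s, sq_nonneg (b s)])) hroot
  have hb : Tendsto b atTop (𝓝 0) := squeeze_zero_norm (fun s => by
    rw [Real.norm_eq_abs]
    exact Real.abs_le_sqrt (by nlinarith [hns s, sq_nonneg (n s)])) hroot
  obtain ⟨D, hD, hdec⟩ := decay hc h h0 hn hb
  set w : ℝ → ℝ := fun s => m s - μ with hw
  set x : ℝ → ℝ := fun s => s * n s with hx
  set y : ℝ → ℝ := fun s => c * (-c * m s + s / 2 * b s) with hy
  have hwd : ∀ s ≥ 1, |w s| ≤ c * D / s := by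
    intro s hs
    have hs0 : 0 < s := by linarith
    have key : ∀ t ≥ s, |m t - m s| ≤ c * D / s := by
      intro t ht
      have e := abs_sub_le_of_deriv (a := s) (fun r _ => h.dm r) (g := fun r => -(c * D / r))
        (g' := fun r => c * D / r ^ 2) (fun r hr => ?_) (fun r hr => ?_) ht
      · have : 0 ≤ c * D / t := by have : 0 < t := by linarith
                                   positivity
        linarith
      · have hr0 : r ≠ 0 := by linarith
        refine HasDerivAt.congr_deriv ((hasDerivAt_const r (c * D)).div (hasDerivAt_id' r) hr0).neg ?_
        field_simp
        ring
      · rw [abs_mul, abs_of_pos hc, mul_div_assoc]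
        exact mul_le_mul_of_nonneg_left (hdec r (hs.trans hr)).1 hc.le
    have : Tendsto (fun t => |m t - m s|) atTop (𝓝 |μ - m s|) := (hlim.sub_const _).abs
    have := le_of_tendsto this (by filter_upwards [eventually_ge_atTop s] with t ht using key t ht)
    rwa [abs_sub_comm] at this
  have hxd : ∀ s ≥ 1, |x s| ≤ D / s := by
    intro s hs
    have hs0 : 0 < s := by linarith
    simp only [hx]
    rw [abs_mul, abs_of_pos hs0]
    calc s * |n s| ≤ s * (D / s ^ 2) := mul_le_mul_of_nonneg_left (hdec s hs).1 hs0.le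
      _ = D / s := by field_simp
  have hyd : ∀ s ≥ 1, |y s| ≤ c * D / 2 / s := by
    intro s hs
    have hs0 : 0 < s := by linarith
    have e : y s = c * s / 2 * (b s - 2 * c * m s / s) := by simp only [hy]; field_simp; ring
    rw [e, abs_mul, abs_of_pos (by positivity : 0 < c * s / 2)]
    calc c * s / 2 * |b s - 2 * c * m s / s| ≤ c * s / 2 * (D / s ^ 2) :=
          mul_le_mul_of_nonneg_left (hdec s hs).2 (by positivity)
      _ = c * D / 2 / s := by field_simp
  have hz : ∀ (E : ℝ) (f : ℝ → ℝ), (∀ s ≥ 1, |f s| ≤ E / s) →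
      Tendsto f atTop (𝓝 0) ∧ Tendsto (fun s => s * f s ^ 2) atTop (𝓝 0) := by
    intro E f hf
    have hE : ∀ E : ℝ, Tendsto (fun s : ℝ => E / s) atTop (𝓝 0) := fun E =>
      tendsto_const_nhds.div_atTop tendsto_id
    refine ⟨squeeze_zero_norm' ?_ (hE E), squeeze_zero_norm' ?_ (hE (E ^ 2))⟩
    · filter_upwards [eventually_ge_atTop 1] with s hs using hf s hs
    · filter_upwards [eventually_ge_atTop 1] with s hs
      have hs0 : 0 < s := by linarith
      rw [Real.norm_eq_abs, abs_mul, abs_of_pos hs0, abs_pow]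
      calc s * |f s| ^ 2 ≤ s * (E / s) ^ 2 := by have := hf s hs; gcongr
        _ = E ^ 2 / s := by field_simp
  obtain ⟨hw1, hw2⟩ := hz _ w hwd
  obtain ⟨hx1, hx2⟩ := hz _ x hxd
  obtain ⟨hy1, hy2⟩ := hz _ y hyd
  set Q : ℝ → ℝ := fun s => c ^ 2 / 2 * (x s * b s) - c ^ 4 / 2 * (x s * n s)
    - c ^ 2 / 8 * (s * x s ^ 2) + c / 2 * (n s * y s) - 1 / 2 * (s * y s ^ 2)
    - 3 / 4 * c * (b s * w s) - 3 / 16 * (s * w s ^ 2) with hQ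
  have hQlim : Tendsto Q atTop (𝓝 0) := by
    have := (((((((hx1.mul hb).const_mul (c ^ 2 / 2)).sub ((hx1.mul hn).const_mul (c ^ 4 / 2))).sub
      (hx2.const_mul (c ^ 2 / 8))).add ((hn.mul hy1).const_mul (c / 2))).sub
      (hy2.const_mul (1 / 2))).sub ((hb.mul hw1).const_mul (3 / 4 * c))).sub
      (hw2.const_mul (3 / 16))
    simp only [mul_zero, sub_zero, add_zero] at this
    exact this
  have hQd : ∀ s, HasDerivAt Q (-(c ^ 2 * (c * n s) ^ 2 + 3 / 4 * s ^ 2 * (c * n s) ^ 2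
      + 3 / 16 * w s ^ 2)) s := by
    intro s
    have dw : HasDerivAt w (c * n s) s := (h.dm s).sub_const μ
    have dx : HasDerivAt x _ s := (hasDerivAt_id' s).mul (h.dn s)
    have dy : HasDerivAt y _ s :=
      (((h.dm s).const_mul (-c)).add (((hasDerivAt_id' s).div_const 2).mul (h.db s))).const_mul c
    refine HasDerivAt.congr_deriv
      ((((((((dx.mul (h.db s)).const_mul (c ^ 2 / 2)).sub ((dx.mul (h.dn s)).const_mul (c ^ 4 / 2))).sub
      (((hasDerivAt_id' s).mul (dx.pow 2)).const_mul (c ^ 2 / 8))).add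
      (((h.dn s).mul dy).const_mul (c / 2))).sub
      (((hasDerivAt_id' s).mul (dy.pow 2)).const_mul (1 / 2))).sub
      (((h.db s).mul dw).const_mul (3 / 4 * c))).sub
      (((hasDerivAt_id' s).mul (dw.pow 2)).const_mul (3 / 16))) ?_
    simp only [Pi.pow_apply, hx, hy, hw]
    push_cast
    ring
  have hanti : Antitone Q := antitone_of_deriv_nonpos (fun s => (hQd s).differentiableAt)
    fun s => by rw [(hQd s).deriv]; exact neg_nonpos.2 (by positivity)
  have hQ0 : Q 0 = 0 := by simp [hQ, hx, hn0, hb0]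
  have hQz : ∀ s ≥ 0, Q s = 0 := fun s hs =>
    le_antisymm (hQ0 ▸ hanti hs) (hanti.le_of_tendsto hQlim s)
  have hnz : ∀ s ∈ Set.Ici (0 : ℝ), n s = 0 := by
    intro s hs
    have h1 : HasDerivWithinAt Q 0 (Set.Ici s) s :=
      (hasDerivWithinAt_const s (Set.Ici s) (0 : ℝ)).congr (fun t ht => hQz t (le_trans hs ht))
        (hQz s hs)
    have h2 := (uniqueDiffWithinAt_Ici s).eq_deriv _ h1 (hQd s).hasDerivWithinAt
    have h3 : 0 ≤ 3 / 4 * s ^ 2 * (c * n s) ^ 2 := by positivity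
    have h4 : c ^ 2 * (c * n s) ^ 2 = 0 := by
      have : 0 ≤ c ^ 2 * (c * n s) ^ 2 := by positivity
      nlinarith [sq_nonneg (w s)]
    simpa [hc.ne'] using h4
  have h1 : HasDerivWithinAt n 0 (Set.Ici 0) 0 :=
    (hasDerivWithinAt_const 0 (Set.Ici 0) (0 : ℝ)).congr hnz hn0
  have h2 := (uniqueDiffWithinAt_Ici 0).eq_deriv _ h1 (h.dn 0).hasDerivWithinAt
  simp [hm0, hc.ne'] at h2

/-! ### The limits differ -/

/-- The limits `A⁺` and `A⁻` agree only if `A⁺` lies on the first axis. -/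
lemma coords_of_eq {A : Fin 3 → ℝ} (h : A = ![A 0, -A 1, -A 2]) : A 1 = 0 ∧ A 2 = 0 := by
  have h1 := congrFun h 1
  have h2 := congrFun h 2
  simp only [Matrix.cons_val] at h1 h2
  constructor <;> linarith

lemma ProfileSystem.isRow {c₀ α : ℝ} {m n b : ℝ → Fin 3 → ℝ} (h : ProfileSystem c₀ α m n b)
    (j : Fin 3) : IsRow (fun s => c₀ * Real.exp (-α * s ^ 2 / 4))
      (fun s => √(1 - α ^ 2) * s / 2) (fun s => m s j) (fun s => n s j) (fun s => b s j) :=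
  h.1.isRow j

lemma ProfileSystem.init_zero {c₀ α : ℝ} {m n b : ℝ → Fin 3 → ℝ} (h : ProfileSystem c₀ α m n b) :
    m 0 0 = 1 ∧ n 0 0 = 0 ∧ b 0 0 = 0 := by
  simp [h.2.1, h.2.2.1, h.2.2.2]

lemma ProfileSystem.init_one {c₀ α : ℝ} {m n b : ℝ → Fin 3 → ℝ} (h : ProfileSystem c₀ α m n b) :
    m 0 1 = 0 ∧ n 0 1 = 1 ∧ b 0 1 = 0 := by
  simp [h.2.1, h.2.2.1, h.2.2.2]

lemma jump_small_damping {m n b : ℝ → ℝ → Fin 3 → ℝ} {A : ℝ → Fin 3 → ℝ} {c₀ : ℝ} (hc : 0 < c₀)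
    (h : ∀ α ∈ Set.Icc (0 : ℝ) 1,
      ProfileSystem c₀ α (m α) (n α) (b α) ∧ Tendsto (m α) atTop (𝓝 (A α))) :
    ∃ α₀ : ℝ, 0 < α₀ ∧ ∀ α ∈ Set.Ioo (0 : ℝ) α₀, A α ≠ ![A α 0, -A α 1, -A α 2] := by
  obtain ⟨hP, hL⟩ := h 0 (by norm_num)
  have hr := hP.isRow 0
  have hi := hP.init_zero
  have hL0 := tendsto_pi_nhds.1 hL 0
  have hr' : IsRow (fun _ => c₀) (fun s => s / 2) (fun s => m 0 s 0) (fun s => n 0 s 0)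
      (fun s => b 0 s 0) := by simpa using hr
  have hμ := undamped_limit hc hr' hi.1 hi.2.1 hi.2.2 hL0
  set μ := A 0 0
  have hμ1 : |μ| < 1 := (sq_lt_one_iff_abs_lt_one μ).1 hμ
  set δ := 1 - |μ| with hδ
  have hδ0 : 0 < δ := by linarith
  set S := 96 * c₀ / δ with hS
  have hS0 : 0 < S := by positivity
  set P := c₀ * S ^ 3 / 12 + S ^ 2 / 4 with hPdef
  have hP0 : 0 < P := by positivity
  have hSδ : 12 * c₀ / S = δ / 8 := by simp only [hS]; field_simp; norm_num
  have htail : ∀ (α : ℝ), 0 ≤ α → α ≤ 1 / 2 → |A α 0 - m α S 0| ≤ δ / 8 := by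
    intro α h0 h1
    obtain ⟨hQ, hM⟩ := h α ⟨h0, by linarith⟩
    have hlim : Tendsto (fun s => |m α s 0 - m α S 0|) atTop (𝓝 |A α 0 - m α S 0|) :=
      ((tendsto_pi_nhds.1 hM 0).sub_const _).abs
    refine le_of_tendsto hlim ?_
    filter_upwards [eventually_ge_atTop S] with s hs
    rw [← hSδ]
    refine tail_bound hc h0 (Real.le_sqrt_of_sq_le ?_) (hQ.isRow 0) ?_ hS0 hs
    · nlinarith
    · simp [hQ.init_zero]
  refine ⟨min (1 / 2) ((δ / 4) ^ 2 / (4 * P)), by positivity, fun α hα heq => ?_⟩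
  have hα0 := hα.1
  have hα1 : α < 1 / 2 := hα.2.trans_le (min_le_left _ _)
  have hα2 : α < (δ / 4) ^ 2 / (4 * P) := hα.2.trans_le (min_le_right _ _)
  obtain ⟨hQ, hM⟩ := h α ⟨hα0.le, by linarith⟩
  have e1 := htail 0 le_rfl (by norm_num)
  have e2 := htail α hα0.le hα1.le
  have e3 := small_damping hc hα0.le
    (Real.sqrt_le_one.2 (by nlinarith [sq_nonneg α]) : √(1 - α ^ 2) ≤ 1)
    (by
      have : 1 - α ≤ √(1 - α ^ 2) := Real.le_sqrt_of_sq_le (by nlinarith)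
      linarith) (hQ.isRow 0) hr' hQ.init_zero hi hS0.le
  have e4 : |m α S 0 - m 0 S 0| ≤ δ / 4 := by
    refine abs_le_of_sq_le_sq (e3.trans ?_) (by positivity)
    rw [lt_div_iff₀ (by positivity)] at hα2
    change 4 * α * P ≤ _
    linarith
  have hA0 : |A α 0| < 1 := by
    have e5 : |A α 0 - μ| ≤ δ / 2 := by
      rw [abs_le] at e1 e2 e4 ⊢
      change -(δ / 8) ≤ μ - m 0 S 0 ∧ μ - m 0 S 0 ≤ δ / 8 at e1
      constructor <;> linarith [e1.1, e1.2, e2.1, e2.2, e4.1, e4.2]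
    have := abs_sub_abs_le_abs_sub (A α 0) μ
    linarith
  have hN := limit_norm_sq hQ hM
  obtain ⟨z1, z2⟩ := coords_of_eq heq
  have := (sq_lt_one_iff_abs_lt_one (A α 0)).2 hA0
  rw [z1, z2] at hN
  linarith

/-- **Jump discontinuity.** With `A⁺(c₀,α)` the limit of the
profile and `A⁻(c₀,α) = (A₁⁺, −A₂⁺, −A₃⁺)`, the two limit vectors differ:
(i) for fixed `α ∈ (0,1)` and all small `c₀ > 0`; (ii) for fixed `c₀ > 0`
and all small `α > 0`; (iii) for fixed `c₀ > 0` with `c₀ ≠ k√π` and all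
`α` close to `1`. -/
theorem jump_discontinuity (m n b : ℝ → ℝ → ℝ → Fin 3 → ℝ)
    (A : ℝ → ℝ → Fin 3 → ℝ)
    (h : ∀ c₀ : ℝ, 0 < c₀ → ∀ α ∈ Set.Icc (0 : ℝ) 1,
      ProfileSystem c₀ α (m c₀ α) (n c₀ α) (b c₀ α) ∧
      Tendsto (m c₀ α) atTop (nhds (A c₀ α))) :
    (∀ α ∈ Set.Ioo (0 : ℝ) 1, ∃ c₀star : ℝ, 0 < c₀star ∧
      ∀ c₀ ∈ Set.Ioo (0 : ℝ) c₀star,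
        A c₀ α ≠ ![A c₀ α 0, -A c₀ α 1, -A c₀ α 2]) ∧
    (∀ c₀ : ℝ, 0 < c₀ → ∃ α₀star : ℝ, 0 < α₀star ∧
      ∀ α ∈ Set.Ioo (0 : ℝ) α₀star,
        A c₀ α ≠ ![A c₀ α 0, -A c₀ α 1, -A c₀ α 2]) ∧
    (∀ c₀ : ℝ, 0 < c₀ → (∀ k : ℕ, c₀ ≠ k * Real.sqrt Real.pi) →
      ∃ α₁star ∈ Set.Ioo (0 : ℝ) 1,
        ∀ α ∈ Set.Ioo α₁star 1,
          A c₀ α ≠ ![A c₀ α 0, -A c₀ α 1, -A c₀ α 2]) := by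
  refine ⟨fun α hα => ?_, fun c₀ hc => jump_small_damping hc (h c₀ hc), fun c₀ hc hk => ?_⟩
  · obtain ⟨I, hI, hlimI⟩ := exists_pos_tendsto_cos hα.1 (√(1 - α ^ 2))
    set C := √(π / α) with hCdef
    have hC : 0 < C := Real.sqrt_pos.2 (div_pos Real.pi_pos hα.1)
    refine ⟨I / (2 * C ^ 2), by positivity, fun c₀ hc heq => ?_⟩
    obtain ⟨hP, hL⟩ := h c₀ hc.1 α ⟨hα.1.le, hα.2.le⟩
    have hi := hP.init_one
    have hlim := ((tendsto_pi_nhds.1 hL 1).sub (hlimI.const_mul c₀)).abs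
    have hle := le_of_tendsto hlim (by
      filter_upwards [eventually_ge_atTop 0] with s hs
      exact small_curvature hc.1 hα.1 (hP.isRow 1) hi.1 hi.2.1 hi.2.2 hs)
    have hlt := hc.2
    rw [lt_div_iff₀ (by positivity)] at hlt
    have h2 := mul_lt_mul_of_pos_left hlt hc.1
    rw [(coords_of_eq heq).1, zero_sub, abs_neg, abs_of_pos (mul_pos hc.1 hI)] at hle
    change _ ≤ 2 * c₀ ^ 2 * C ^ 2 at hle
    linarith
  · have hsin : Real.sin (c₀ * √(π / 1)) ≠ 0 := by
      rw [div_one]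
      intro h0
      obtain ⟨k, hk'⟩ := Real.sin_eq_zero_iff.1 h0
      have hsq : √π * √π = π := Real.mul_self_sqrt Real.pi_pos.le
      have hsp : 0 < √π := Real.sqrt_pos.2 Real.pi_pos
      have hck : c₀ = k * √π := by
        apply mul_right_cancel₀ hsp.ne'
        rw [← hk', mul_assoc, hsq]
      have hkpos : (0 : ℝ) < k := by
        rw [hck] at hc
        exact pos_of_mul_pos_left hc hsp.le
      obtain ⟨j, rfl⟩ := Int.eq_ofNat_of_zero_le (Int.cast_pos.1 hkpos).le
      exact hk j (by simpa using hck)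
    have hcont : ContinuousAt
        (fun α : ℝ => |Real.sin (c₀ * √(π / α))| - 128 * c₀ * √(1 - α ^ 2)) 1 := by
      have : ContinuousAt (fun α : ℝ => π / α) 1 :=
        continuousAt_const.div continuousAt_id one_ne_zero
      fun_prop
    have hev : ∀ᶠ α : ℝ in 𝓝 1, 0 < |Real.sin (c₀ * √(π / α))| - 128 * c₀ * √(1 - α ^ 2) := by
      refine hcont.eventually (lt_mem_nhds ?_)
      simpa using hsin
    obtain ⟨ε, hε, hball⟩ := Metric.eventually_nhds_iff.1 hev
    refine ⟨max (1 / 2) (1 - ε), ⟨by positivity, max_lt (by norm_num) (by linarith)⟩,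
      fun α hα heq => ?_⟩
    have hα1 : 1 / 2 < α := (le_max_left _ _).trans_lt hα.1
    have hα2 : 1 - ε < α := (le_max_right _ _).trans_lt hα.1
    have hpos := hball (y := α) (by
      rw [Real.dist_eq, abs_lt]
      constructor <;> linarith [hα.2])
    obtain ⟨hP, hL⟩ := h c₀ hc α ⟨by linarith, hα.2.le⟩
    have hi := hP.init_one
    have hlim := ((tendsto_pi_nhds.1 hL 1).sub
      ((Real.continuous_sin.tendsto _).comp
        ((tendsto_gaussInt (by linarith : 0 < α)).const_mul c₀))).abs
    have hle := le_of_tendsto hlim (by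
      filter_upwards [eventually_ge_atTop 0] with s hs
      exact small_torsion hc hα1.le (Real.sqrt_nonneg _) (hP.isRow 1) hi.1 hi.2.1 hi.2.2 hs)
    rw [(coords_of_eq heq).1, zero_sub, abs_neg] at hle
    linarith
end
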